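/- The Hausdorff dimension of the Rauzy gasket equals its affinity exponent: dimH X = s_A. -/

import Mathlib

/-!
Write `P = ns A_w` and `R = ns A_w⁻¹` for the entrywise `ℓ¹` norms, so that the singular values of
`A_w` are comparable to `P`, `R / P`, `1 / R`. Up to constants `φ_s(A_w)` is then
`Phi s w = R ^ (2 - s) * P ^ (-1 - s)` for `1 < s ≤ 2` (`summable_phi_iff`).

**Upper bound.** A cylinder ending in two distinct letters is roughly a rectangle with sides `R / P ^ 2`
and `1 / (P R)`, and is covered by `≲ R ^ 2 / P` sets of diameter `≲ 1 / (P R)` (`exists_cover`).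
Outside a countable set every point of the gasket lies in infinitely many such cylinders, so
convergence of `∑ Phi s` gives `dimH ≤ s` (`dimH_gasket_le`); also `dimH ≤ 2`, the gasket being planar.

**The exponent exceeds `3/2`.** The matrices `A_{ij}⁻¹` span all matrices, which makes `Phi`
quasi-multiplicative up to inserting a bounded word (`Phi_connect`). Over words in two letters only,
`∑ Phi (3/2)` is at least a multiple of `∑ 1/p` (`exists_two_free_sum`), so it diverges; combined with
quasi-multiplicativity this makes the series diverge slightly above `3/2` (`exists_not_summable`).

**Lower bound.** If the series diverges at `s' > s > 3/2`, some dyadic class of words with norms `≈ P`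
and inverse norms `≈ R` has more than `P ^ (1 + s) * R ^ (s - 2)` elements, with a power of `P` to spare
(`exists_class`). From such a class one builds a finite family `W` of words of equal length
(`exists_prefixFree`, `exists_equal_length`) all of whose concatenations are controlled: the points they
code are `al ^ n`-separated at generation `n`, where `al ≈ 1 / (P R)` (`prefix_of_close`). It remains to
prove a Frostman estimate `Ball D` for the uniform distribution on these points, for every `D < s`
(`no_cover`, `le_dimH`).

If `R ^ 2 ≲ P`, cylinders are of bounded eccentricity and separation suffices
(`Ball_of_card`). Otherwise the inverses are close to rank one, and after pigeonholing and inserting a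
connecting word the blocks preserve and expand a cone (`exists_cone`), which yields a structure `Sys`.
A ball of radius `al ^ n` meets one cylinder `w` of generation `n`, in the image of a tube of width
`rho ^ n`, `rho ≈ P / R ^ 2`, around a line through a point `p w`. So tube estimates `Tub ε` imply ball
estimates (`Ball_of_Tub`). Conversely, the points `p w` satisfy a Frostman estimate of exponent
`s - 1` (`card_near`, by comparing volumes of the disjoint images of a cube under the transposed
matrices), and a planar incidence theorem (`incidence`) says that two families of points with
Frostman exponents `D` and `k` span few heavy tubes. This gives tube estimates from ball estimates
(`Tub_of_Ball`). Because `s > 3/2`, going around this loop improves `ε` by a definite amount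
(`Tub_step`), and starting from the trivial `ε = 1` all `ε > 0` are reached (`Tub_all`).

The incidence theorem is proved by averaging over conormals against a Gaussian weight: the number of
incidences, smoothed at scale `d`, is compared with the one at scale `1` through dyadic
steps, each of which is controlled by Cauchy–Schwarz and the energies of the two families (`inc_step`).
-/

open Matrix MeasureTheory

noncomputable section

abbrev M3 := Matrix (Fin 3) (Fin 3) ℝ
abbrev E3 := EuclideanSpace ℝ (Fin 3)

/-- The Rauzy generators. -/
def A : Fin 3 → M3
  | 0 => !![1,1,1; 0,1,0; 0,0,1]
  | 1 => !![1,0,0; 1,1,1; 0,0,1]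
  | 2 => !![1,0,0; 0,1,0; 1,1,1]

/-- Product of the matrices along a word. -/
def Aw (w : List (Fin 3)) : M3 := (w.map A).prod

/-- Euclidean norm of a vector in `ℝ³`. -/
def enorm3 (v : Fin 3 → ℝ) : ℝ := Real.sqrt (v 0 ^ 2 + v 1 ^ 2 + v 2 ^ 2)

/-- Largest singular value = `ℓ²` operator norm. -/
def sval1 (g : M3) : ℝ := ‖(Matrix.toEuclideanLin g).toContinuousLinearMap‖

/-- Smallest singular value (for invertible `g`): `σ₃(g) = σ₁(g⁻¹)⁻¹`. -/
def sval3 (g : M3) : ℝ := (sval1 g⁻¹)⁻¹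

/-- Middle singular value (for invertible `g`): `σ₂ = |det g|·σ₁(g⁻¹)/σ₁(g)`. -/
def sval2 (g : M3) : ℝ := |g.det| * sval1 g⁻¹ / sval1 g

def basis3 (i : Fin 3) : Fin 3 → ℝ := Pi.single i 1

def omega3 (v : Fin 3 → ℝ) : ℝ := v 0 + v 1 + v 2

def ofE : E3 → (Fin 3 → ℝ) := WithLp.equiv 2 (Fin 3 → ℝ)
def toE : (Fin 3 → ℝ) → E3 := (WithLp.equiv 2 (Fin 3 → ℝ)).symm

/-- The standard 2-simplex in `ℝ³` (with the Euclidean metric). -/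
def simplex : Set E3 := {x | (∀ i, 0 ≤ ofE x i) ∧ omega3 (ofE x) = 1}

/-- The projective action of the word `w` on the simplex. -/
def fmap (w : List (Fin 3)) (x : E3) : E3 :=
  toE ((omega3 ((Aw w) *ᵥ ofE x))⁻¹ • ((Aw w) *ᵥ ofE x))

/-- The Rauzy gasket. -/
def gasket : Set E3 :=
  ⋂ n : ℕ, ⋃ w ∈ {w : List (Fin 3) | w.length = n + 1}, fmap w '' simplex

/-- Falconer's singular value function. -/
def phi (s : ℝ) (g : M3) : ℝ :=
  if s ≤ 1 then (sval2 g / sval1 g) ^ s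
  else (sval2 g / sval1 g) * (sval3 g / sval1 g) ^ (s - 1)

/-- The affinity exponent of the Rauzy semigroup. -/
def sA : ℝ :=
  sSup {s : ℝ | s ∈ Set.Ioc (0:ℝ) 2 ∧
    ¬ Summable fun w : {w : List (Fin 3) // w ≠ []} => phi s (Aw w.1)}

/-- A word has its last `k` letters not all the same. -/
def LastNotAllSame (w : List (Fin 3)) (k : ℕ) : Prop :=
  k ≤ w.length ∧ ¬ ∃ c, ∀ x ∈ w.drop (w.length - k), x = c

/-- A word's last two letters are different. -/
def LastTwoDiff (w : List (Fin 3)) : Prop :=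
  ∃ u a b, w = u ++ [a, b] ∧ a ≠ b

/-- The Cartan projection `κ(g) = (log σ₁, log σ₂, log σ₃)`. -/
def kappa (g : M3) : Fin 3 → ℝ :=
  ![Real.log (sval1 g), Real.log (sval2 g), Real.log (sval3 g)]

/-- The linear functional `ψ_s` on the Cartan algebra. -/
def psi (s : ℝ) (lam : Fin 3 → ℝ) : ℝ := (lam 0 - lam 1) + (s - 1) * (lam 0 - lam 2)

end

/-! ### Entrywise norms and the Rauzy matrices -/

/-- The `ℓ¹` norm on `ℝ³`. -/
def n1 (v : Fin 3 → ℝ) : ℝ := |v 0| + |v 1| + |v 2|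

/-- The sum of the absolute values of the entries of a matrix. -/
def ns (g : M3) : ℝ := ∑ i, ∑ j, |g i j|

lemma n1_nonneg (v : Fin 3 → ℝ) : 0 ≤ n1 v := by unfold n1; positivity

lemma ns_nonneg (g : M3) : 0 ≤ ns g := by unfold ns; positivity

lemma abs_le_n1 (v : Fin 3 → ℝ) (i : Fin 3) : |v i| ≤ n1 v := by
  have h0 := abs_nonneg (v 0); have h1 := abs_nonneg (v 1); have h2 := abs_nonneg (v 2)
  unfold n1; fin_cases i <;> simp <;> linarith

lemma n1_eq_sum (v : Fin 3 → ℝ) : n1 v = ∑ i, |v i| := by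
  simp [n1, Fin.sum_univ_three]

lemma n1_add (u v : Fin 3 → ℝ) : n1 (u + v) ≤ n1 u + n1 v := by
  unfold n1; simp only [Pi.add_apply]
  linarith [abs_add_le (u 0) (v 0), abs_add_le (u 1) (v 1), abs_add_le (u 2) (v 2)]

lemma n1_smul (c : ℝ) (v : Fin 3 → ℝ) : n1 (c • v) = |c| * n1 v := by
  unfold n1; simp only [Pi.smul_apply, smul_eq_mul, abs_mul]; ring

lemma n1_neg (v : Fin 3 → ℝ) : n1 (-v) = n1 v := by
  unfold n1; simp

lemma n1_sub (u v : Fin 3 → ℝ) : n1 (u - v) ≤ n1 u + n1 v := by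
  rw [sub_eq_add_neg]; simpa [n1_neg] using n1_add u (-v)

lemma n1_eq_zero {v : Fin 3 → ℝ} (h : n1 v = 0) : v = 0 := by
  ext i
  have := abs_le_n1 v i
  rw [h] at this
  simpa using abs_nonpos_iff.1 this

lemma abs_le_ns (g : M3) (i j : Fin 3) : |g i j| ≤ ns g := by
  unfold ns
  calc |g i j| ≤ ∑ j, |g i j| := Finset.single_le_sum (f := fun j => |g i j|) (fun _ _ => abs_nonneg _) (Finset.mem_univ j)
    _ ≤ _ := Finset.single_le_sum (f := fun i => ∑ j, |g i j|) (fun _ _ => by positivity) (Finset.mem_univ i)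

lemma ns_transpose (g : M3) : ns gᵀ = ns g := by
  unfold ns; rw [Finset.sum_comm]; rfl

lemma n1_mulVec (g : M3) (v : Fin 3 → ℝ) : n1 (g *ᵥ v) ≤ ns g * n1 v := by
  rw [n1_eq_sum, ns, Finset.sum_mul]
  refine Finset.sum_le_sum fun i _ => ?_
  rw [Finset.sum_mul]
  change |∑ j, g i j * v j| ≤ _
  refine (Finset.abs_sum_le_sum_abs _ _).trans (Finset.sum_le_sum fun j _ => ?_)
  rw [abs_mul]
  exact mul_le_mul_of_nonneg_left (abs_le_n1 v j) (abs_nonneg _)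

lemma ns_mul (g h : M3) : ns (g * h) ≤ ns g * ns h := by
  have key : ns (g * h) = ∑ j, n1 (g *ᵥ (fun i => h i j)) := by
    unfold ns; rw [Finset.sum_comm]
    refine Finset.sum_congr rfl fun j _ => ?_
    rw [n1_eq_sum]; rfl
  have key2 : ns h = ∑ j, n1 (fun i => h i j) := by
    unfold ns; rw [Finset.sum_comm]
    refine Finset.sum_congr rfl fun j _ => ?_
    rw [n1_eq_sum]
  rw [key, key2, Finset.mul_sum]
  exact Finset.sum_le_sum fun j _ => n1_mulVec _ _

lemma abs_dot_le (u v : Fin 3 → ℝ) : |u ⬝ᵥ v| ≤ n1 u * n1 v := by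
  rw [n1_eq_sum u, Finset.sum_mul]
  refine (Finset.abs_sum_le_sum_abs _ _).trans (Finset.sum_le_sum fun j _ => ?_)
  rw [abs_mul]
  exact mul_le_mul_of_nonneg_left (abs_le_n1 v j) (abs_nonneg _)

lemma n1_cross (u v : Fin 3 → ℝ) : n1 (u ⨯₃ v) ≤ n1 u * n1 v := by
  simp only [n1, cross_apply]
  simp only [Fin.isValue, Matrix.cons_val_zero, Matrix.cons_val_one, Matrix.cons_val]
  have h (a b c d : ℝ) : |a * b - c * d| ≤ |a| * |b| + |c| * |d| := by
    rw [← abs_mul, ← abs_mul]; exact abs_sub _ _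
  have e (i j : Fin 3) : 0 ≤ |u i| * |v j| := by positivity
  nlinarith [h (u 1) (v 2) (u 2) (v 1), h (u 2) (v 0) (u 0) (v 2), h (u 0) (v 1) (u 1) (v 0),
    e 0 0, e 1 1, e 2 2]

lemma ns_adjugate (g : M3) : ns (adjugate g) ≤ ns g ^ 2 := by
  have h (a b c d : ℝ) : |a * b - c * d| ≤ |a| * |b| + |c| * |d| := by
    rw [← abs_mul, ← abs_mul]; exact abs_sub _ _
  have h' (a b c d : ℝ) : |-(a * b) + c * d| ≤ |a| * |b| + |c| * |d| := by
    rw [← abs_mul, ← abs_mul, ← abs_neg (a * b)]; exact abs_add_le _ _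
  simp only [ns, adjugate_fin_three, Fin.sum_univ_three]
  simp
  have e (i j k l : Fin 3) : 0 ≤ |g i j| * |g k l| := by positivity
  have s1 := h (g 1 1) (g 2 2) (g 1 2) (g 2 1)
  have s2 := h' (g 0 1) (g 2 2) (g 0 2) (g 2 1)
  have s3 := h (g 0 1) (g 1 2) (g 0 2) (g 1 1)
  have s4 := h' (g 1 0) (g 2 2) (g 1 2) (g 2 0)
  have s5 := h (g 0 0) (g 2 2) (g 0 2) (g 2 0)
  have s6 := h' (g 0 0) (g 1 2) (g 0 2) (g 1 0)
  have s7 := h (g 1 0) (g 2 1) (g 1 1) (g 2 0)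
  have s8 := h' (g 0 0) (g 2 1) (g 0 1) (g 2 0)
  have s9 := h (g 0 0) (g 1 1) (g 0 1) (g 1 0)
  refine (add_le_add (add_le_add (add_le_add (add_le_add s1 s2) s3)
    (add_le_add (add_le_add s4 s5) s6)) (add_le_add (add_le_add s7 s8) s9)).trans ?_
  rw [← sub_nonneg]
  ring_nf
  positivity

lemma cross_mulVec (g : M3) (x y : Fin 3 → ℝ) :
    (g *ᵥ x) ⨯₃ (g *ᵥ y) = (adjugate g)ᵀ *ᵥ (x ⨯₃ y) := by
  ext i
  fin_cases i <;>
  · simp [cross_apply, mulVec, dotProduct, Fin.sum_univ_three, adjugate_fin_three]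
    ring

/-! ### The matrices `A_w` -/

lemma Aw_nil : Aw [] = 1 := by simp [Aw]
lemma Aw_cons (i : Fin 3) (w : List (Fin 3)) : Aw (i :: w) = A i * Aw w := by simp [Aw]
lemma Aw_append (u w : List (Fin 3)) : Aw (u ++ w) = Aw u * Aw w := by simp [Aw]
lemma Aw_singleton (i : Fin 3) : Aw [i] = A i := by simp [Aw]

lemma det_A (i : Fin 3) : (A i).det = 1 := by
  fin_cases i <;> simp [A, det_fin_three]

lemma det_Aw (w : List (Fin 3)) : (Aw w).det = 1 := by
  induction w with
  | nil => simp [Aw_nil]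
  | cons i w ih => rw [Aw_cons, det_mul, det_A, ih, one_mul]

lemma isUnit_det_Aw (w : List (Fin 3)) : IsUnit (Aw w).det := by rw [det_Aw]; exact isUnit_one

lemma inv_Aw (w : List (Fin 3)) : (Aw w)⁻¹ = adjugate (Aw w) := by
  rw [Matrix.inv_def, det_Aw]; simp

lemma inv_mul_Aw (w : List (Fin 3)) : (Aw w)⁻¹ * Aw w = 1 :=
  Matrix.nonsing_inv_mul _ (isUnit_det_Aw w)

lemma mul_inv_Aw (w : List (Fin 3)) : Aw w * (Aw w)⁻¹ = 1 :=
  Matrix.mul_nonsing_inv _ (isUnit_det_Aw w)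

lemma adjugate_inv_Aw (w : List (Fin 3)) : adjugate (Aw w)⁻¹ = Aw w := by
  have := Matrix.inv_def (Aw w)⁻¹
  rw [Matrix.nonsing_inv_nonsing_inv _ (isUnit_det_Aw w), Matrix.det_nonsing_inv, det_Aw] at this
  simpa using this.symm

lemma inv_Aw_append (u w : List (Fin 3)) : (Aw (u ++ w))⁻¹ = (Aw w)⁻¹ * (Aw u)⁻¹ := by
  rw [Aw_append, Matrix.mul_inv_rev]

lemma A_nonneg (k i j : Fin 3) : 0 ≤ A k i j := by
  fin_cases k <;> fin_cases i <;> fin_cases j <;> simp [A]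

lemma A_diag (k i : Fin 3) : A k i i = 1 := by
  fin_cases k <;> fin_cases i <;> simp [A]

lemma Aw_nonneg (w : List (Fin 3)) (i j : Fin 3) : 0 ≤ Aw w i j := by
  induction w generalizing i j with
  | nil => rw [Aw_nil, one_apply]; split_ifs <;> norm_num
  | cons k w ih =>
    rw [Aw_cons, mul_apply]
    exact Finset.sum_nonneg fun l _ => mul_nonneg (A_nonneg _ _ _) (ih _ _)

lemma le_Aw_cons (k : Fin 3) (w : List (Fin 3)) (i j : Fin 3) : Aw w i j ≤ Aw (k :: w) i j := by
  rw [Aw_cons, mul_apply]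
  have := Finset.single_le_sum (f := fun l => A k i l * Aw w l j)
    (fun l _ => mul_nonneg (A_nonneg _ _ _) (Aw_nonneg _ _ _)) (Finset.mem_univ i)
  simpa [A_diag] using this

lemma one_le_Aw_diag (w : List (Fin 3)) (i : Fin 3) : 1 ≤ Aw w i i := by
  induction w with
  | nil => simp [Aw_nil]
  | cons k w ih => exact ih.trans (le_Aw_cons k w i i)

lemma three_le_ns_Aw (w : List (Fin 3)) : 3 ≤ ns (Aw w) := by
  have h (i : Fin 3) : 1 ≤ ∑ j, |Aw w i j| :=
    ((one_le_Aw_diag w i).trans (le_abs_self _)).trans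
    (Finset.single_le_sum (f := fun j => |Aw w i j|) (fun _ _ => abs_nonneg _) (Finset.mem_univ i))
  unfold ns
  rw [Fin.sum_univ_three]
  linarith [h 0, h 1, h 2]

lemma ns_Aw_pos (w : List (Fin 3)) : 0 < ns (Aw w) := by linarith [three_le_ns_Aw w]

lemma ns_le_ns_inv_sq (w : List (Fin 3)) : ns (Aw w) ≤ ns (Aw w)⁻¹ ^ 2 := by
  have := ns_adjugate (Aw w)⁻¹
  rwa [adjugate_inv_Aw] at this

lemma ns_inv_le_ns_sq (w : List (Fin 3)) : ns (Aw w)⁻¹ ≤ ns (Aw w) ^ 2 := by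
  rw [inv_Aw]; exact ns_adjugate _

lemma one_le_ns_inv (w : List (Fin 3)) : 1 ≤ ns (Aw w)⁻¹ := by
  nlinarith [ns_le_ns_inv_sq w, three_le_ns_Aw w, ns_nonneg (Aw w)⁻¹]

lemma ns_inv_pos (w : List (Fin 3)) : 0 < ns (Aw w)⁻¹ := by linarith [one_le_ns_inv w]

lemma ns_Aw_append_le (u w : List (Fin 3)) : ns (Aw (u ++ w)) ≤ ns (Aw u) * ns (Aw w) := by
  rw [Aw_append]; exact ns_mul _ _

lemma ns_inv_append_le (u w : List (Fin 3)) :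
    ns (Aw (u ++ w))⁻¹ ≤ ns (Aw u)⁻¹ * ns (Aw w)⁻¹ := by
  rw [inv_Aw_append, mul_comm (ns _)]; exact ns_mul _ _

/-- The entries of `A_w⁻¹` are bounded by row sums of `A_w`: with `x = A_w 1` and `y` a row of
`A_w⁻¹`, the inequalities `|y_i| ≤ x_j + x_k` persist when a letter is put in front of `w`. -/
lemma inv_entry_le (w : List (Fin 3)) (m : Fin 3) :
    |(Aw w)⁻¹ m 0| ≤ (∑ j, Aw w 1 j) + (∑ j, Aw w 2 j) ∧
    |(Aw w)⁻¹ m 1| ≤ (∑ j, Aw w 0 j) + (∑ j, Aw w 2 j) ∧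
    |(Aw w)⁻¹ m 2| ≤ (∑ j, Aw w 0 j) + (∑ j, Aw w 1 j) := by
  induction w with
  | nil =>
    simp only [Aw_nil, inv_one, Fin.sum_univ_three]
    have e01 : (0 : Fin 3) ≠ 1 := by decide
    have e02 : (0 : Fin 3) ≠ 2 := by decide
    have e12 : (1 : Fin 3) ≠ 2 := by decide
    have hm : m = 0 ∨ m = 1 ∨ m = 2 := by revert m; decide
    rcases hm with rfl | rfl | rfl <;>
      simp [one_apply, e01, e02, e12, e01.symm, e02.symm, e12.symm]
  | cons k w ih =>
    have hinv : (Aw (k :: w))⁻¹ = (Aw w)⁻¹ * (A k)⁻¹ := by rw [Aw_cons, Matrix.mul_inv_rev]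
    have hA : (A k)⁻¹ = adjugate (A k) := by rw [Matrix.inv_def, det_A]; simp
    obtain ⟨h0, h1, h2⟩ := ih
    simp only [Fin.sum_univ_three] at *
    rw [hinv, hA, Aw_cons]
    generalize (Aw w)⁻¹ = B at *
    generalize hC : Aw w = C at *
    rw [abs_le] at *
    fin_cases k <;>
    · simp [mul_apply, Fin.sum_univ_three, A, adjugate_fin_three, abs_le]
      refine ⟨⟨?_, ?_⟩, ⟨?_, ?_⟩, ?_, ?_⟩ <;> linarith

lemma ns_inv_le (w : List (Fin 3)) : ns (Aw w)⁻¹ ≤ 6 * ns (Aw w) := by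
  have e : ns (Aw w) = (∑ j, Aw w 0 j) + (∑ j, Aw w 1 j) + (∑ j, Aw w 2 j) := by
    unfold ns
    simp only [abs_of_nonneg (Aw_nonneg w _ _), Fin.sum_univ_three]
  have h := inv_entry_le w
  have : ns (Aw w)⁻¹ = ∑ m, (|(Aw w)⁻¹ m 0| + |(Aw w)⁻¹ m 1| + |(Aw w)⁻¹ m 2|) := by
    simp [ns, Fin.sum_univ_three]
  rw [this, e, Fin.sum_univ_three]
  linarith [(h 0).1, (h 0).2.1, (h 0).2.2, (h 1).1, (h 1).2.1, (h 1).2.2, (h 2).1, (h 2).2.1,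
    (h 2).2.2]

/-! ### Singular values versus entrywise norms -/

lemma ofE_apply (x : E3) (i : Fin 3) : ofE x i = x i := rfl
lemma toE_apply (x : Fin 3 → ℝ) (i : Fin 3) : toE x i = x i := rfl
lemma ofE_toE (x : Fin 3 → ℝ) : ofE (toE x) = x := rfl
lemma toE_ofE (x : E3) : toE (ofE x) = x := rfl
lemma ofE_sub (x y : E3) : ofE (x - y) = ofE x - ofE y := rfl

lemma abs_le_norm (x : E3) (i : Fin 3) : |x i| ≤ ‖x‖ := by
  simpa using PiLp.norm_apply_le x i

lemma norm_le_n1 (x : E3) : ‖x‖ ≤ n1 (ofE x) := by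
  rw [EuclideanSpace.norm_eq, Real.sqrt_le_left (n1_nonneg _), Fin.sum_univ_three]
  simp only [n1, ofE_apply, Real.norm_eq_abs]
  nlinarith [mul_nonneg (abs_nonneg (x 0)) (abs_nonneg (x 1)),
    mul_nonneg (abs_nonneg (x 0)) (abs_nonneg (x 2)),
    mul_nonneg (abs_nonneg (x 1)) (abs_nonneg (x 2))]

lemma n1_le_norm (x : E3) : n1 (ofE x) ≤ 3 * ‖x‖ := by
  simp only [n1, ofE_apply]
  linarith [abs_le_norm x 0, abs_le_norm x 1, abs_le_norm x 2]

lemma dist_le_n1 (x y : E3) : dist x y ≤ n1 (ofE x - ofE y) := by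
  rw [dist_eq_norm]; exact norm_le_n1 _

lemma n1_le_dist (x y : E3) : n1 (ofE x - ofE y) ≤ 3 * dist x y := by
  rw [dist_eq_norm, ← ofE_sub]; exact n1_le_norm _

lemma sval1_nonneg (g : M3) : 0 ≤ sval1 g := norm_nonneg _

lemma sval1_le_ns (g : M3) : sval1 g ≤ ns g := by
  refine ContinuousLinearMap.opNorm_le_bound _ (ns_nonneg g) fun x => ?_
  refine (norm_le_n1 _).trans ?_
  rw [n1_eq_sum, ns, Finset.sum_mul]
  refine Finset.sum_le_sum fun i _ => ?_
  rw [Finset.sum_mul]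
  change |∑ j, g i j * x j| ≤ _
  refine (Finset.abs_sum_le_sum_abs _ _).trans (Finset.sum_le_sum fun j _ => ?_)
  rw [abs_mul]
  exact mul_le_mul_of_nonneg_left (abs_le_norm x j) (abs_nonneg _)

lemma entry_le_sval1 (g : M3) (i j : Fin 3) : |g i j| ≤ sval1 g := by
  have h := (Matrix.toEuclideanLin g).toContinuousLinearMap.le_opNorm (EuclideanSpace.single j 1)
  rw [PiLp.norm_single, norm_one, mul_one] at h
  refine le_trans ?_ h
  refine le_trans (le_of_eq ?_) (abs_le_norm _ i)
  congr 1
  change g i j = ∑ k, g i k * (EuclideanSpace.single j (1:ℝ) : E3) k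
  simp

lemma ns_le_sval1 (g : M3) : ns g ≤ 9 * sval1 g := by
  unfold ns
  calc _ ≤ ∑ _i : Fin 3, ∑ _j : Fin 3, sval1 g :=
        Finset.sum_le_sum fun i _ => Finset.sum_le_sum fun j _ => entry_le_sval1 g i j
    _ = _ := by simp; ring

/-- The singular value function of `A_w` for `1 < s`, up to bounded factors, in terms of
`P = ns A_w` and `R = ns A_w⁻¹`. -/
noncomputable def Phi (s : ℝ) (w : List (Fin 3)) : ℝ :=
  ns (Aw w)⁻¹ ^ (2 - s) * ns (Aw w) ^ (-1 - s)

lemma Phi_pos (s : ℝ) (w : List (Fin 3)) : 0 < Phi s w :=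
  mul_pos (Real.rpow_pos_of_pos (ns_inv_pos w) _) (Real.rpow_pos_of_pos (ns_Aw_pos w) _)

lemma phi_eq (s : ℝ) (hs : 1 < s) (w : List (Fin 3)) :
    phi s (Aw w) = sval1 (Aw w)⁻¹ ^ (2 - s) * sval1 (Aw w) ^ (-1 - s) := by
  have hP : 0 < sval1 (Aw w) := by linarith [ns_le_sval1 (Aw w), ns_Aw_pos w]
  have hR : 0 < sval1 (Aw w)⁻¹ := by linarith [ns_le_sval1 (Aw w)⁻¹, ns_inv_pos w]
  rw [phi, if_neg (not_le.2 hs), sval2, sval3, det_Aw]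
  generalize sval1 (Aw w) = P at *
  generalize sval1 (Aw w)⁻¹ = R at *
  rw [abs_one, one_mul, Real.div_rpow (by positivity) hP.le, Real.inv_rpow hR.le]
  have e1 : R ^ (2 - s) = R * (R ^ (s - 1))⁻¹ := by
    rw [← Real.rpow_neg hR.le, show (2 - s) = 1 + -(s - 1) by ring, Real.rpow_add hR, Real.rpow_one]
  have e2 : P ^ (-1 - s) = P⁻¹ * P⁻¹ * (P ^ (s - 1))⁻¹ := by
    rw [← Real.rpow_neg hP.le, show (-1 - s) = -1 + -1 + -(s - 1) by ring, Real.rpow_add hP,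
      Real.rpow_add hP, Real.rpow_neg_one]
  rw [e1, e2]
  field_simp

lemma phi_le_Phi (s : ℝ) (hs : 1 < s) (hs2 : s ≤ 2) (w : List (Fin 3)) :
    phi s (Aw w) ≤ 729 * Phi s w := by
  rw [phi_eq s hs, Phi]
  have hP0 := ns_Aw_pos w
  have hR0 := ns_inv_pos w
  have hR : sval1 (Aw w)⁻¹ ^ (2 - s) ≤ ns (Aw w)⁻¹ ^ (2 - s) :=
    Real.rpow_le_rpow (sval1_nonneg _) (sval1_le_ns _) (by linarith)
  have hP : sval1 (Aw w) ^ (-1 - s) ≤ 729 * ns (Aw w) ^ (-1 - s) := by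
    have h1 : sval1 (Aw w) ^ (-1 - s) ≤ (ns (Aw w) / 9) ^ (-1 - s) :=
      Real.rpow_le_rpow_of_nonpos (by positivity) (by linarith [ns_le_sval1 (Aw w)]) (by linarith)
    refine h1.trans ?_
    rw [Real.div_rpow hP0.le (by norm_num), div_eq_mul_inv, ← Real.rpow_neg (by norm_num), mul_comm]
    refine mul_le_mul_of_nonneg_right ?_ (by positivity)
    calc (9:ℝ) ^ (-(-1 - s)) ≤ 9 ^ (3 : ℝ) :=
          Real.rpow_le_rpow_of_exponent_le (by norm_num) (by linarith)
      _ = 729 := by norm_num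
  calc _ ≤ ns (Aw w)⁻¹ ^ (2 - s) * (729 * ns (Aw w) ^ (-1 - s)) :=
        mul_le_mul hR hP (Real.rpow_nonneg (sval1_nonneg _) _) (by positivity)
    _ = _ := by ring

lemma Phi_le_phi (s : ℝ) (hs : 1 < s) (hs2 : s ≤ 2) (w : List (Fin 3)) :
    Phi s w ≤ 9 * phi s (Aw w) := by
  rw [phi_eq s hs, Phi]
  have hP0 := ns_Aw_pos w
  have hR0 := ns_inv_pos w
  have hsP : 0 < sval1 (Aw w) := by linarith [ns_le_sval1 (Aw w), ns_Aw_pos w]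
  have hR : ns (Aw w)⁻¹ ^ (2 - s) ≤ 9 * sval1 (Aw w)⁻¹ ^ (2 - s) := by
    calc _ ≤ (9 * sval1 (Aw w)⁻¹) ^ (2 - s) :=
        Real.rpow_le_rpow hR0.le (ns_le_sval1 _) (by linarith)
      _ = 9 ^ (2 - s) * sval1 (Aw w)⁻¹ ^ (2 - s) := Real.mul_rpow (by norm_num) (sval1_nonneg _)
      _ ≤ _ := by
        refine mul_le_mul_of_nonneg_right ?_ (Real.rpow_nonneg (sval1_nonneg _) _)
        calc (9:ℝ) ^ (2 - s) ≤ 9 ^ (1 : ℝ) :=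
              Real.rpow_le_rpow_of_exponent_le (by norm_num) (by linarith)
          _ = 9 := by norm_num
  have hP : ns (Aw w) ^ (-1 - s) ≤ sval1 (Aw w) ^ (-1 - s) :=
    Real.rpow_le_rpow_of_nonpos hsP (sval1_le_ns _) (by linarith)
  calc _ ≤ (9 * sval1 (Aw w)⁻¹ ^ (2 - s)) * sval1 (Aw w) ^ (-1 - s) :=
        mul_le_mul hR hP (by positivity) (mul_nonneg (by norm_num)
          (Real.rpow_nonneg (sval1_nonneg _) _))
    _ = _ := by ring

/-- For `1 < s ≤ 2`, summability of `φ_s` over nonempty words is summability of `Phi s`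
over all words. -/
lemma summable_phi_iff (s : ℝ) (hs : 1 < s) (hs2 : s ≤ 2) :
    (Summable fun w : {w : List (Fin 3) // w ≠ []} => phi s (Aw w.1)) ↔ Summable (Phi s) := by
  have h1 : (Summable fun w : {w : List (Fin 3) // w ≠ []} => phi s (Aw w.1)) ↔
      Summable fun w : {w : List (Fin 3) // w ≠ []} => Phi s w.1 := by
    constructor
    · intro h
      exact Summable.of_nonneg_of_le (fun w => (Phi_pos s w.1).le)
        (fun w => Phi_le_phi s hs hs2 w.1) (h.mul_left 9)
    · intro h
      refine Summable.of_nonneg_of_le (fun w => ?_)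
        (fun w => phi_le_Phi s hs hs2 w.1) (h.mul_left 729)
      have := Phi_le_phi s hs hs2 w.1
      have := Phi_pos s w.1
      linarith
  rw [h1]
  have : Summable (fun w : {w : List (Fin 3) // w ≠ []} => Phi s w.1) ↔
      Summable (fun w : ↑(({[]} : Finset (List (Fin 3))) : Set (List (Fin 3)))ᶜ => Phi s w.1) := by
    have e : ({w : List (Fin 3) | w ≠ []}) =
      (({[]} : Finset (List (Fin 3))) : Set (List (Fin 3)))ᶜ := by ext; simp
    change Summable (fun w : ↑{w : List (Fin 3) | w ≠ []} => Phi s w.1) ↔ _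
    rw [e]
  rw [this]
  exact Finset.summable_compl_iff _

/-! ### The projective action on vectors -/

/-- The standard simplex as a set of coordinate vectors. -/
def Sx : Set (Fin 3 → ℝ) := {x | (∀ i, 0 ≤ x i) ∧ omega3 x = 1}

/-- The projective action of a word on coordinate vectors. -/
noncomputable def cv (w : List (Fin 3)) (x : Fin 3 → ℝ) : Fin 3 → ℝ :=
  (omega3 (Aw w *ᵥ x))⁻¹ • (Aw w *ᵥ x)

lemma fmap_eq (w : List (Fin 3)) (x : E3) : fmap w x = toE (cv w (ofE x)) := rfl

lemma mem_simplex (x : E3) : x ∈ simplex ↔ ofE x ∈ Sx := Iff.rfl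

lemma omega3_smul (c : ℝ) (v : Fin 3 → ℝ) : omega3 (c • v) = c * omega3 v := by
  simp [omega3]; ring

lemma omega3_add (u v : Fin 3 → ℝ) : omega3 (u + v) = omega3 u + omega3 v := by
  simp [omega3]; ring

lemma omega3_eq_n1 {v : Fin 3 → ℝ} (h : ∀ i, 0 ≤ v i) : omega3 v = n1 v := by
  simp [omega3, n1, abs_of_nonneg (h _)]

lemma n1_Sx {x : Fin 3 → ℝ} (h : x ∈ Sx) : n1 x = 1 := by rw [← omega3_eq_n1 h.1]; exact h.2

lemma le_Aw_mulVec (w : List (Fin 3)) {x : Fin 3 → ℝ} (hx : ∀ i, 0 ≤ x i) (i : Fin 3) :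
    x i ≤ (Aw w *ᵥ x) i := by
  have h : Aw w i i * x i ≤ ∑ j, Aw w i j * x j :=
    Finset.single_le_sum (f := fun j => Aw w i j * x j)
      (fun j _ => mul_nonneg (Aw_nonneg w i j) (hx j)) (Finset.mem_univ i)
  have := mul_le_mul_of_nonneg_right (one_le_Aw_diag w i) (hx i)
  simp only [Matrix.mulVec, dotProduct]
  linarith

lemma Aw_mulVec_nonneg (w : List (Fin 3)) {x : Fin 3 → ℝ} (hx : ∀ i, 0 ≤ x i) (i : Fin 3) :
    0 ≤ (Aw w *ᵥ x) i := (hx i).trans (le_Aw_mulVec w hx i)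

lemma omega3_le_Aw (w : List (Fin 3)) {x : Fin 3 → ℝ} (hx : ∀ i, 0 ≤ x i) :
    omega3 x ≤ omega3 (Aw w *ᵥ x) := by
  simp only [omega3]
  linarith [le_Aw_mulVec w hx 0, le_Aw_mulVec w hx 1, le_Aw_mulVec w hx 2]

lemma one_le_omega {x : Fin 3 → ℝ} (hx : x ∈ Sx) (w : List (Fin 3)) :
    1 ≤ omega3 (Aw w *ᵥ x) := hx.2 ▸ omega3_le_Aw w hx.1

lemma omega_pos {x : Fin 3 → ℝ} (hx : x ∈ Sx) (w : List (Fin 3)) :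
    0 < omega3 (Aw w *ᵥ x) := by linarith [one_le_omega hx w]

lemma omega_le_ns {x : Fin 3 → ℝ} (hx : x ∈ Sx) (w : List (Fin 3)) :
    omega3 (Aw w *ᵥ x) ≤ ns (Aw w) := by
  rw [omega3_eq_n1 (Aw_mulVec_nonneg w hx.1)]
  simpa [n1_Sx hx] using n1_mulVec (Aw w) x

lemma cv_mem {x : Fin 3 → ℝ} (hx : x ∈ Sx) (w : List (Fin 3)) : cv w x ∈ Sx := by
  have h := omega_pos hx w
  refine ⟨fun i => ?_, ?_⟩
  · exact mul_nonneg (inv_nonneg.2 h.le) (Aw_mulVec_nonneg w hx.1 i)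
  · rw [cv, omega3_smul, inv_mul_cancel₀ h.ne']

lemma cv_append {x : Fin 3 → ℝ} (hx : x ∈ Sx) (u w : List (Fin 3)) :
    cv (u ++ w) x = cv u (cv w x) := by
  have h := omega_pos hx w
  simp only [cv, Aw_append, Matrix.mulVec_smul, omega3_smul, ← Matrix.mulVec_mulVec, smul_smul]
  congr 1
  rw [mul_inv, inv_inv, mul_right_comm, mul_inv_cancel₀ h.ne', one_mul]

lemma cv_nil {x : Fin 3 → ℝ} (hx : x ∈ Sx) : cv [] x = x := by
  simp [cv, Aw_nil, hx.2]

lemma Aw_inv_cv {x : Fin 3 → ℝ} (w : List (Fin 3)) :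
    (Aw w)⁻¹ *ᵥ (cv w x) = (omega3 (Aw w *ᵥ x))⁻¹ • x := by
  rw [cv, Matrix.mulVec_smul, Matrix.mulVec_mulVec, inv_mul_Aw, Matrix.one_mulVec]

lemma cross_cv (w : List (Fin 3)) (x y : Fin 3 → ℝ) :
    cv w x ⨯₃ cv w y = ((omega3 (Aw w *ᵥ x))⁻¹ * (omega3 (Aw w *ᵥ y))⁻¹) •
      ((Aw w)⁻¹ᵀ *ᵥ (x ⨯₃ y)) := by
  rw [cv, cv, LinearMap.map_smul, LinearMap.map_smul₂, smul_smul, cross_mulVec, inv_Aw, mul_comm]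

lemma n1_sub_le_cross {x y : Fin 3 → ℝ} (hx : x ∈ Sx) (hy : y ∈ Sx) :
    n1 (x - y) ≤ 3 * n1 (x ⨯₃ y) := by
  have h1 : y - x = (x ⨯₃ y) ⨯₃ ![1,1,1] := by
    have hx2 := hx.2; have hy2 := hy.2
    simp only [omega3] at hx2 hy2
    ext i
    fin_cases i <;> simp [cross_apply]
    · linear_combination (x 0) * hy2 - (y 0) * hx2
    · linear_combination (x 1) * hy2 - (y 1) * hx2
    · linear_combination (x 2) * hy2 - (y 2) * hx2
  rw [← n1_neg, neg_sub, h1]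
  refine (n1_cross _ _).trans (le_of_eq ?_)
  simp [n1]; ring

lemma n1_cross_le_sub {x y : Fin 3 → ℝ} (hx : n1 x ≤ 1) :
    n1 (x ⨯₃ y) ≤ n1 (x - y) := by
  have h1 : x ⨯₃ y = x ⨯₃ (y - x) := by rw [map_sub, cross_self, sub_zero]
  rw [h1]
  refine (n1_cross _ _).trans ?_
  rw [← n1_neg (y - x), neg_sub]
  exact mul_le_of_le_one_left (n1_nonneg _) hx

/-! ### Separation of cylinders -/

lemma A_inv_coord (i j : Fin 3) (hij : i ≠ j) (x : Fin 3 → ℝ) (hx : ∀ k, 0 ≤ x k) :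
    ((A i)⁻¹ *ᵥ (A j *ᵥ x)) i ≤ 0 := by
  have h : ∀ i, (A i)⁻¹ = adjugate (A i) := fun i => by
    rw [Matrix.inv_def, det_A]; simp
  have h0 := hx 0; have h1 := hx 1; have h2 := hx 2
  rw [h]
  fin_cases i <;> fin_cases j <;>
    simp [A, adjugate_fin_three, Matrix.mulVec, dotProduct, Fin.sum_univ_three] at hij ⊢ <;>
    linarith

/-- Words neither of which is a prefix of the other have essentially disjoint cones. -/
lemma exists_coord_nonpos (w v : List (Fin 3)) (h1 : ¬ w <+: v) (h2 : ¬ v <+: w)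
    (x : Fin 3 → ℝ) (hx : ∀ k, 0 ≤ x k) :
    ∃ i, ((Aw w)⁻¹ *ᵥ (Aw v *ᵥ x)) i ≤ 0 := by
  induction w generalizing v with
  | nil => exact absurd List.nil_prefix h1
  | cons a w ih =>
    cases v with
    | nil => exact absurd List.nil_prefix h2
    | cons b v =>
      by_cases hab : a = b
      · subst hab
        obtain ⟨i, hi⟩ := ih v (fun h => h1 (by simpa using h)) (fun h => h2 (by simpa using h))
        refine ⟨i, ?_⟩
        have e : (Aw (a :: w))⁻¹ *ᵥ (Aw (a :: v) *ᵥ x) = (Aw w)⁻¹ *ᵥ (Aw v *ᵥ x) := by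
          have : (Aw (a :: w))⁻¹ = (Aw w)⁻¹ * (A a)⁻¹ := by
            rw [Aw_cons, Matrix.mul_inv_rev]
          rw [this, Aw_cons, ← Matrix.mulVec_mulVec, ← Matrix.mulVec_mulVec,
            Matrix.mulVec_mulVec _ (A a)⁻¹, Matrix.nonsing_inv_mul _ (by rw [det_A]; exact isUnit_one),
            Matrix.one_mulVec]
        rw [e]; exact hi
      · by_contra! hcon
        set u := (Aw (a :: w))⁻¹ *ᵥ (Aw (b :: v) *ᵥ x) with hu
        have h3 : Aw w *ᵥ u = (A a)⁻¹ *ᵥ (A b *ᵥ (Aw v *ᵥ x)) := by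
          rw [hu, Aw_cons, Matrix.mul_inv_rev, Aw_cons, Matrix.mulVec_mulVec, Matrix.mulVec_mulVec,
            Matrix.mulVec_mulVec, Matrix.mulVec_mulVec, ← Matrix.mul_assoc, ← Matrix.mul_assoc,
            mul_inv_Aw, Matrix.one_mul, Matrix.mul_assoc]
        have h4 := A_inv_coord a b hab _ (Aw_mulVec_nonneg v hx)
        rw [← h3] at h4
        have h5 := le_Aw_mulVec w (fun i => (hcon i).le) a
        linarith [hcon a]

/-- Interior points of a cylinder are at distance at least `c/(PR)` from incomparable cylinders. -/
lemma separation (w v : List (Fin 3)) (h1 : ¬ w <+: v) (h2 : ¬ v <+: w)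
    {x y : Fin 3 → ℝ} (hx : x ∈ Sx) (hy : y ∈ Sx) {c : ℝ} (hc : ∀ i, c ≤ y i) (hc0 : 0 ≤ c) :
    c / (ns (Aw w) * ns (Aw w)⁻¹) ≤ n1 (cv w y - cv v x) := by
  obtain ⟨i, hi⟩ := exists_coord_nonpos w v h1 h2 x hx.1
  have hP := ns_Aw_pos w
  have hR := ns_inv_pos w
  have hom := omega_pos hy w
  have hom' := omega_pos hx v
  have e1 : ((Aw w)⁻¹ *ᵥ (cv w y - cv v x)) i =
      (omega3 (Aw w *ᵥ y))⁻¹ * y i - (omega3 (Aw v *ᵥ x))⁻¹ * ((Aw w)⁻¹ *ᵥ (Aw v *ᵥ x)) i := by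
    rw [Matrix.mulVec_sub, Aw_inv_cv, cv, Matrix.mulVec_smul]; rfl
  have e2 : (omega3 (Aw v *ᵥ x))⁻¹ * ((Aw w)⁻¹ *ᵥ (Aw v *ᵥ x)) i ≤ 0 :=
    mul_nonpos_of_nonneg_of_nonpos (inv_nonneg.2 hom'.le) hi
  have e3 : c / ns (Aw w) ≤ (omega3 (Aw w *ᵥ y))⁻¹ * y i := by
    rw [div_eq_mul_inv, mul_comm]
    exact mul_le_mul (inv_anti₀ hom (omega_le_ns hy w)) (hc i) hc0 (inv_nonneg.2 hom.le)
  have e4 := (abs_le_n1 ((Aw w)⁻¹ *ᵥ (cv w y - cv v x)) i).trans (n1_mulVec _ _)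
  rw [e1] at e4
  have e5 := le_abs_self ((omega3 (Aw w *ᵥ y))⁻¹ * y i -
    (omega3 (Aw v *ᵥ x))⁻¹ * ((Aw w)⁻¹ *ᵥ (Aw v *ᵥ x)) i)
  rw [← div_div, div_le_iff₀ hR, mul_comm]
  linarith

/-! ### Rank-one approximation of the inverse -/

lemma exists_max_entry (g : M3) : ∃ i j, ∀ k l, |g k l| ≤ |g i j| := by
  obtain ⟨x, hx⟩ := Finite.exists_max (fun x : Fin 3 × Fin 3 => |g x.1 x.2|)
  exact ⟨x.1, x.2, fun k l => hx (k, l)⟩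

/-- Two by two minors of `g` are, up to sign, entries of `adjugate g`. -/
lemma minor_le_adjugate (g : M3) (i j k l : Fin 3) :
    |g k l * g i j - g k j * g i l| ≤ ns (adjugate g) := by
  have key : ∀ a b, |adjugate g a b| ≤ ns (adjugate g) := abs_le_ns _
  have h00 := key 0 0; have h01 := key 0 1; have h02 := key 0 2
  have h10 := key 1 0; have h11 := key 1 1; have h12 := key 1 2
  have h20 := key 2 0; have h21 := key 2 1; have h22 := key 2 2
  have h0 := ns_nonneg (adjugate g)
  generalize ns (adjugate g) = S at *
  simp only [adjugate_fin_three, Matrix.of_apply, Matrix.cons_val] at h00 h01 h02 h10 h11 h12 h20 h21 h22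
  rw [abs_le] at *
  fin_cases i <;> fin_cases j <;> fin_cases k <;> fin_cases l <;> dsimp <;>
    constructor <;> linarith

/-! ### The upper bound: efficient covers of cylinders -/

lemma pairs_nonneg (w : List (Fin 3)) (y : Fin 3 → ℝ) (h01 : 0 ≤ y 0 + y 1) (h02 : 0 ≤ y 0 + y 2)
    (h12 : 0 ≤ y 1 + y 2) : 0 ≤ (Aw w *ᵥ y) 0 + (Aw w *ᵥ y) 1 ∧
      0 ≤ (Aw w *ᵥ y) 0 + (Aw w *ᵥ y) 2 ∧ 0 ≤ (Aw w *ᵥ y) 1 + (Aw w *ᵥ y) 2 := by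
  induction w with
  | nil => simp [Aw_nil]; exact ⟨h01, h02, h12⟩
  | cons a w ih =>
    obtain ⟨g1, g2, g3⟩ := ih
    rw [Aw_cons, ← Matrix.mulVec_mulVec]
    generalize Aw w *ᵥ y = z at *
    fin_cases a <;> simp [A, Matrix.mulVec, dotProduct, Fin.sum_univ_three] <;>
      refine ⟨?_, ?_, ?_⟩ <;> linarith

lemma omega3_sub (u v : Fin 3 → ℝ) : omega3 (u - v) = omega3 u - omega3 v := by
  simp [omega3]; ring

lemma ns_Aw_eq (w : List (Fin 3)) : ns (Aw w) = omega3 (Aw w *ᵥ ![1,1,1]) := by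
  simp [ns, omega3, Fin.sum_univ_three, abs_of_nonneg (Aw_nonneg w _ _), Matrix.mulVec, dotProduct]

/-- On vectors two of whose coordinates are bounded below, `A_w` expands by the full norm:
each column sum of `A_w` is at most the sum of the other two. -/
lemma omega_ge_two (w : List (Fin 3)) {z : Fin 3 → ℝ} (hz : ∀ i, 0 ≤ z i) {c : ℝ} (hc : 0 ≤ c)
    (a b : Fin 3) (hab : a ≠ b) (ha : c ≤ z a) (hb : c ≤ z b) :
    c / 2 * ns (Aw w) ≤ omega3 (Aw w *ᵥ z) := by
  have key : ∀ y : Fin 3 → ℝ, 0 ≤ y 0 + y 1 → 0 ≤ y 0 + y 2 → 0 ≤ y 1 + y 2 →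
      0 ≤ omega3 (Aw w *ᵥ y) := by
    intro y h1 h2 h3
    obtain ⟨g1, g2, g3⟩ := pairs_nonneg w y h1 h2 h3
    simp only [omega3]; linarith
  have h := key (z - (c/2) • ![1,1,1])
  rw [Matrix.mulVec_sub, Matrix.mulVec_smul, omega3_sub, omega3_smul, ← ns_Aw_eq] at h
  have h0 := hz 0; have h1 := hz 1; have h2 := hz 2
  have := h (by fin_cases a <;> fin_cases b <;> simp at * <;> linarith)
    (by fin_cases a <;> fin_cases b <;> simp at * <;> linarith)
    (by fin_cases a <;> fin_cases b <;> simp at * <;> linarith)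
  linarith

lemma cv_pair_ge (a b : Fin 3) (hab : a ≠ b) {x : Fin 3 → ℝ} (hx : x ∈ Sx) :
    1/5 ≤ cv [a,b] x a ∧ 1/5 ≤ cv [a,b] x b := by
  have h := omega_pos hx [a,b]
  have h0 := hx.1 0; have h1 := hx.1 1; have h2 := hx.1 2
  have hs := hx.2
  simp only [cv, Pi.smul_apply, smul_eq_mul, inv_mul_eq_div]
  rw [le_div_iff₀ h, le_div_iff₀ h]
  have e : Aw [a,b] = A a * A b := by simp [Aw]
  rw [e]
  simp only [omega3] at hs ⊢
  fin_cases a <;> fin_cases b <;> simp [A, Matrix.mulVec, dotProduct, Fin.sum_univ_three,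
    Matrix.mul_apply] at hab ⊢ <;> constructor <;> linarith

/-- The image of `ξ` under the inverse transpose is close to a fixed line. -/
lemma inv_transpose_approx (w : List (Fin 3)) : ∃ p r : Fin 3 → ℝ,
    (∀ i, |p i| ≤ ns (Aw w)⁻¹) ∧ (∀ i, |r i| ≤ 1) ∧ ∀ ξ : Fin 3 → ℝ,
      n1 ((Aw w)⁻¹ᵀ *ᵥ ξ - (p ⬝ᵥ ξ) • r) ≤ 27 * (ns (Aw w) / ns (Aw w)⁻¹) * n1 ξ := by
  obtain ⟨i, j, hij⟩ := exists_max_entry (Aw w)⁻¹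
  have hmin := minor_le_adjugate (Aw w)⁻¹ i j
  rw [adjugate_inv_Aw] at hmin
  have hR := ns_inv_pos w
  have hP := ns_Aw_pos w
  have hsum : ns (Aw w)⁻¹ ≤ 9 * |(Aw w)⁻¹ i j| := by
    unfold ns
    calc _ ≤ ∑ _k : Fin 3, ∑ _l : Fin 3, |(Aw w)⁻¹ i j| :=
          Finset.sum_le_sum fun k _ => Finset.sum_le_sum fun l _ => hij k l
      _ = _ := by simp; ring
  have hle := abs_le_ns (Aw w)⁻¹
  generalize (Aw w)⁻¹ = B at *
  generalize ns (Aw w) = P at *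
  generalize ns B = R at *
  have hb : 0 < |B i j| := by linarith
  have hb0 : B i j ≠ 0 := abs_pos.1 hb
  refine ⟨fun k => B k j, fun l => B i l / B i j, fun k => hle k j, fun l => ?_, fun ξ => ?_⟩
  · rw [abs_div, div_le_one hb]; exact hij i l
  · have hcoord : ∀ l, |(Bᵀ *ᵥ ξ - ((fun k => B k j) ⬝ᵥ ξ) • (fun l => B i l / B i j)) l| ≤
        9 * (P / R) * n1 ξ := by
      intro l
      have e : (Bᵀ *ᵥ ξ - ((fun k => B k j) ⬝ᵥ ξ) • (fun l => B i l / B i j)) l =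
          (∑ k, (B k l * B i j - B k j * B i l) * ξ k) / B i j := by
        simp [Matrix.mulVec, dotProduct, Fin.sum_univ_three]
        field_simp
        ring
      rw [e, abs_div, div_le_iff₀ hb]
      calc _ ≤ ∑ k, |(B k l * B i j - B k j * B i l) * ξ k| := Finset.abs_sum_le_sum_abs _ _
        _ ≤ ∑ k, P * |ξ k| := Finset.sum_le_sum fun k _ => by
            rw [abs_mul]; exact mul_le_mul_of_nonneg_right (hmin k l) (abs_nonneg _)
        _ = P * n1 ξ := by rw [← Finset.mul_sum, n1_eq_sum]
        _ ≤ P / R * (9 * |B i j|) * n1 ξ := by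
            refine mul_le_mul_of_nonneg_right ?_ (n1_nonneg _)
            rw [div_mul_eq_mul_div, le_div_iff₀ hR]
            exact mul_le_mul_of_nonneg_left hsum hP.le
        _ = _ := by ring
    have h0 := hcoord 0; have h1 := hcoord 1; have h2 := hcoord 2
    rw [n1]; linarith

lemma n1_one : n1 ![1,1,1] = 3 := by simp [n1]; norm_num

/-- Two image points are close once their position along the long direction agrees. -/
lemma exists_position (w : List (Fin 3)) (a b : Fin 3) (hab : a ≠ b) :
    ∃ lam : (Fin 3 → ℝ) → ℝ, ∀ x ∈ Sx, |lam x| ≤ 300 * (ns (Aw w)⁻¹ / ns (Aw w) ^ 2) ∧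
      ∀ y ∈ Sx, |lam x - lam y| ≤ 1 / (ns (Aw w) * ns (Aw w)⁻¹) →
        n1 (cv w (cv [a,b] x) - cv w (cv [a,b] y)) ≤ 20000 / (ns (Aw w) * ns (Aw w)⁻¹) := by
  obtain ⟨p, r, hp, hr, hpr⟩ := inv_transpose_approx w
  have hP := ns_Aw_pos w
  have hR := ns_inv_pos w
  set P := ns (Aw w)
  set R := ns (Aw w)⁻¹
  have hx0 : (![1,0,0] : Fin 3 → ℝ) ∈ Sx := by
    refine ⟨fun i => by fin_cases i <;> simp, by simp [omega3]⟩
  set z0 := cv [a,b] ![1,0,0] with hz0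
  have hz0S : z0 ∈ Sx := cv_mem hx0 _
  set O : (Fin 3 → ℝ) → ℝ := fun x => omega3 (Aw w *ᵥ (cv [a,b] x)) with hO
  have hOge : ∀ x ∈ Sx, P / 10 ≤ O x := by
    intro x hx
    have h := cv_pair_ge a b hab hx
    have := omega_ge_two w (cv_mem hx [a,b]).1 (by norm_num : (0:ℝ) ≤ 1/5) a b hab h.1 h.2
    simp only [hO]; linarith
  have hOpos : ∀ x ∈ Sx, 0 < O x := fun x hx => by linarith [hOge x hx]
  have hcc : ∀ x ∈ Sx, (O x)⁻¹ * (O ![1,0,0])⁻¹ ≤ 100 / P ^ 2 := by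
    intro x hx
    have h1 : (O x)⁻¹ ≤ 10 / P := by
      rw [← inv_div]; exact inv_anti₀ (by positivity) (hOge x hx)
    have h2 : (O ![1,0,0])⁻¹ ≤ 10 / P := by
      rw [← inv_div]; exact inv_anti₀ (by positivity) (hOge _ hx0)
    calc _ ≤ 10 / P * (10 / P) := mul_le_mul h1 h2 (inv_nonneg.2 (hOpos _ hx0).le) (by positivity)
      _ = _ := by field_simp; norm_num
  have hcc0 : ∀ x ∈ Sx, 0 ≤ (O x)⁻¹ * (O ![1,0,0])⁻¹ := fun x hx =>
    mul_nonneg (inv_nonneg.2 (hOpos x hx).le) (inv_nonneg.2 (hOpos _ hx0).le)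
  have hxi : ∀ x ∈ Sx, n1 (cv [a,b] x ⨯₃ z0) ≤ 1 := by
    intro x hx
    refine (n1_cross _ _).trans ?_
    rw [n1_Sx (cv_mem hx _), n1_Sx hz0S, one_mul]
  set lam : (Fin 3 → ℝ) → ℝ := fun x =>
    ((O x)⁻¹ * (O ![1,0,0])⁻¹) * (p ⬝ᵥ (cv [a,b] x ⨯₃ z0)) with hlam
  -- the error term
  set err : (Fin 3 → ℝ) → (Fin 3 → ℝ) := fun x =>
    cv w (cv [a,b] x) ⨯₃ cv w z0 - lam x • r with herr
  have herr_le : ∀ x ∈ Sx, n1 (err x) ≤ 2700 / (P * R) := by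
    intro x hx
    have e : err x = ((O x)⁻¹ * (O ![1,0,0])⁻¹) •
        ((Aw w)⁻¹ᵀ *ᵥ (cv [a,b] x ⨯₃ z0) - (p ⬝ᵥ (cv [a,b] x ⨯₃ z0)) • r) := by
      simp only [herr, hlam]
      rw [cross_cv, smul_sub, smul_smul]
    rw [e, n1_smul, abs_of_nonneg (hcc0 x hx)]
    calc _ ≤ 100 / P ^ 2 * (27 * (P / R) * 1) := by
          refine mul_le_mul (hcc x hx) ((hpr _).trans ?_) (n1_nonneg _) (by positivity)
          exact mul_le_mul_of_nonneg_left (hxi x hx) (by positivity)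
      _ = _ := by field_simp; norm_num
  have hdecomp : ∀ x ∈ Sx, cv w z0 - cv w (cv [a,b] x) =
      (lam x • r + err x) ⨯₃ ![1,1,1] := by
    intro x hx
    simp only [herr, add_sub_cancel]
    have hx1 := (cv_mem (cv_mem hx [a,b]) w).2
    have hx2 := (cv_mem hz0S w).2
    generalize cv w (cv [a,b] x) = u at *
    generalize cv w z0 = v at *
    simp only [omega3] at hx1 hx2
    ext i
    fin_cases i <;> simp [cross_apply]
    · linear_combination (u 0) * hx2 - (v 0) * hx1
    · linear_combination (u 1) * hx2 - (v 1) * hx1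
    · linear_combination (u 2) * hx2 - (v 2) * hx1
  refine ⟨lam, fun x hx => ⟨?_, fun y hy hxy => ?_⟩⟩
  · simp only [hlam]
    rw [abs_mul, abs_of_nonneg (hcc0 x hx)]
    have hpn : n1 p ≤ 3 * R := by rw [n1]; linarith [hp 0, hp 1, hp 2]
    calc _ ≤ 100 / P ^ 2 * (3 * R * 1) := by
          refine mul_le_mul (hcc x hx) ((abs_dot_le _ _).trans ?_) (abs_nonneg _) (by positivity)
          exact mul_le_mul hpn (hxi x hx) (n1_nonneg _) (by positivity)
      _ = _ := by ring
  · have e : cv w (cv [a,b] x) - cv w (cv [a,b] y) =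
        ((lam y - lam x) • r + (err y - err x)) ⨯₃ ![1,1,1] := by
      have h1 := hdecomp x hx
      have h2 := hdecomp y hy
      have : cv w (cv [a,b] x) - cv w (cv [a,b] y) = (cv w z0 - cv w (cv [a,b] y)) -
        (cv w z0 - cv w (cv [a,b] x)) := by abel
      rw [this, h1, h2, ← LinearMap.map_sub₂]
      congr 2
      rw [sub_smul]; abel_nf
    rw [e]
    have hrn : n1 r ≤ 3 := by rw [n1]; linarith [hr 0, hr 1, hr 2]
    calc _ ≤ n1 ((lam y - lam x) • r + (err y - err x)) * n1 ![1,1,1] := n1_cross _ _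
      _ ≤ (1 / (P * R) * 3 + (2700 / (P * R) + 2700 / (P * R))) * 3 := by
        rw [n1_one]
        refine mul_le_mul_of_nonneg_right ((n1_add _ _).trans (add_le_add ?_ ((n1_sub _ _).trans
          (add_le_add (herr_le y hy) (herr_le x hx))))) (by norm_num)
        rw [n1_smul, abs_sub_comm]
        exact mul_le_mul hxy hrn (n1_nonneg _) (by positivity)
      _ ≤ _ := by
        have : 0 < 1 / (P * R) := by positivity
        have e1 : 2700 / (P * R) = 2700 * (1 / (P * R)) := by ring
        have e2 : 20000 / (P * R) = 20000 * (1 / (P * R)) := by ring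
        rw [e1, e2]; linarith

/-- Covering a cylinder efficiently by sets of diameter `≍ 1/(PR)`. -/
lemma exists_cover (w : List (Fin 3)) (a b : Fin 3) (hab : a ≠ b) :
    ∃ (n : ℕ) (t : Fin n → Set E3), (n : ℝ) ≤ 602 * (ns (Aw w)⁻¹ ^ 2 / ns (Aw w)) ∧
      (∀ k, Metric.ediam (t k) ≤ ENNReal.ofReal (20000 / (ns (Aw w) * ns (Aw w)⁻¹))) ∧
      fmap (w ++ [a,b]) '' simplex ⊆ ⋃ k, t k := by
  obtain ⟨lam, hlam⟩ := exists_position w a b hab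
  have hP := ns_Aw_pos w
  have hR := ns_inv_pos w
  have hPR := ns_le_ns_inv_sq w
  set P := ns (Aw w)
  set R := ns (Aw w)⁻¹
  have hQ : 1 ≤ R ^ 2 / P := by rw [le_div_iff₀ hP]; linarith
  set Q := R ^ 2 / P with hQd
  refine ⟨⌊600 * Q⌋₊ + 1, fun k => {z | ∃ x : E3, x ∈ simplex ∧ fmap (w ++ [a,b]) x = z ∧
    ⌊(lam (ofE x) + 300 * (R / P ^ 2)) * (P * R)⌋₊ = k.1}, ?_, ?_, ?_⟩
  · push_cast
    have := Nat.floor_le (show 0 ≤ 600 * Q by positivity)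
    linarith
  · intro k
    refine Metric.ediam_le ?_
    rintro _ ⟨x, hx, rfl, hkx⟩ _ ⟨y, hy, rfl, hky⟩
    rw [edist_dist]
    refine ENNReal.ofReal_le_ofReal ((dist_le_n1 _ _).trans ?_)
    simp only [fmap_eq, ofE_toE]
    rw [cv_append hx, cv_append hy]
    refine ((hlam _ hx).2 _ hy ?_)
    have bx := (abs_le.1 (hlam _ hx).1).1
    have by' := (abs_le.1 (hlam _ hy).1).1
    have nx : 0 ≤ (lam (ofE x) + 300 * (R / P ^ 2)) * (P * R) :=
      mul_nonneg (by linarith) (by positivity)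
    have ny : 0 ≤ (lam (ofE y) + 300 * (R / P ^ 2)) * (P * R) :=
      mul_nonneg (by linarith) (by positivity)
    have fx1 := Nat.floor_le nx
    have fx2 := Nat.lt_floor_add_one ((lam (ofE x) + 300 * (R / P ^ 2)) * (P * R))
    have fy1 := Nat.floor_le ny
    have fy2 := Nat.lt_floor_add_one ((lam (ofE y) + 300 * (R / P ^ 2)) * (P * R))
    rw [hkx] at fx1 fx2
    rw [hky] at fy1 fy2
    rw [le_div_iff₀ (by positivity), ← abs_of_pos (show 0 < P * R by positivity), ← abs_mul, abs_le]
    constructor <;> nlinarith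
  · rintro _ ⟨x, hx, rfl⟩
    have bx := (abs_le.1 (hlam _ hx).1).2
    have hk : ⌊(lam (ofE x) + 300 * (R / P ^ 2)) * (P * R)⌋₊ < ⌊600 * Q⌋₊ + 1 := by
      rw [Nat.lt_succ_iff]
      refine Nat.floor_le_floor ?_
      calc _ ≤ (300 * (R / P ^ 2) + 300 * (R / P ^ 2)) * (P * R) :=
            mul_le_mul_of_nonneg_right (by linarith) (by positivity)
        _ = _ := by rw [hQd]; field_simp; norm_num
    exact Set.mem_iUnion.2 ⟨⟨_, hk⟩, x, hx, rfl, rfl⟩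

/-! ### The upper bound: the Hausdorff sum -/

lemma rep_mulVec (k : ℕ) (c : Fin 3) (x : Fin 3 → ℝ) :
    (∀ i, i ≠ c → (Aw (List.replicate k c) *ᵥ x) i = x i) ∧
      omega3 (Aw (List.replicate k c) *ᵥ x) = omega3 x + k * (omega3 x - x c) := by
  induction k with
  | zero => simp [Aw_nil]
  | succ k ih =>
    rw [List.replicate_succ, Aw_cons, ← Matrix.mulVec_mulVec]
    obtain ⟨h1, h2⟩ := ih
    generalize Aw (List.replicate k c) *ᵥ x = y at *
    have a0 := h1 0; have a1 := h1 1; have a2 := h1 2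
    push_cast
    simp only [omega3] at *
    fin_cases c <;> simp [A, Matrix.mulVec, dotProduct, Fin.sum_univ_three] at * <;>
      refine ⟨fun i hi => ?_, ?_⟩ <;> first | linarith | skip
    all_goals fin_cases i <;> simp at * <;> linarith

lemma cv_inj_form {x : Fin 3 → ℝ} (hx : x ∈ Sx) (u : List (Fin 3)) :
    x = (omega3 ((Aw u)⁻¹ *ᵥ cv u x))⁻¹ • ((Aw u)⁻¹ *ᵥ cv u x) := by
  have h := omega_pos hx u
  rw [Aw_inv_cv, omega3_smul, hx.2, smul_smul, mul_one, inv_inv, mul_inv_cancel₀ h.ne', one_smul]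

/-- A point in all cylinders `u c^k` is the image of a vertex. -/
lemma eq_vertex (u : List (Fin 3)) (c : Fin 3) (x : E3)
    (h : ∀ k : ℕ, x ∈ fmap (u ++ List.replicate k c) '' simplex) :
    x = fmap u (toE (Pi.single c 1)) := by
  set y : Fin 3 → ℝ := (omega3 ((Aw u)⁻¹ *ᵥ ofE x))⁻¹ • ((Aw u)⁻¹ *ᵥ ofE x) with hy
  have hk : ∀ k : ℕ, ∃ z ∈ Sx, y = cv (List.replicate k c) z ∧ ofE x = cv u y := by
    intro k
    obtain ⟨z, hz, rfl⟩ := h k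
    have hz' : ofE z ∈ Sx := hz
    have e : ofE (fmap (u ++ List.replicate k c) z) = cv u (cv (List.replicate k c) (ofE z)) := by
      rw [fmap_eq, ofE_toE, cv_append hz']
    have e2 : y = cv (List.replicate k c) (ofE z) := by
      rw [hy, e]; exact (cv_inj_form (cv_mem hz' _) u).symm
    exact ⟨ofE z, hz', e2, by rw [e, e2]⟩
  have hyS : y ∈ Sx := by
    obtain ⟨z, hz, e, -⟩ := hk 0
    rw [e]; exact cv_mem hz _
  have hzero : ∀ i, i ≠ c → y i = 0 := by
    intro i hi
    by_contra hne
    have hpos : 0 < y i := lt_of_le_of_ne (hyS.1 i) (Ne.symm hne)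
    obtain ⟨k, hk1⟩ := exists_nat_gt (1 / y i)
    obtain ⟨z, hz, e, -⟩ := hk k
    have h1 := rep_mulVec k c z
    have hom := omega_pos hz (List.replicate k c)
    have e3 : y i * omega3 (Aw (List.replicate k c) *ᵥ z) = z i := by
      rw [e, cv, Pi.smul_apply, smul_eq_mul, h1.1 i hi]; field_simp
    rw [h1.2, hz.2] at e3
    have hzi := hz.1 i
    have hle : z i ≤ 1 - z c := by
      have := hz.2
      have g0 := hz.1 0; have g1 := hz.1 1; have g2 := hz.1 2
      simp only [omega3] at this
      fin_cases i <;> fin_cases c <;> simp at hi ⊢ <;> linarith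
    rw [div_lt_iff₀ hpos] at hk1
    have h5 : y i * (k * z i) ≤ y i * (k * (1 - z c)) := by gcongr
    nlinarith
  have hyc : y = Pi.single c 1 := by
    have := hyS.2
    have g0 := hzero 0; have g1 := hzero 1; have g2 := hzero 2
    simp only [omega3] at this
    ext i
    fin_cases c <;> fin_cases i <;> simp at * <;> linarith
  obtain ⟨z, hz, e, e2⟩ := hk 0
  rw [fmap_eq, ofE_toE, ← hyc, ← e2, toE_ofE]

lemma eq_replicate_of_no_change : ∀ (l : List (Fin 3)),
    (∀ l1 a b l2, l = l1 ++ a :: b :: l2 → a = b) → ∃ c, l = List.replicate l.length c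
  | [], _ => ⟨0, rfl⟩
  | [a], _ => ⟨a, rfl⟩
  | a :: b :: l, h => by
    obtain ⟨c, hc⟩ := eq_replicate_of_no_change (b :: l) fun l1 x y l2 e =>
      h (a :: l1) x y l2 (by rw [e]; rfl)
    have hab : a = b := h [] a b l rfl
    have hbc : b = c := by
      rw [List.length_cons, List.replicate_succ] at hc
      exact (List.cons.inj hc).1
    refine ⟨c, ?_⟩
    rw [hab, List.length_cons, List.replicate_succ, ← hc, ← hbc]

lemma image_append_subset (u v : List (Fin 3)) :
    fmap (u ++ v) '' simplex ⊆ fmap u '' simplex := by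
  rintro _ ⟨x, hx, rfl⟩
  have hx' : ofE x ∈ Sx := hx
  refine ⟨toE (cv v (ofE x)), cv_mem hx' v, ?_⟩
  rw [fmap_eq, fmap_eq, ofE_toE, cv_append hx']

/-- A point of the gasket whose codings are not eventually constant lies in arbitrarily deep cylinders
ending in two distinct letters; the remaining points are images of vertices. -/
lemma gasket_subset (m : ℕ) : gasket ⊆
    (Set.range fun q : List (Fin 3) × Fin 3 => fmap q.1 (toE (Pi.single q.2 1))) ∪
    {x | ∃ w a b, m ≤ List.length w ∧ a ≠ b ∧ x ∈ fmap (w ++ [a,b]) '' simplex} := by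
  intro x hx
  by_contra hcon
  rw [Set.mem_union, not_or] at hcon
  obtain ⟨h1, h2⟩ := hcon
  have hx' : ∀ n : ℕ, ∃ w : List (Fin 3), w.length = n + 1 ∧ x ∈ fmap w '' simplex := by
    simpa [gasket] using hx
  have h3 : ∀ (u : List (Fin 3)) (c : Fin 3), ∃ k : ℕ,
      x ∉ fmap (u ++ List.replicate k c) '' simplex := by
    intro u c
    by_contra! h
    exact h1 ⟨(u, c), (eq_vertex u c x h).symm⟩
  choose k hk using h3
  have hfin : {u : List (Fin 3) | u.length = m}.Finite := List.finite_length_eq _ _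
  obtain ⟨K, hK⟩ := (hfin.image fun u => k u 0 + k u 1 + k u 2).bddAbove
  obtain ⟨w, hw, hxw⟩ := hx' (m + K)
  have hrep : ∃ c, w.drop m = List.replicate (w.drop m).length c := by
    refine eq_replicate_of_no_change _ fun l1 a b l2 e => ?_
    by_contra hab
    refine h2 ⟨w.take m ++ l1, a, b, ?_, hab, ?_⟩
    · rw [List.length_append, List.length_take]; omega
    · have : w = (w.take m ++ l1 ++ [a,b]) ++ l2 := by
        conv_lhs => rw [← List.take_append_drop m w, e]
        simp
      rw [this] at hxw
      exact image_append_subset _ _ hxw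
  obtain ⟨c, hc⟩ := hrep
  have hlen : (w.take m).length = m := by rw [List.length_take]; omega
  have hkle : k (w.take m) c ≤ (w.drop m).length := by
    have h5 := hK (Set.mem_image_of_mem _ (show w.take m ∈ {u : List (Fin 3) | u.length = m} from hlen))
    have h6 : k (w.take m) c ≤ k (w.take m) 0 + k (w.take m) 1 + k (w.take m) 2 := by
      fin_cases c <;> simp <;> omega
    rw [List.length_drop]
    omega
  refine hk (w.take m) c ?_
  obtain ⟨d, hd⟩ := Nat.exists_eq_add_of_le hkle
  have : w = (w.take m ++ List.replicate (k (w.take m) c) c) ++ List.replicate d c := by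
    conv_lhs => rw [← List.take_append_drop m w, hc, hd, ← List.replicate_append_replicate]
    rw [List.append_assoc]
  rw [this] at hxw
  exact image_append_subset _ _ hxw

lemma length_le_ns (w : List (Fin 3)) : (w.length : ℝ) ≤ ns (Aw w) := by
  have key : ∀ w : List (Fin 3), (∀ i, 1 ≤ (Aw w *ᵥ ![1,1,1]) i) ∧
      (w.length : ℝ) ≤ omega3 (Aw w *ᵥ ![1,1,1]) := by
    intro w
    induction w with
    | nil => refine ⟨fun i => ?_, ?_⟩
             · fin_cases i <;> simp [Aw_nil]
             · simp [Aw_nil, omega3]; norm_num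
    | cons a w ih =>
      rw [Aw_cons, ← Matrix.mulVec_mulVec]
      obtain ⟨h1, h2⟩ := ih
      generalize Aw w *ᵥ ![1,1,1] = y at *
      have g0 := h1 0; have g1 := h1 1; have g2 := h1 2
      simp only [omega3] at *
      push_cast [List.length_cons]
      refine ⟨fun i => ?_, ?_⟩
      · fin_cases a <;> fin_cases i <;>
          simp [A, Matrix.mulVec, dotProduct, Fin.sum_univ_three] <;> linarith
      · fin_cases a <;>
          simp [A, Matrix.mulVec, dotProduct, Fin.sum_univ_three] <;> linarith
  rw [ns_Aw_eq]; exact (key w).2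

/-- The contribution to the Hausdorff sum of the cover of one cylinder. -/
lemma cover_sum (s : ℝ) (w : List (Fin 3)) (n : ℕ)
    (hn : (n : ℝ) ≤ 602 * (ns (Aw w)⁻¹ ^ 2 / ns (Aw w))) :
    (n : ℝ) * (20000 / (ns (Aw w) * ns (Aw w)⁻¹)) ^ s ≤ 602 * 20000 ^ s * Phi s w := by
  have hP := ns_Aw_pos w
  have hR := ns_inv_pos w
  rw [Phi]
  generalize ns (Aw w) = P at *
  generalize ns (Aw w)⁻¹ = R at *
  have e1 : R ^ (2 - s) = R ^ 2 * (R ^ s)⁻¹ := by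
    rw [← Real.rpow_neg hR.le, ← Real.rpow_natCast, ← Real.rpow_add hR]; norm_num [sub_eq_add_neg]
  have e2 : P ^ (-1 - s) = P⁻¹ * (P ^ s)⁻¹ := by
    rw [← Real.rpow_neg hP.le, ← Real.rpow_neg_one, ← Real.rpow_add hP]; norm_num [sub_eq_add_neg]
  rw [Real.div_rpow (by norm_num) (by positivity), Real.mul_rpow hP.le hR.le, e1, e2]
  calc _ ≤ 602 * (R ^ 2 / P) * (20000 ^ s / (P ^ s * R ^ s)) :=
        mul_le_mul_of_nonneg_right hn (by positivity)
    _ = _ := by field_simp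

/-- Convergence of the affinity series bounds the dimension from above. The countably many images of
vertices are set aside, since they need not lie in cylinders ending in two distinct letters. -/
theorem dimH_gasket_le (s : ℝ) (hs : 0 < s) (hsum : Summable (Phi s)) :
    dimH gasket ≤ ENNReal.ofReal s := by
  set Q : Set E3 := Set.range fun q : List (Fin 3) × Fin 3 => fmap q.1 (toE (Pi.single q.2 1))
  have hQ : Q.Countable := Set.countable_range _
  set Y : Set E3 := gasket \ Q
  have hsub : gasket ⊆ Q ∪ Y := fun x hx => by
    by_cases h : x ∈ Q
    · exact Or.inl h
    · exact Or.inr ⟨hx, h⟩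
  have hY : dimH Y ≤ ENNReal.ofReal s := by
    borelize E3
    have hY2 : μH[s] Y ≤ ENNReal.ofReal (∑' w, 9 * (602 * 20000 ^ s * Phi s w)) := by
      choose n t hn ht hcov using exists_cover
      let ι := Σ w : List (Fin 3), Σ ab : {ab : Fin 3 × Fin 3 // ab.1 ≠ ab.2},
        Fin (n w ab.1.1 ab.1.2 ab.2)
      let T : ι → Set E3 := fun i => t i.1 i.2.1.1.1 i.2.1.1.2 i.2.1.2 i.2.2
      let ιm : ℕ → Type := fun m => {i : ι // m ≤ i.1.length}
      -- For each `m`, the covers of the cylinders `w a b` with `|w| ≥ m` cover `Y`.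
      have h := Measure.hausdorffMeasure_le_liminf_tsum (β := ℕ) (ι := ιm) s Y
        (l := Filter.atTop) (fun m => ENNReal.ofReal (20000 / m)) (by
          rw [← ENNReal.ofReal_zero]
          exact ENNReal.tendsto_ofReal (tendsto_const_div_atTop_nhds_zero_nat _))
        (fun m i => T i.1) (by
          filter_upwards [Filter.eventually_gt_atTop 0] with m hm i
          refine (ht _ _ _ _ _).trans (ENNReal.ofReal_le_ofReal ?_)
          have h1 : (m : ℝ) ≤ ns (Aw i.1.1) :=
            (Nat.cast_le.2 i.2).trans (length_le_ns _)
          have h2 := one_le_ns_inv i.1.1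
          have hm' : (0:ℝ) < m := by exact_mod_cast hm
          refine div_le_div_of_nonneg_left (by norm_num) hm' ?_
          nlinarith) (by
          refine Filter.Eventually.of_forall fun m x hx => ?_
          rcases gasket_subset m hx.1 with h | ⟨w, a, b, hm, hab, hxw⟩
          · exact absurd h hx.2
          · obtain ⟨k, hk⟩ := Set.mem_iUnion.1 (hcov w a b hab hxw)
            exact Set.mem_iUnion.2 ⟨⟨⟨w, ⟨(a, b), hab⟩, k⟩, hm⟩, hk⟩)
      refine h.trans ?_
      have hterm : ∀ m, ∑' i : ιm m, Metric.ediam (T i.1) ^ s ≤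
          ENNReal.ofReal (∑' w, 9 * (602 * 20000 ^ s * Phi s w)) := by
        intro m
        calc ∑' i : ιm m, Metric.ediam (T i.1) ^ s ≤ ∑' i : ι, Metric.ediam (T i) ^ s :=
              ENNReal.tsum_comp_le_tsum_of_injective Subtype.val_injective _
          _ = ∑' w : List (Fin 3), ∑' ab : {ab : Fin 3 × Fin 3 // ab.1 ≠ ab.2},
                ∑' k : Fin (n w ab.1.1 ab.1.2 ab.2), Metric.ediam (T ⟨w, ab, k⟩) ^ s := by
              rw [ENNReal.tsum_sigma']
              refine tsum_congr fun w => ?_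
              rw [ENNReal.tsum_sigma']
          _ ≤ ∑' w : List (Fin 3), ENNReal.ofReal (9 * (602 * 20000 ^ s * Phi s w)) := by
              refine ENNReal.tsum_le_tsum fun w => ?_
              have hin : ∀ ab : {ab : Fin 3 × Fin 3 // ab.1 ≠ ab.2},
                  ∑' k : Fin (n w ab.1.1 ab.1.2 ab.2), Metric.ediam (T ⟨w, ab, k⟩) ^ s ≤
                  ENNReal.ofReal (602 * 20000 ^ s * Phi s w) := by
                intro ab
                rw [tsum_fintype]
                calc _ ≤ ∑ _k : Fin (n w ab.1.1 ab.1.2 ab.2),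
                      ENNReal.ofReal ((20000 / (ns (Aw w) * ns (Aw w)⁻¹)) ^ s) := by
                      refine Finset.sum_le_sum fun k _ => ?_
                      rw [← ENNReal.ofReal_rpow_of_pos (div_pos (by norm_num)
                        (mul_pos (ns_Aw_pos w) (ns_inv_pos w)))]
                      exact ENNReal.rpow_le_rpow (ht _ _ _ _ _) hs.le
                  _ ≤ _ := by
                      rw [Finset.sum_const, Finset.card_univ, Fintype.card_fin, nsmul_eq_mul,
                        ← ENNReal.ofReal_natCast, ← ENNReal.ofReal_mul (by positivity)]
                      exact ENNReal.ofReal_le_ofReal (cover_sum s w _ (hn _ _ _ _))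
              rw [tsum_fintype]
              have hPhi := Phi_pos s w
              calc _ ≤ ∑ _ab : {ab : Fin 3 × Fin 3 // ab.1 ≠ ab.2},
                    ENNReal.ofReal (602 * 20000 ^ s * Phi s w) :=
                    Finset.sum_le_sum fun ab _ => hin ab
                _ ≤ _ := by
                    rw [Finset.sum_const, Finset.card_univ, nsmul_eq_mul,
                      ← ENNReal.ofReal_natCast, ← ENNReal.ofReal_mul (by positivity)]
                    refine ENNReal.ofReal_le_ofReal ?_
                    refine mul_le_mul_of_nonneg_right ?_ (by positivity)
                    have : Fintype.card {ab : Fin 3 × Fin 3 // ab.1 ≠ ab.2} ≤ 9 := by decide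
                    exact_mod_cast this
          _ = _ := by
              rw [ENNReal.ofReal_tsum_of_nonneg (fun w => ?_) ((hsum.mul_left _).mul_left _)]
              have hPhi := Phi_pos s w
              positivity
      refine Filter.liminf_le_of_le (by isBoundedDefault) fun b hb => ?_
      obtain ⟨m, hm⟩ := hb.exists
      exact hm.trans (hterm m)
    have hfin : μH[((⟨s, hs.le⟩ : NNReal) : ℝ)] Y ≠ ⊤ :=
      (hY2.trans_lt ENNReal.ofReal_lt_top).ne
    have := dimH_le_of_hausdorffMeasure_ne_top hfin
    rwa [ENNReal.ofReal, Real.toNNReal_of_nonneg hs.le]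
  calc dimH gasket ≤ dimH (Q ∪ Y) := dimH_mono hsub
    _ = max (dimH Q) (dimH Y) := dimH_union _ _
    _ ≤ _ := by rw [hQ.dimH_zero]; exact max_le (bot_le) hY

/-! ### Connecting words -/

lemma A_inv_eq (i : Fin 3) : (A i)⁻¹ = (1 + 1 : M3) - A i := by
  have h : (A i)⁻¹ = adjugate (A i) := by rw [Matrix.inv_def, det_A]; simp
  rw [h]
  ext a b
  fin_cases i <;> fin_cases a <;> fin_cases b <;>
    simp [A, adjugate_fin_three, Matrix.add_apply, Matrix.one_apply] <;> norm_num

/-- The inverses of the matrices of the nine words of length two span the space of `3 × 3` matrices;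
hence one of the associated bilinear forms is large at any given pair of vectors. -/
lemma exists_connector_two (a b : Fin 3 → ℝ) :
    ∃ i j : Fin 3, n1 a * n1 b ≤ 27 * |a ⬝ᵥ ((Aw [i,j])⁻¹ *ᵥ b)| := by
  by_contra hcon
  push Not at hcon
  have key : ∀ i j : Fin 3, |a ⬝ᵥ ((Aw [i,j])⁻¹ *ᵥ b)| ≤ n1 a * n1 b / 27 ∧
      |a ⬝ᵥ ((Aw [i,j])⁻¹ *ᵥ b)| < n1 a * n1 b / 27 := fun i j =>
    ⟨by linarith [hcon i j], by linarith [hcon i j]⟩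
  set T := n1 a * n1 b / 27 with hT
  have e : ∀ i j : Fin 3, (Aw [i,j])⁻¹ = ((1 + 1 : M3) - A j) * ((1 + 1 : M3) - A i) := fun i j => by
    rw [show [i,j] = [i] ++ [j] from rfl, inv_Aw_append, Aw_singleton, Aw_singleton, A_inv_eq,
      A_inv_eq]
  have hTpos : 0 < T := (abs_nonneg _).trans_lt (key 0 0).2
  have f00 := abs_le.1 (key 0 0).1; have f01 := abs_le.1 (key 0 1).1; have f02 := abs_le.1 (key 0 2).1
  have f10 := abs_le.1 (key 1 0).1; have f11 := abs_lt.1 (key 1 1).2; have f12 := abs_le.1 (key 1 2).1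
  have f20 := abs_le.1 (key 2 0).1; have f21 := abs_le.1 (key 2 1).1; have f22 := abs_le.1 (key 2 2).1
  clear key hcon
  clear_value T
  simp only [e, A, mulVec, dotProduct, mul_apply, Fin.sum_univ_three] at f00 f01 f02 f10 f11 f12 f20 f21 f22
  simp [Matrix.one_apply, Matrix.add_apply] at f00 f01 f02 f10 f11 f12 f20 f21 f22
  ring_nf at f00 f01 f02 f10 f11 f12 f20 f21 f22
  have g : ∀ k l : Fin 3, |a k| * |b l| < 3 * T := by
    intro k l
    rw [← abs_mul, abs_lt]
    fin_cases k <;> fin_cases l <;> simp only [Fin.zero_eta, Fin.mk_one, Fin.reduceFinMk] <;>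
      constructor <;> linarith
  have : n1 a * n1 b < 27 * T := by
    simp only [n1]
    nlinarith [g 0 0, g 0 1, g 0 2, g 1 0, g 1 1, g 1 2, g 2 0, g 2 1, g 2 2]
  rw [hT] at this
  linarith

lemma ns_A (i : Fin 3) : ns (A i) = 5 := by
  fin_cases i <;> simp [ns, A, Fin.sum_univ_three] <;> norm_num

lemma n1_le_of_mul (g h : M3) (hgh : g * h = 1) (v : Fin 3 → ℝ) : n1 v ≤ ns g * n1 (h *ᵥ v) := by
  have := n1_mulVec g (h *ᵥ v)
  rwa [Matrix.mulVec_mulVec, hgh, Matrix.one_mulVec] at this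

/-- Connecting words: three letters, the last one being `2`. -/
lemma exists_connector (a b : Fin 3 → ℝ) :
    ∃ i j : Fin 3, n1 a * n1 b ≤ 135 * |a ⬝ᵥ ((Aw [i,j,2])⁻¹ *ᵥ b)| := by
  obtain ⟨i, j, h⟩ := exists_connector_two ((A 2)⁻¹ᵀ *ᵥ a) b
  refine ⟨i, j, ?_⟩
  have e : a ⬝ᵥ ((Aw [i,j,2])⁻¹ *ᵥ b) = ((A 2)⁻¹ᵀ *ᵥ a) ⬝ᵥ ((Aw [i,j])⁻¹ *ᵥ b) := by
    rw [show [i,j,2] = [i,j] ++ [2] from rfl, inv_Aw_append, Aw_singleton, ← Matrix.mulVec_mulVec,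
      Matrix.mulVec_transpose, ← Matrix.dotProduct_mulVec]
  rw [e]
  have h2 : n1 a ≤ 5 * n1 ((A 2)⁻¹ᵀ *ᵥ a) := by
    have := n1_le_of_mul (A 2)ᵀ (A 2)⁻¹ᵀ (by
      rw [← Matrix.transpose_mul, Matrix.nonsing_inv_mul _ (by rw [det_A]; exact isUnit_one),
        Matrix.transpose_one]) a
    rwa [ns_transpose, ns_A] at this
  nlinarith [n1_nonneg b]

/-! ### Divergence of the affinity series above `3/2` -/

/-- Quasi-multiplicativity of the norm of the inverse, up to a connecting word. -/
lemma exists_connector_inv (w u : List (Fin 3)) :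
    ∃ i j : Fin 3, ns (Aw w)⁻¹ * ns (Aw u)⁻¹ ≤ 1215 * ns (Aw (w ++ [i,j,2] ++ u))⁻¹ := by
  obtain ⟨k, hk⟩ : ∃ k, ns (Aw u)⁻¹ ≤ 3 * n1 (fun l => (Aw u)⁻¹ k l) := by
    by_contra h
    push Not at h
    have e : ns (Aw u)⁻¹ = ∑ k, n1 (fun l => (Aw u)⁻¹ k l) := by
      simp [ns, n1, Fin.sum_univ_three]
    rw [Fin.sum_univ_three] at e
    linarith [h 0, h 1, h 2]
  obtain ⟨l, hl⟩ : ∃ l, ns (Aw w)⁻¹ ≤ 3 * n1 (fun k => (Aw w)⁻¹ k l) := by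
    by_contra h
    push Not at h
    have e : ns (Aw w)⁻¹ = ∑ l, n1 (fun k => (Aw w)⁻¹ k l) := by
      simp [ns, n1, Fin.sum_univ_three]; ring
    rw [Fin.sum_univ_three] at e
    linarith [h 0, h 1, h 2]
  obtain ⟨i, j, hij⟩ := exists_connector (fun l => (Aw u)⁻¹ k l) (fun k => (Aw w)⁻¹ k l)
  refine ⟨i, j, ?_⟩
  have e : (fun l => (Aw u)⁻¹ k l) ⬝ᵥ ((Aw [i,j,2])⁻¹ *ᵥ (fun k => (Aw w)⁻¹ k l)) =
      (Aw (w ++ [i,j,2] ++ u))⁻¹ k l := by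
    rw [inv_Aw_append, inv_Aw_append]; rfl
  rw [e] at hij
  have h3 := abs_le_ns (Aw (w ++ [i,j,2] ++ u))⁻¹ k l
  have h4 := mul_le_mul hl hk (ns_nonneg _) (by linarith [n1_nonneg (fun k => (Aw w)⁻¹ k l)])
  nlinarith

lemma ns_connect_le (w u : List (Fin 3)) (i j : Fin 3) :
    ns (Aw (w ++ [i,j,2] ++ u)) ≤ 125 * (ns (Aw w) * ns (Aw u)) := by
  have h1 := ns_Aw_append_le (w ++ [i,j,2]) u
  have h2 := ns_Aw_append_le w [i,j,2]
  have h3 : ns (Aw [i,j,2]) ≤ 125 := by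
    have a := ns_Aw_append_le [i] [j,2]
    have b := ns_Aw_append_le [j] [2]
    simp only [Aw_singleton, ns_A, List.cons_append, List.nil_append] at a b
    linarith
  have hw := ns_Aw_pos w
  have hu := ns_Aw_pos u
  calc _ ≤ _ := h1
    _ ≤ (ns (Aw w) * 125) * ns (Aw u) := by gcongr; exact h2.trans (by gcongr)
    _ = _ := by ring

/-- Quasi-multiplicativity of `Phi`: inserting a connecting word makes `ns A⁻¹` supermultiplicative,
while `ns A` is always submultiplicative, and the exponents `2 - s ≥ 0` and `-1 - s < 0` have the
right signs. -/
lemma Phi_connect (s : ℝ) (hs : 1 < s) (hs2 : s ≤ 2) (w u : List (Fin 3)) :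
    ∃ i j : Fin 3, (1215 * 125 ^ 3 : ℝ)⁻¹ * (Phi s w * Phi s u) ≤ Phi s (w ++ [i,j,2] ++ u) := by
  obtain ⟨i, j, h⟩ := exists_connector_inv w u
  refine ⟨i, j, ?_⟩
  have h2 := ns_connect_le w u i j
  have hp := ns_Aw_pos (w ++ [i,j,2] ++ u)
  have hr := ns_inv_pos (w ++ [i,j,2] ++ u)
  unfold Phi
  generalize ns (Aw (w ++ [i,j,2] ++ u)) = P at *
  generalize ns (Aw (w ++ [i,j,2] ++ u))⁻¹ = R at *
  have hP1 := ns_Aw_pos w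
  have hP2 := ns_Aw_pos u
  have hR1 := ns_inv_pos w
  have hR2 := ns_inv_pos u
  generalize ns (Aw w) = P1 at *
  generalize ns (Aw u) = P2 at *
  generalize ns (Aw w)⁻¹ = R1 at *
  generalize ns (Aw u)⁻¹ = R2 at *
  have e1 : (1215 : ℝ)⁻¹ * (R1 * R2) ^ (2 - s) ≤ R ^ (2 - s) := by
    calc (1215 : ℝ)⁻¹ * (R1 * R2) ^ (2 - s) ≤ (1215 : ℝ)⁻¹ * (1215 * R) ^ (2 - s) := by
          gcongr
      _ = (1215 : ℝ)⁻¹ * (1215 : ℝ) ^ (2 - s) * R ^ (2 - s) := by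
          rw [Real.mul_rpow (by norm_num) hr.le]; ring
      _ ≤ (1215 : ℝ)⁻¹ * (1215 : ℝ) ^ (1:ℝ) * R ^ (2 - s) := by
          gcongr
          · norm_num
          · linarith
      _ = _ := by rw [Real.rpow_one]; norm_num
  have e2 : ((125 : ℝ) ^ 3)⁻¹ * (P1 * P2) ^ (-1 - s) ≤ P ^ (-1 - s) := by
    calc ((125 : ℝ) ^ 3)⁻¹ * (P1 * P2) ^ (-1 - s)
        = (125 : ℝ) ^ (-3 : ℝ) * (P1 * P2) ^ (-1 - s) := by
          rw [Real.rpow_neg (by norm_num)]; norm_num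
      _ ≤ (125 : ℝ) ^ (-1 - s) * (P1 * P2) ^ (-1 - s) := by
          gcongr
          · norm_num
          · linarith
      _ = (125 * (P1 * P2)) ^ (-1 - s) := by
          rw [Real.mul_rpow (x := 125) (y := P1 * P2) (by norm_num) (by positivity)]
      _ ≤ _ := Real.rpow_le_rpow_of_nonpos hp h2 (by linarith)
  calc _ = ((1215 : ℝ)⁻¹ * (R1 * R2) ^ (2 - s)) * (((125 : ℝ) ^ 3)⁻¹ * (P1 * P2) ^ (-1 - s)) := by
        rw [Real.mul_rpow hR1.le hR2.le, Real.mul_rpow hP1.le hP2.le]; ring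
    _ ≤ _ := by gcongr

lemma two_free_row (u : List (Fin 3)) (hu : ∀ c ∈ u, c ≠ 2) (j : Fin 3) : Aw u 2 j = (1 : M3) 2 j := by
  induction u with
  | nil => rw [Aw_nil]
  | cons a u ih =>
    rw [Aw_cons, mul_apply, Fin.sum_univ_three]
    have ha : a ≠ 2 := hu a (by simp)
    have := ih fun c hc => hu c (by simp [hc])
    fin_cases a
    · simpa [A] using this
    · simpa [A] using this
    · simp at ha

/-- For words in the letters `0`, `1`, the sum of the two column sums of the upper left block bounds
`ns A_u` from above, up to a factor, and `ns A_u⁻¹` from below. -/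
lemma two_free_bounds (u : List (Fin 3)) (hu : ∀ c ∈ u, c ≠ 2) (x y : ℝ)
    (hx : Aw u 0 0 + Aw u 1 0 = x) (hy : Aw u 0 1 + Aw u 1 1 = y) :
    ns (Aw u) ≤ 2 * (x + y) ∧ x + y ≤ ns (Aw u)⁻¹ := by
  have r0 := two_free_row u hu 0
  have r1 := two_free_row u hu 1
  have r2 := two_free_row u hu 2
  simp at r0 r1 r2
  constructor
  · have h := pairs_nonneg u ![1,1,-1] (by simp) (by simp) (by simp)
    simp [mulVec, dotProduct, Fin.sum_univ_three, r0, r1, r2] at h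
    rw [ns_Aw_eq]
    simp [omega3, mulVec, dotProduct, Fin.sum_univ_three, r0, r1, r2]
    have := one_le_Aw_diag u 0
    have := one_le_Aw_diag u 1
    have := Aw_nonneg u 0 1
    have := Aw_nonneg u 1 0
    linarith
  · rw [inv_Aw]
    simp only [ns, Fin.sum_univ_three, adjugate_fin_three]
    simp [r0, r1, r2, abs_of_nonneg (Aw_nonneg u _ _)]
    rw [← hx, ← hy]
    have := abs_nonneg (Aw u 0 1 * Aw u 1 2 - Aw u 0 2 * Aw u 1 1)
    have := abs_nonneg (-(Aw u 0 0 * Aw u 1 2) + Aw u 0 2 * Aw u 1 0)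
    have := abs_nonneg (Aw u 0 0 * Aw u 1 1 - Aw u 0 1 * Aw u 1 0)
    linarith

/-- Every coprime pair consists of the column sums of a word in the letters `0`, `1`, by the
subtractive Euclidean algorithm. -/
lemma exists_two_free (n : ℕ) : ∀ x y : ℕ, x + y = n → 0 < x → 0 < y → Nat.Coprime x y →
    ∃ u : List (Fin 3), (∀ c ∈ u, c ≠ 2) ∧ Aw u 0 0 + Aw u 1 0 = x ∧ Aw u 0 1 + Aw u 1 1 = y := by
  induction n using Nat.strong_induction_on with
  | _ n ih =>
    intro x y hxy hx hy hc
    rcases lt_trichotomy x y with h | h | h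
    · obtain ⟨u, h1, h2, h3⟩ := ih (x + (y - x)) (by omega) x (y - x) rfl hx (by omega)
        ((Nat.coprime_sub_self_right h.le).2 hc)
      refine ⟨u ++ [0], ?_, ?_, ?_⟩
      · intro c hc; simp at hc; rcases hc with hc | rfl
        · exact h1 c hc
        · decide
      · rw [Aw_append, Aw_singleton]; simpa [mul_apply, Fin.sum_univ_three, A] using h2
      · rw [Aw_append, Aw_singleton]; simp [mul_apply, Fin.sum_univ_three, A]
        rw [Nat.cast_sub h.le] at h3; linarith
    · subst h
      have : x = 1 := by simpa using hc
      subst this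
      exact ⟨[], by simp, by simp [Aw_nil], by simp [Aw_nil]⟩
    · obtain ⟨u, h1, h2, h3⟩ := ih ((x - y) + y) (by omega) (x - y) y rfl (by omega) hy
        ((Nat.coprime_sub_self_left h.le).2 hc)
      refine ⟨u ++ [1], ?_, ?_, ?_⟩
      · intro c hc; simp at hc; rcases hc with hc | rfl
        · exact h1 c hc
        · decide
      · rw [Aw_append, Aw_singleton]; simp [mul_apply, Fin.sum_univ_three, A]
        rw [Nat.cast_sub h.le] at h2; linarith
      · rw [Aw_append, Aw_singleton]; simpa [mul_apply, Fin.sum_univ_three, A] using h3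

/-- By `two_free_bounds`, since the exponents `2 - 3/2` and `-1 - 3/2` add up to `-2`. -/
lemma Phi_two_free (u : List (Fin 3)) (hu : ∀ c ∈ u, c ≠ 2) (x y : ℝ)
    (hx : Aw u 0 0 + Aw u 1 0 = x) (hy : Aw u 0 1 + Aw u 1 1 = y) :
    (8 : ℝ)⁻¹ * ((x + y) ^ 2)⁻¹ ≤ Phi (3/2) u := by
  obtain ⟨h1, h2⟩ := two_free_bounds u hu x y hx hy
  have hP := ns_Aw_pos u
  have hR := ns_inv_pos u
  have hxy : 0 < x + y := by linarith
  unfold Phi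
  have e2 : (2:ℝ) ^ (-3:ℝ) ≤ 2 ^ (-1 - 3/2 : ℝ) := by
    apply Real.rpow_le_rpow_of_exponent_le <;> norm_num
  calc (8 : ℝ)⁻¹ * ((x + y) ^ 2)⁻¹ = (x + y) ^ (2 - 3/2 : ℝ) * ((2:ℝ) ^ (-3:ℝ) * (x + y) ^ (-1 - 3/2 : ℝ)) := by
        have : (x + y) ^ (2 - 3/2 : ℝ) * (x + y) ^ (-1 - 3/2 : ℝ) = ((x + y) ^ 2)⁻¹ := by
          rw [← Real.rpow_add hxy, ← Real.rpow_natCast, ← Real.rpow_neg hxy.le]; norm_num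
        rw [mul_left_comm, this, Real.rpow_neg (by norm_num)]; norm_num
    _ ≤ (x + y) ^ (2 - 3/2 : ℝ) * (2 ^ (-1 - 3/2 : ℝ) * (x + y) ^ (-1 - 3/2 : ℝ)) := by gcongr
    _ = (x + y) ^ (2 - 3/2 : ℝ) * (2 * (x + y)) ^ (-1 - 3/2 : ℝ) := by
        rw [Real.mul_rpow (by norm_num) hxy.le]
    _ ≤ _ := by
        apply mul_le_mul
        · apply Real.rpow_le_rpow hxy.le h2; norm_num
        · exact Real.rpow_le_rpow_of_nonpos hP h1 (by norm_num)
        · positivity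
        · positivity

/-- The sums of `Phi (3/2)` over finite sets of words avoiding the letter `2` are unbounded: the
column sums of such words realise all coprime pairs, and `∑ 1/p` diverges. -/
lemma exists_two_free_sum (K : ℝ) : ∃ F : Finset (List (Fin 3)), (∀ u ∈ F, ∀ c ∈ u, c ≠ 2) ∧
    K < ∑ u ∈ F, Phi (3/2) u := by
  have hdiv := Nat.Primes.not_summable_one_div
  have hex : ∃ S : Finset Nat.Primes, 16 * K < ∑ p ∈ S, (1 / (p : ℝ)) := by
    by_contra h
    push Not at h
    exact hdiv (summable_of_sum_le (c := 16 * K) (fun p => by positivity) h)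
  obtain ⟨S, hS⟩ := hex
  have hw : ∀ q : Σ _p : Nat.Primes, ℕ, ∃ u : List (Fin 3), q.2 + 1 < q.1 →
      (∀ c ∈ u, c ≠ 2) ∧ Aw u 0 0 + Aw u 1 0 = ((q.2 + 1 : ℕ) : ℝ) ∧
        Aw u 0 1 + Aw u 1 1 = ((q.1 - (q.2 + 1) : ℕ) : ℝ) := by
    rintro ⟨p, x⟩
    by_cases h : x + 1 < p
    · have hc : Nat.Coprime (x + 1) ((p:ℕ) - (x + 1)) := by
        rw [Nat.coprime_sub_self_right h.le]
        exact (Nat.coprime_comm.1 ((Nat.Prime.coprime_iff_not_dvd p.2).2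
          fun hd => absurd (Nat.le_of_dvd (by omega) hd) (by omega)))
      obtain ⟨u, hu⟩ := exists_two_free _ (x + 1) (p - (x + 1)) rfl (by omega) (by omega) hc
      exact ⟨u, fun _ => hu⟩
    · exact ⟨[], fun h' => absurd h' h⟩
  choose f hf using hw
  set T : Finset (Σ _p : Nat.Primes, ℕ) := S.sigma fun p => Finset.range (p - 1)
  have hT : ∀ q ∈ T, q.2 + 1 < q.1 := by
    rintro ⟨p, x⟩ hq
    have := (Finset.mem_sigma.1 hq).2
    simp at this; simp; omega
  refine ⟨T.image f, ?_, ?_⟩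
  · intro u hu
    obtain ⟨q, hq, rfl⟩ := Finset.mem_image.1 hu
    exact (hf q (hT q hq)).1
  · rw [Finset.sum_image]
    · have hterm : ∀ q ∈ T, (8 : ℝ)⁻¹ * (((q.1 : ℕ) : ℝ) ^ 2)⁻¹ ≤ Phi (3/2) (f q) := by
        intro q hq
        obtain ⟨h1, h2, h3⟩ := hf q (hT q hq)
        have := Phi_two_free _ h1 _ _ h2 h3
        rwa [← Nat.cast_add, Nat.add_sub_cancel' (hT q hq).le] at this
      refine lt_of_lt_of_le ?_ (Finset.sum_le_sum hterm)
      rw [Finset.sum_sigma]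
      simp only [Finset.sum_const, Finset.card_range, nsmul_eq_mul]
      have : ∑ p ∈ S, (1 / ((p:ℕ) : ℝ)) ≤
          ∑ p ∈ S, 16 * ((((p:ℕ) - 1 : ℕ) : ℝ) * ((8 : ℝ)⁻¹ * (((p : ℕ) : ℝ) ^ 2)⁻¹)) := by
        refine Finset.sum_le_sum fun p _ => ?_
        have hp : (2:ℝ) ≤ (p:ℕ) := by exact_mod_cast p.2.two_le
        rw [Nat.cast_sub p.2.one_le]
        push_cast
        have : (0:ℝ) < (p:ℕ) := by linarith
        field_simp
        linarith
      rw [← Finset.mul_sum] at this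
      linarith
    · intro q hq q' hq' e
      obtain ⟨-, h2, h3⟩ := hf q (hT q hq)
      obtain ⟨-, h2', h3'⟩ := hf q' (hT q' hq')
      rw [e] at h2 h3
      have a1 : q.2 + 1 = q'.2 + 1 := by exact_mod_cast h2.symm.trans h2'
      have a2 : (q.1 : ℕ) - (q.2 + 1) = q'.1 - (q'.2 + 1) := by exact_mod_cast h3.symm.trans h3'
      have b1 := hT q hq
      have b2 := hT q' hq'
      obtain ⟨p, x⟩ := q
      obtain ⟨p', x'⟩ := q'
      simp only at a1 a2 b1 b2
      have : x = x' := by omega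
      subst this
      have : (p : ℕ) = p' := by omega
      have : p = p' := Subtype.ext this
      subst this
      rfl

/-- The last occurrence of the letter `2` marks the end of the connecting word. -/
lemma connect_inj (w w' u u' : List (Fin 3)) (i j i' j' : Fin 3) (hu : ∀ c ∈ u, c ≠ 2)
    (hu' : ∀ c ∈ u', c ≠ 2) (h : w ++ [i,j,2] ++ u = w' ++ [i',j',2] ++ u') : w = w' ∧ u = u' := by
  have key : ∀ u u' a a' : List (Fin 3), (∀ c ∈ u, c ≠ 2) → (∀ c ∈ u', c ≠ 2) →
      u ++ 2 :: a = u' ++ 2 :: a' → u = u' := by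
    intro u
    induction u with
    | nil =>
      intro u' a a' _ h2 h
      cases u' with
      | nil => rfl
      | cons b u' => simp at h; exact absurd h.1.symm (h2 b (by simp))
    | cons b u ih =>
      intro u' a a' h1 h2 h
      cases u' with
      | nil => simp at h; exact absurd h.1 (h1 b (by simp))
      | cons b' u' =>
        simp at h
        rw [h.1, ih u' a a' (fun c hc => h1 c (by simp [hc])) (fun c hc => h2 c (by simp [hc])) h.2]
  have hr := congrArg List.reverse h
  simp at hr
  have hu2 := key u.reverse u'.reverse _ _ (by simpa using hu) (by simpa using hu') hr
  have : u = u' := by simpa using hu2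
  subst this
  simp at hr
  exact ⟨hr.2.2, rfl⟩

/-- The affinity exponent exceeds `3/2`. -/
lemma exists_not_summable : ∃ s : ℝ, 3/2 < s ∧ s < 2 ∧ ¬ Summable (Phi s) := by
  obtain ⟨F, hF, hsum⟩ := exists_two_free_sum (1215 * 125 ^ 3)
  have hcont : Continuous fun s : ℝ => ∑ u ∈ F, Phi s u := by
    refine continuous_finsetSum _ fun u _ => ?_
    unfold Phi
    refine Continuous.mul ?_ ?_
    · exact Continuous.rpow continuous_const (by fun_prop) fun x => Or.inl (ns_inv_pos u).ne'
    · exact Continuous.rpow continuous_const (by fun_prop) fun x => Or.inl (ns_Aw_pos u).ne'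
  -- A finite sum depends continuously on `s`, so it remains large slightly above `3/2`.
  have hev := (hcont.tendsto (3/2)).eventually (lt_mem_nhds hsum)
  obtain ⟨ε, hε, hball⟩ := Metric.eventually_nhds_iff.1 hev
  obtain ⟨s, hs1, hs2⟩ := exists_between (show (3/2 : ℝ) < min 2 (3/2 + ε) by
    rw [lt_min_iff]; constructor <;> linarith)
  rw [lt_min_iff] at hs2
  have hs3 : 1215 * 125 ^ 3 < ∑ u ∈ F, Phi s u := hball (by
    rw [Real.dist_eq, abs_of_pos] <;> linarith)
  refine ⟨s, hs1, hs2.1, fun hsm => ?_⟩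
  have hex : ∀ q : List (Fin 3) × List (Fin 3), ∃ i j : Fin 3,
      (1215 * 125 ^ 3 : ℝ)⁻¹ * (Phi s q.1 * Phi s q.2) ≤ Phi s (q.1 ++ [i,j,2] ++ q.2) :=
    fun q => Phi_connect s (by linarith) hs2.1.le q.1 q.2
  choose i j hij using hex
  set e : List (Fin 3) × List (Fin 3) → List (Fin 3) := fun q => q.1 ++ [i q, j q, 2] ++ q.2 with he
  -- Concatenation with `F` maps partial sums injectively into larger sums missing the empty word;
  -- this bounds the total sum by something strictly smaller than itself.
  have hbound : ∀ S : Finset (List (Fin 3)), ∑ w ∈ S, Phi s w ≤ (∑' w, Phi s w) - Phi s [] := by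
    intro S
    have hinj : Set.InjOn e (S ×ˢ F : Finset _) := by
      rintro ⟨w, u⟩ hq ⟨w', u'⟩ hq' h
      have hq := Finset.mem_product.1 hq
      have hq' := Finset.mem_product.1 hq'
      obtain ⟨a, b⟩ := connect_inj _ _ _ _ _ _ _ _ (hF _ hq.2) (hF _ hq'.2) h
      simp at a b
      rw [a, b]
    have hnil : [] ∉ (S ×ˢ F).image e := by
      simp [he]
    have h1 := hsm.sum_le_tsum (insert [] ((S ×ˢ F).image e)) (fun w _ => (Phi_pos s w).le)
    rw [Finset.sum_insert hnil, Finset.sum_image hinj] at h1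
    have h2 : ∑ q ∈ S ×ˢ F, (1215 * 125 ^ 3 : ℝ)⁻¹ * (Phi s q.1 * Phi s q.2) ≤
        ∑ q ∈ S ×ˢ F, Phi s (e q) := Finset.sum_le_sum fun q _ => hij q
    rw [← Finset.mul_sum, Finset.sum_product' (f := fun a b => Phi s a * Phi s b),
      ← Finset.sum_mul_sum] at h2
    have h3 : 0 ≤ ∑ w ∈ S, Phi s w := Finset.sum_nonneg fun w _ => (Phi_pos s w).le
    have h4 : ∑ w ∈ S, Phi s w ≤
        (1215 * 125 ^ 3 : ℝ)⁻¹ * ((∑ w ∈ S, Phi s w) * ∑ u ∈ F, Phi s u) := by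
      rw [inv_mul_eq_div, le_div_iff₀ (by norm_num)]
      gcongr
    linarith
  have := hsm.tsum_le_of_sum_le hbound
  linarith [Phi_pos s []]

/-! ### Gaussian kernels -/

/-- The (unnormalised) Gaussian kernel of variance `τ`. -/
noncomputable def gk (τ s : ℝ) : ℝ := Real.exp (-s ^ 2 / (2 * τ)) / Real.sqrt τ

lemma gk_nonneg (τ s : ℝ) : 0 ≤ gk τ s := by unfold gk; positivity

lemma gk_le (τ s : ℝ) (hτ : 0 < τ) : gk τ s ≤ 1 / Real.sqrt τ := by
  unfold gk
  gcongr
  apply Real.exp_le_one_iff.2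
  apply div_nonpos_of_nonpos_of_nonneg <;> nlinarith [sq_nonneg s]

lemma continuous_gk (τ : ℝ) : Continuous (gk τ) := by unfold gk; fun_prop

lemma gk_neg (τ s : ℝ) : gk τ (-s) = gk τ s := by simp [gk]

lemma gk_sub_comm (τ s t : ℝ) : gk τ (s - t) = gk τ (t - s) := by rw [← gk_neg, neg_sub]

lemma integral_gauss_shift (b e : ℝ) :
    ∫ t : ℝ, Real.exp (-b * (t - e) ^ 2) = Real.sqrt (Real.pi / b) := by
  rw [integral_sub_right_eq_self (fun t : ℝ => Real.exp (-b * t ^ 2)) e, integral_gaussian]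

lemma gk_mul_gk {a b : ℝ} (ha : 0 < a) (hb : 0 < b) (s q t : ℝ) :
    gk a (t - s) * gk b (t - q) = (gk (a + b) (s - q) * (Real.sqrt (a + b) / (Real.sqrt a * Real.sqrt b))) *
      Real.exp (-((a + b) / (2 * a * b)) * (t - (b * s + a * q) / (a + b)) ^ 2) := by
  have hab : 0 < a + b := by linarith
  have h1 := Real.sqrt_pos.2 ha
  have h2 := Real.sqrt_pos.2 hb
  have h3 := Real.sqrt_pos.2 hab
  unfold gk
  rw [show Real.exp (-(t - s) ^ 2 / (2 * a)) / √a * (Real.exp (-(t - q) ^ 2 / (2 * b)) / √b) =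
    (Real.exp (-(t - s) ^ 2 / (2 * a)) * Real.exp (-(t - q) ^ 2 / (2 * b))) / (√a * √b) by field_simp,
    show Real.exp (-(s - q) ^ 2 / (2 * (a + b))) / √(a + b) * (√(a + b) / (√a * √b)) *
      Real.exp (-((a + b) / (2 * a * b)) * (t - (b * s + a * q) / (a + b)) ^ 2) =
      (Real.exp (-(s - q) ^ 2 / (2 * (a + b))) *
      Real.exp (-((a + b) / (2 * a * b)) * (t - (b * s + a * q) / (a + b)) ^ 2)) / (√a * √b) by field_simp,
    ← Real.exp_add, ← Real.exp_add]
  congr 2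
  field_simp
  ring

lemma integrable_gk_mul {a b : ℝ} (ha : 0 < a) (hb : 0 < b) (s q : ℝ) :
    Integrable fun t => gk a (t - s) * gk b (t - q) := by
  simp_rw [gk_mul_gk ha hb]
  refine Integrable.const_mul ?_ _
  exact (integrable_exp_neg_mul_sq (b := (a + b) / (2 * a * b)) (by positivity)).comp_sub_right _

lemma integral_gk_mul {a b : ℝ} (ha : 0 < a) (hb : 0 < b) (s q : ℝ) :
    ∫ t, gk a (t - s) * gk b (t - q) = Real.sqrt (2 * Real.pi) * gk (a + b) (s - q) := by
  simp_rw [gk_mul_gk ha hb]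
  rw [integral_const_mul, integral_gauss_shift]
  have hab : 0 < a + b := by linarith
  have h1 := Real.sqrt_pos.2 ha
  have h2 := Real.sqrt_pos.2 hb
  have h3 := Real.sqrt_pos.2 hab
  rw [show Real.pi / ((a + b) / (2 * a * b)) = (2 * Real.pi) * (a * b) / (a + b) by field_simp,
    Real.sqrt_div (by positivity), Real.sqrt_mul (by positivity), Real.sqrt_mul ha.le]
  field_simp

/-- Finite combinations of Gaussians. -/
noncomputable def gsum {ι : Type*} (I : Finset ι) (c s : ι → ℝ) (a t : ℝ) : ℝ :=
  ∑ i ∈ I, c i * gk a (t - s i)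

lemma gsum_mul {ι κ : Type*} (I : Finset ι) (J : Finset κ) (c s : ι → ℝ) (d q : κ → ℝ) (a b t : ℝ) :
    gsum I c s a t * gsum J d q b t =
      ∑ i ∈ I, ∑ j ∈ J, c i * d j * (gk a (t - s i) * gk b (t - q j)) := by
  unfold gsum
  rw [Finset.sum_mul_sum]
  refine Finset.sum_congr rfl fun i _ => Finset.sum_congr rfl fun j _ => by ring

lemma integrable_gsum_mul {ι κ : Type*} (I : Finset ι) (J : Finset κ) (c s : ι → ℝ) (d q : κ → ℝ)
    {a b : ℝ} (ha : 0 < a) (hb : 0 < b) :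
    Integrable fun t => gsum I c s a t * gsum J d q b t := by
  simp_rw [gsum_mul]
  exact integrable_finsetSum _ fun i _ => integrable_finsetSum _ fun j _ =>
    (integrable_gk_mul ha hb _ _).const_mul _

lemma integral_gsum_mul {ι κ : Type*} (I : Finset ι) (J : Finset κ) (c s : ι → ℝ) (d q : κ → ℝ)
    {a b : ℝ} (ha : 0 < a) (hb : 0 < b) :
    ∫ t, gsum I c s a t * gsum J d q b t =
      Real.sqrt (2 * Real.pi) * ∑ i ∈ I, ∑ j ∈ J, c i * d j * gk (a + b) (s i - q j) := by
  simp_rw [gsum_mul]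
  rw [integral_finsetSum _ fun i _ => integrable_finsetSum _ fun j _ =>
    (integrable_gk_mul ha hb _ _).const_mul _, Finset.mul_sum]
  refine Finset.sum_congr rfl fun i _ => ?_
  rw [integral_finsetSum _ fun j _ => (integrable_gk_mul ha hb _ _).const_mul _, Finset.mul_sum]
  refine Finset.sum_congr rfl fun j _ => ?_
  rw [integral_const_mul, integral_gk_mul ha hb]
  ring

lemma sum_mul_two {ι κ : Type*} (I : Finset ι) (J : Finset κ) (f g : ι → κ → ℝ) :
    ∑ i ∈ I, ∑ j ∈ J, f i j * (2 * g i j) = 2 * ∑ i ∈ I, ∑ j ∈ J, f i j * g i j := by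
  simp_rw [Finset.mul_sum]
  refine Finset.sum_congr rfl fun i _ => Finset.sum_congr rfl fun j _ => by ring

/-- Cauchy–Schwarz for one step of the scale decomposition of a Gaussian correlation. -/
lemma gauss_step {ι κ : Type*} (I : Finset ι) (J : Finset κ) (c s : ι → ℝ) (d q : κ → ℝ)
    {a a' l : ℝ} (ha : 0 < a) (ha' : 0 < a') (hl : 0 < l) :
    ∑ i ∈ I, ∑ j ∈ J, c i * d j * (gk (a' + a') (s i - q j) - gk (a + a) (s i - q j)) ≤
      l / 2 * (∑ i ∈ I, ∑ i' ∈ I, c i * c i' * (gk (a' + a') (s i - s i') + gk (a + a) (s i - s i')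
        - 2 * gk (a + a') (s i - s i'))) +
      1 / (2 * l) * (∑ j ∈ J, ∑ j' ∈ J, d j * d j' * (gk (a' + a') (q j - q j') +
        gk (a + a) (q j - q j') + 2 * gk (a + a') (q j - q j'))) := by
  set F := gsum I c s a
  set F' := gsum I c s a'
  set H := gsum J d q a
  set H' := gsum J d q a'
  have hpos : 0 ≤ ∫ t, (l / 2 * (F' t * F' t) + l / 2 * (F t * F t) - l * (F t * F' t)
      + 1 / (2 * l) * (H' t * H' t) + 1 / (2 * l) * (H t * H t) + 1 / l * (H t * H' t)
      - F' t * H' t - F' t * H t + F t * H' t + F t * H t) := by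
    refine integral_nonneg fun t => ?_
    have : l / 2 * (F' t * F' t) + l / 2 * (F t * F t) - l * (F t * F' t)
      + 1 / (2 * l) * (H' t * H' t) + 1 / (2 * l) * (H t * H t) + 1 / l * (H t * H' t)
      - F' t * H' t - F' t * H t + F t * H' t + F t * H t =
      1 / (2 * l) * (l * (F' t - F t) - (H' t + H t)) ^ 2 := by
      field_simp; ring
    simp only [Pi.zero_apply]
    rw [this]; positivity
  have i1 := integrable_gsum_mul I I c s c s ha' ha'
  have i2 := integrable_gsum_mul I I c s c s ha ha
  have i3 := integrable_gsum_mul I I c s c s ha ha'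
  have i4 := integrable_gsum_mul J J d q d q ha' ha'
  have i5 := integrable_gsum_mul J J d q d q ha ha
  have i6 := integrable_gsum_mul J J d q d q ha ha'
  have i7 := integrable_gsum_mul I J c s d q ha' ha'
  have i8 := integrable_gsum_mul I J c s d q ha' ha
  have i9 := integrable_gsum_mul I J c s d q ha ha'
  have i10 := integrable_gsum_mul I J c s d q ha ha
  have j1 := i1.const_mul (l / 2)
  have j2 := j1.add (i2.const_mul (l / 2))
  have j3 := j2.sub (i3.const_mul l)
  have j4 := j3.add (i4.const_mul (1 / (2 * l)))
  have j5 := j4.add (i5.const_mul (1 / (2 * l)))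
  have j6 := j5.add (i6.const_mul (1 / l))
  have j7 := j6.sub i7
  have j8 := j7.sub i8
  have j9 := j8.add i9
  have hI := integral_add' j9 i10
  rw [integral_add' j8 i9, integral_sub' j7 i8, integral_sub' j6 i7,
    integral_add' j5 (i6.const_mul (1 / l)), integral_add' j4 (i5.const_mul (1 / (2 * l))),
    integral_add' j3 (i4.const_mul (1 / (2 * l))), integral_sub' j2 (i3.const_mul l),
    integral_add' j1 (i2.const_mul (l / 2)), integral_const_mul, integral_const_mul,
    integral_const_mul, integral_const_mul, integral_const_mul, integral_const_mul] at hI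
  have hpos2 := hpos.trans_eq hI
  rw [integral_gsum_mul I I c s c s ha' ha', integral_gsum_mul I I c s c s ha ha,
    integral_gsum_mul I I c s c s ha ha', integral_gsum_mul J J d q d q ha' ha',
    integral_gsum_mul J J d q d q ha ha, integral_gsum_mul J J d q d q ha ha',
    integral_gsum_mul I J c s d q ha' ha', integral_gsum_mul I J c s d q ha' ha,
    integral_gsum_mul I J c s d q ha ha', integral_gsum_mul I J c s d q ha ha, add_comm a' a] at hpos2
  simp only [mul_add, mul_sub, Finset.sum_add_distrib, Finset.sum_sub_distrib]
  rw [sum_mul_two, sum_mul_two]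
  have hpi : 0 < Real.sqrt (2 * Real.pi) := by positivity
  rw [← sub_nonneg]
  refine nonneg_of_mul_nonneg_right (a := Real.sqrt (2 * Real.pi)) (hpos2.trans_eq ?_) hpi
  field_simp
  ring

/-! ### Gaussian averages over conormals -/

/-- Standard Gaussian measure on the plane of (co)normals. -/
noncomputable def gam : Measure (ℝ × ℝ) :=
  (ProbabilityTheory.gaussianReal 0 1).prod (ProbabilityTheory.gaussianReal 0 1)

instance : IsProbabilityMeasure gam := by unfold gam; infer_instance

/-- Dot product in the plane. -/
noncomputable def dot2 (n x : ℝ × ℝ) : ℝ := n.1 * x.1 + n.2 * x.2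

/-- Squared length in the plane. -/
noncomputable def nsq (x : ℝ × ℝ) : ℝ := x.1 ^ 2 + x.2 ^ 2

lemma nsq_nonneg (x : ℝ × ℝ) : 0 ≤ nsq x := by unfold nsq; positivity

lemma dot2_sub (n x y : ℝ × ℝ) : dot2 n (x - y) = dot2 n x - dot2 n y := by
  simp [dot2]; ring

lemma gk_scale (τ x s : ℝ) (hx : x ≠ 0) : gk τ (x * s) = 1 / |x| * gk (τ / x ^ 2) s := by
  unfold gk
  rw [Real.sqrt_div' _ (sq_nonneg x), Real.sqrt_sq_eq_abs]
  have h : |x| ≠ 0 := abs_ne_zero.2 hx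
  rw [show -(x * s) ^ 2 / (2 * τ) = -s ^ 2 / (2 * (τ / x ^ 2)) by field_simp]
  field_simp

lemma gauss1 (τ x y : ℝ) (hτ : 0 < τ) :
    ∫ m, gk τ (y + m * x) ∂(ProbabilityTheory.gaussianReal 0 1) = gk (τ + x ^ 2) y := by
  by_cases hx : x = 0
  · simp [hx]
  rw [ProbabilityTheory.integral_gaussianReal_eq_integral_smul (by norm_num)]
  have hx2 : 0 < x ^ 2 := by positivity
  have h1 : ∀ m : ℝ, ProbabilityTheory.gaussianPDFReal 0 1 m • gk τ (y + m * x) =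
      ((√(2 * Real.pi))⁻¹ * (1 / |x|)) * (gk 1 (m - 0) * gk (τ / x ^ 2) (m - (-(y / x)))) := by
    intro m
    rw [show y + m * x = x * (m - (-(y / x))) by field_simp; ring, gk_scale _ _ _ hx]
    simp [ProbabilityTheory.gaussianPDFReal, gk]
    ring
  simp_rw [h1]
  rw [integral_const_mul, integral_gk_mul one_pos (by positivity)]
  have hpi : 0 < √(2 * Real.pi) := by positivity
  rw [show gk (τ + x ^ 2) y = gk (τ + x ^ 2) (x * (0 - -(y / x))) by congr 1; field_simp; ring,
    gk_scale _ _ _ hx, show (τ + x ^ 2) / x ^ 2 = 1 + τ / x ^ 2 by field_simp; ring]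
  field_simp

lemma continuous_gk_dot (τ : ℝ) (x : ℝ × ℝ) : Continuous fun n => gk τ (dot2 n x) := by
  unfold dot2
  exact (continuous_gk τ).comp (by fun_prop)

lemma integrable_gk_dot (τ : ℝ) (hτ : 0 < τ) (x : ℝ × ℝ) :
    Integrable (fun n => gk τ (dot2 n x)) gam := by
  refine Integrable.of_bound (continuous_gk_dot τ x).aestronglyMeasurable (1 / √τ) ?_
  refine Filter.Eventually.of_forall fun n => ?_
  rw [Real.norm_of_nonneg (gk_nonneg _ _)]
  exact gk_le _ _ hτ

lemma gauss2 (τ : ℝ) (hτ : 0 < τ) (x : ℝ × ℝ) :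
    ∫ n, gk τ (dot2 n x) ∂gam = 1 / √(τ + nsq x) := by
  have hi := integrable_gk_dot τ hτ x
  unfold gam at hi ⊢
  rw [integral_prod _ hi]
  have : ∀ a : ℝ, ∫ b, gk τ (dot2 (a, b) x) ∂(ProbabilityTheory.gaussianReal 0 1) =
      gk (τ + x.2 ^ 2) (0 + a * x.1) := by
    intro a
    rw [← gauss1 _ _ _ hτ]
    simp [dot2]
  simp_rw [this]
  rw [gauss1 _ _ _ (by positivity)]
  simp [gk, nsq]
  rw [add_assoc, add_comm (x.2 ^ 2)]

/-- A subset of a bounded interval has Gaussian measure at least a constant times its length. -/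
lemma gauss_Icc (a b : ℝ) (ha : -3 ≤ a) (hab : a ≤ b) (hb : b ≤ 3) :
    ENNReal.ofReal (Real.exp (-9/2) / 3 * (b - a)) ≤ (ProbabilityTheory.gaussianReal 0 1) (Set.Icc a b) := by
  rw [ProbabilityTheory.gaussianReal_apply _ (by norm_num)]
  have h1 : ∫⁻ x in Set.Icc a b, ENNReal.ofReal (Real.exp (-9/2) / 3) ≤
      ∫⁻ x in Set.Icc a b, ProbabilityTheory.gaussianPDF 0 1 x := by
    refine setLIntegral_mono (by fun_prop) fun x hx => ?_
    unfold ProbabilityTheory.gaussianPDF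
    refine ENNReal.ofReal_le_ofReal ?_
    simp only [ProbabilityTheory.gaussianPDFReal, NNReal.coe_one, mul_one, sub_zero]
    have h2 : √(2 * Real.pi) ≤ 3 := by
      rw [Real.sqrt_le_left (by norm_num)]; nlinarith [Real.pi_lt_d2]
    have h3 : 0 < √(2 * Real.pi) := by positivity
    rw [div_eq_inv_mul]
    have hx1 := hx.1
    have hx2 := hx.2
    have : x ^ 2 ≤ 9 := by nlinarith
    gcongr
  refine le_trans ?_ h1
  rw [setLIntegral_const, Real.volume_Icc, ENNReal.ofReal_mul (by positivity)]

lemma meas_region (t d : ℝ) : MeasurableSet {n : ℝ × ℝ | n.2 ∈ Set.Icc (1:ℝ) 2 ∧ |n.1 + n.2 * t| ≤ d} := by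
  refine MeasurableSet.inter (measurableSet_Icc.preimage measurable_snd) ?_
  exact measurableSet_le (f := fun n : ℝ × ℝ => |n.1 + n.2 * t|) (g := fun _ => d) (by fun_prop) (by fun_prop)

lemma meas_region' (t d : ℝ) : MeasurableSet {n : ℝ × ℝ | n.1 ∈ Set.Icc (1:ℝ) 2 ∧ |n.2 + n.1 * t| ≤ d} := by
  refine MeasurableSet.inter (measurableSet_Icc.preimage measurable_fst) ?_
  exact measurableSet_le (f := fun n : ℝ × ℝ => |n.2 + n.1 * t|) (g := fun _ => d) (by fun_prop) (by fun_prop)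

lemma omega_region (t d : ℝ) (ht : |t| ≤ 1) (hd : 0 ≤ d) (hd1 : d ≤ 1) :
    Real.exp (-9/2) ^ 2 / 9 * (2 * d) ≤ gam.real {n | n.2 ∈ Set.Icc (1:ℝ) 2 ∧ |n.1 + n.2 * t| ≤ d} := by
  have hm : MeasurableSet {n : ℝ × ℝ | n.2 ∈ Set.Icc (1:ℝ) 2 ∧ |n.1 + n.2 * t| ≤ d} := by
    exact meas_region t d
  rw [Measure.real, ← ENNReal.ofReal_le_iff_le_toReal (measure_ne_top _ _)]
  unfold gam
  rw [Measure.prod_apply_symm hm]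
  calc ENNReal.ofReal (Real.exp (-9/2) ^ 2 / 9 * (2 * d))
      = ENNReal.ofReal (Real.exp (-9/2) / 3 * (2 * d)) * ENNReal.ofReal (Real.exp (-9/2) / 3 * (2 - 1)) := by
        rw [← ENNReal.ofReal_mul (by positivity)]; congr 1; ring
    _ ≤ ENNReal.ofReal (Real.exp (-9/2) / 3 * (2 * d)) * (ProbabilityTheory.gaussianReal 0 1) (Set.Icc 1 2) := by
        gcongr; exact gauss_Icc 1 2 (by norm_num) (by norm_num) (by norm_num)
    _ = ∫⁻ y in Set.Icc 1 2, ENNReal.ofReal (Real.exp (-9/2) / 3 * (2 * d)) ∂(ProbabilityTheory.gaussianReal 0 1) := by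
        rw [setLIntegral_const]
    _ ≤ ∫⁻ y in Set.Icc (1:ℝ) 2, (ProbabilityTheory.gaussianReal 0 1)
          ((fun x => (x, y)) ⁻¹' {n : ℝ × ℝ | n.2 ∈ Set.Icc (1:ℝ) 2 ∧ |n.1 + n.2 * t| ≤ d}) ∂(ProbabilityTheory.gaussianReal 0 1) := by
        refine setLIntegral_mono' measurableSet_Icc fun y hy => ?_
        have := abs_le.1 ht
        have h1 : -3 ≤ -(y * t) - d := by nlinarith [hy.1, hy.2]
        have h2 : -(y * t) + d ≤ 3 := by nlinarith [hy.1, hy.2]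
        refine le_trans (le_of_eq (by congr 2; ring)) ((gauss_Icc (-(y * t) - d) (-(y * t) + d) h1 (by linarith) h2).trans
          (measure_mono fun x hx => ⟨hy, ?_⟩))
        rw [abs_le]; exact ⟨by linarith [hx.1], by linarith [hx.2]⟩
    _ ≤ _ := setLIntegral_le_lintegral _ _

lemma omega_region' (t d : ℝ) (ht : |t| ≤ 1) (hd : 0 ≤ d) (hd1 : d ≤ 1) :
    Real.exp (-9/2) ^ 2 / 9 * (2 * d) ≤ gam.real {n | n.1 ∈ Set.Icc (1:ℝ) 2 ∧ |n.2 + n.1 * t| ≤ d} := by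
  refine (omega_region t d ht hd hd1).trans (le_of_eq ?_)
  unfold gam
  have hm : MeasurableSet {n : ℝ × ℝ | n.1 ∈ Set.Icc (1:ℝ) 2 ∧ |n.2 + n.1 * t| ≤ d} := by
    exact meas_region' t d
  conv_rhs => rw [← Measure.prod_swap]
  rw [map_measureReal_apply measurable_swap hm]
  rfl

/-- Every nonzero direction `v` has a set of almost-normals of measure `≳ d`. -/
lemma normals (v : ℝ × ℝ) (c C d : ℝ) (hc : 0 < c) (hC : 0 < C) (h1 : c ^ 2 ≤ nsq v) (h2 : nsq v ≤ C ^ 2)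
    (hd : 0 ≤ d) (hd1 : d ≤ 1) :
    ∃ S : Set (ℝ × ℝ), MeasurableSet S ∧ Real.exp (-9/2) ^ 2 / 9 * (2 * d) ≤ gam.real S ∧
      ∀ n ∈ S, |dot2 n v| ≤ C * d ∧
        ∀ u, nsq u ≤ C ^ 2 → |v.1 * u.2 - v.2 * u.1| ≤ d → |dot2 n u| ≤ (C + 4 / c) * d := by
  have hab : ∀ u, nsq u ≤ C ^ 2 → |u.1| ≤ C ∧ |u.2| ≤ C := by
    intro u hu
    unfold nsq at hu
    exact ⟨abs_le_of_sq_le_sq (by nlinarith [sq_nonneg u.2]) hC.le,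
      abs_le_of_sq_le_sq (by nlinarith [sq_nonneg u.1]) hC.le⟩
  obtain ⟨hv1, hv2⟩ := hab v h2
  unfold nsq at h1
  rcases le_total |v.2| |v.1| with h | h
  · have hpos : c / 2 ≤ |v.1| := by
      by_contra hlt
      push Not at hlt
      nlinarith [sq_abs v.1, sq_abs v.2, abs_nonneg v.1, abs_nonneg v.2]
    have hv0 : v.1 ≠ 0 := by intro h0; rw [h0] at hpos; simp at hpos; linarith
    refine ⟨_, ?_, omega_region (v.2 / v.1) d ?_ hd hd1, ?_⟩
    · exact meas_region _ d
    · rw [abs_div]; exact div_le_one_of_le₀ h (abs_nonneg _)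
    · rintro n ⟨hn2, hn⟩
      refine ⟨?_, fun u hu hdet => ?_⟩
      · rw [show dot2 n v = v.1 * (n.1 + n.2 * (v.2 / v.1)) by unfold dot2; field_simp, abs_mul]
        gcongr
      · rw [show dot2 n u = u.1 * (n.1 + n.2 * (v.2 / v.1)) + n.2 * ((v.1 * u.2 - v.2 * u.1) / v.1) by
          unfold dot2; field_simp; ring]
        refine (abs_add_le _ _).trans ?_
        rw [abs_mul, abs_mul, abs_div, add_mul]
        have hn2' : |n.2| ≤ 2 := by rw [abs_of_nonneg (by linarith [hn2.1])]; exact hn2.2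
        have e1 : |u.1| * |n.1 + n.2 * (v.2 / v.1)| ≤ C * d := by gcongr; exact (hab u hu).1
        have e2 : |n.2| * (|v.1 * u.2 - v.2 * u.1| / |v.1|) ≤ 2 * (d / (c / 2)) := by gcongr
        have e3 : 2 * (d / (c / 2)) = 4 / c * d := by field_simp; ring
        linarith
  · have hpos : c / 2 ≤ |v.2| := by
      by_contra hlt
      push Not at hlt
      nlinarith [sq_abs v.1, sq_abs v.2, abs_nonneg v.1, abs_nonneg v.2]
    have hv0 : v.2 ≠ 0 := by intro h0; rw [h0] at hpos; simp at hpos; linarith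
    refine ⟨_, ?_, omega_region' (v.1 / v.2) d ?_ hd hd1, ?_⟩
    · exact meas_region' _ d
    · rw [abs_div]; exact div_le_one_of_le₀ h (abs_nonneg _)
    · rintro n ⟨hn2, hn⟩
      refine ⟨?_, fun u hu hdet => ?_⟩
      · rw [show dot2 n v = v.2 * (n.2 + n.1 * (v.1 / v.2)) by unfold dot2; field_simp; ring, abs_mul]
        gcongr
      · rw [show dot2 n u = u.2 * (n.2 + n.1 * (v.1 / v.2)) - n.1 * ((v.1 * u.2 - v.2 * u.1) / v.2) by
          unfold dot2; field_simp; ring]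
        refine (abs_sub _ _).trans ?_
        rw [abs_mul, abs_mul, abs_div, add_mul]
        have hn2' : |n.1| ≤ 2 := by rw [abs_of_nonneg (by linarith [hn2.1])]; exact hn2.2
        have e1 : |u.2| * |n.2 + n.1 * (v.1 / v.2)| ≤ C * d := by gcongr; exact (hab u hu).2
        have e2 : |n.1| * (|v.1 * u.2 - v.2 * u.1| / |v.2|) ≤ 2 * (d / (c / 2)) := by gcongr
        have e3 : 2 * (d / (c / 2)) = 4 / c * d := by field_simp; ring
        linarith

/-- Second difference of `τ ↦ (R² + τ)^{-1/2}`, `u = R² + r²`. -/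
lemma second_diff (u r D : ℝ) (hr : 0 < r) (hu : r ^ 2 ≤ u) (hD : D ≤ 5) :
    1 / √u + 1 / √(u + 3 * r ^ 2) - 2 * (1 / √(u + 3 / 2 * r ^ 2)) ≤
      4 * r ^ (D - 1) * u ^ (-D / 2) := by
  have hu0 : 0 < u := lt_of_lt_of_le (by positivity) hu
  set h := 3 / 2 * r ^ 2 / u with hh
  have hh0 : 0 ≤ h := by positivity
  have hsu : 0 < √u := Real.sqrt_pos.2 hu0
  have e1 : √(u + 3 * r ^ 2) = √u * √(1 + 2 * h) := by
    rw [← Real.sqrt_mul hu0.le]; congr 1; rw [hh]; field_simp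
  have e2 : √(u + 3 / 2 * r ^ 2) = √u * √(1 + h) := by
    rw [← Real.sqrt_mul hu0.le]; congr 1; rw [hh]; field_simp
  have b1 : 1 / √(1 + 2 * h) ≤ 1 - h + 3 / 2 * h ^ 2 := by
    rw [div_le_iff₀ (by positivity)]
    have hp : 0 ≤ 1 - h + 3 / 2 * h ^ 2 := by nlinarith [sq_nonneg (h - 1 / 3)]
    rw [← Real.sqrt_sq hp, ← Real.sqrt_mul (sq_nonneg _)]
    apply Real.le_sqrt_of_sq_le
    have : (1 - h + 3 / 2 * h ^ 2) ^ 2 * (1 + 2 * h) = 1 + h ^ 3 * (5 - 15/4 * h + 9/2 * h ^ 2) := by ring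
    rw [this]
    have : 0 ≤ 5 - 15/4 * h + 9/2 * h ^ 2 := by nlinarith [sq_nonneg (h - 5/12)]
    nlinarith [mul_nonneg (pow_nonneg hh0 3) this]
  have b2 : 1 - h / 2 ≤ 1 / √(1 + h) := by
    rw [le_div_iff₀ (by positivity)]
    have hs : √(1 + h) ≤ 1 + h / 2 := by
      rw [Real.sqrt_le_left (by positivity)]; nlinarith [sq_nonneg h]
    have hs1 : 1 ≤ √(1 + h) := by rw [Real.one_le_sqrt]; linarith
    by_cases h2 : h ≤ 2
    · nlinarith
    · nlinarith
  have key : 1 / √u + 1 / √(u + 3 * r ^ 2) - 2 * (1 / √(u + 3 / 2 * r ^ 2)) ≤ 1 / √u * (3 / 2 * h ^ 2) := by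
    rw [e1, e2, show 1 / √u + 1 / (√u * √(1 + 2 * h)) - 2 * (1 / (√u * √(1 + h))) =
      1 / √u * (1 + 1 / √(1 + 2 * h) - 2 * (1 / √(1 + h))) by field_simp]
    gcongr
    linarith
  refine key.trans ?_
  have hru : r / √u ≤ 1 := by
    rw [div_le_one hsu]; exact Real.le_sqrt_of_sq_le hu
  have hru0 : 0 < r / √u := by positivity
  have hsq : √u ^ 2 = u := Real.sq_sqrt hu0.le
  have e3 : r ^ (D - 1) * u ^ (-D / 2) = 1 / r * (r / √u) ^ D := by
    rw [Real.div_rpow hr.le hsu.le, Real.rpow_sub_one hr.ne', Real.sqrt_eq_rpow, ← Real.rpow_mul hu0.le,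
      show -D / 2 = -(1 / 2 * D) by ring, Real.rpow_neg hu0.le]
    field_simp
  have e4 : (r / √u) ^ (5:ℝ) ≤ (r / √u) ^ D := Real.rpow_le_rpow_of_exponent_ge hru0 hru hD
  rw [show (5:ℝ) = ((5:ℕ):ℝ) by norm_num, Real.rpow_natCast] at e4
  rw [mul_assoc, e3]
  have e5 : 1 / √u * (3 / 2 * h ^ 2) = 27 / 8 * (1 / r * (r / √u) ^ 5) := by
    rw [hh, ← hsq]; simp only [Real.sqrt_sq hsu.le]; field_simp; norm_num
  rw [e5]
  have : 1 / r * (r / √u) ^ 5 ≤ 1 / r * (r / √u) ^ D := by gcongr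
  have : 0 ≤ 1 / r * (r / √u) ^ 5 := by positivity
  linarith

lemma amgm_opt {X a b : ℝ} (ha : 0 < a) (hb : 0 < b) (h : ∀ l > 0, X ≤ l / 2 * a + 1 / (2 * l) * b) :
    X ≤ √(a * b) := by
  have h1 := Real.sqrt_pos.2 ha
  have h2 := Real.sqrt_pos.2 hb
  refine (h (√b / √a) (by positivity)).trans (le_of_eq ?_)
  rw [Real.sqrt_mul ha.le]
  have e1 := Real.sq_sqrt ha.le
  have e2 := Real.sq_sqrt hb.le
  generalize √a = x at *
  generalize √b = y at *
  subst e1 e2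
  field_simp
  ring

/-- Interpolation between two bounds. -/
lemma interp {X a b k : ℝ} (hX : 0 ≤ X) (ha : X ≤ a) (hb : X ≤ b) (hk : 0 ≤ k) (hk1 : k ≤ 1) :
    X ≤ a ^ (1 - k) * b ^ k := by
  rcases hX.eq_or_lt with h | h
  · rw [← h] at ha hb ⊢; positivity
  calc X = X ^ (1 - k) * X ^ k := by rw [← Real.rpow_add h]; simp
    _ ≤ _ := mul_le_mul (Real.rpow_le_rpow hX ha (by linarith)) (Real.rpow_le_rpow hX hb hk) (by positivity)
      (Real.rpow_nonneg (hX.trans ha) _)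

/-! ### Scale decomposition of incidences -/

/-- Smoothed count of the points `x i` in the strip with conormal `n` through `q`. -/
noncomputable def incF {ι : Type*} (I : Finset ι) (x : ι → ℝ × ℝ) (d : ℝ) (q n : ℝ × ℝ) : ℝ :=
  ∑ i ∈ I, gk (d ^ 2) (dot2 n (x i - q))

open Classical in
/-- Indicator of the conormals of the strips through `q` containing many points. -/
noncomputable def incf {ι : Type*} (I : Finset ι) (x : ι → ℝ × ℝ) (d T : ℝ) (q n : ℝ × ℝ) : ℝ :=
  if T ≤ incF I x d q n then 1 else 0

section
variable {ι : Type*} (I : Finset ι) (x : ι → ℝ × ℝ) (d T : ℝ)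

lemma incf_nonneg (q n : ℝ × ℝ) : 0 ≤ incf I x d T q n := by unfold incf; split_ifs <;> norm_num

lemma incf_le_one (q n : ℝ × ℝ) : incf I x d T q n ≤ 1 := by unfold incf; split_ifs <;> norm_num

lemma continuous_incF (q : ℝ × ℝ) : Continuous (incF I x d q) := by
  unfold incF
  exact continuous_finsetSum _ fun i _ => continuous_gk_dot _ _

lemma measurable_incf (q : ℝ × ℝ) : Measurable (incf I x d T q) := by
  classical
  unfold incf
  exact Measurable.ite (measurableSet_le measurable_const (continuous_incF I x d q).measurable)
    measurable_const measurable_const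

lemma incf_le (q n : ℝ × ℝ) (hT : 0 < T) : incf I x d T q n ≤ 1 / T * incF I x d q n := by
  unfold incf
  split_ifs with h
  · rw [one_div, ← div_eq_inv_mul, le_div_iff₀ hT]; linarith
  · have : 0 ≤ incF I x d q n := Finset.sum_nonneg fun i _ => gk_nonneg _ _
    positivity

lemma integrable_mul_gk {f : ℝ × ℝ → ℝ} (hf : Measurable f) (h0 : ∀ n, 0 ≤ f n) (h1 : ∀ n, f n ≤ 1)
    (τ : ℝ) (hτ : 0 < τ) (y : ℝ × ℝ) : Integrable (fun n => f n * gk τ (dot2 n y)) gam := by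
  refine (integrable_gk_dot τ hτ y).bdd_mul (c := 1) hf.aestronglyMeasurable ?_
  refine Filter.Eventually.of_forall fun n => ?_
  rw [Real.norm_of_nonneg (h0 n)]; exact h1 n

lemma integrable_01 {f : ℝ × ℝ → ℝ} (hf : Measurable f) (h0 : ∀ n, 0 ≤ f n) (h1 : ∀ n, f n ≤ 1) :
    Integrable f gam := by
  refine Integrable.of_bound hf.aestronglyMeasurable 1 ?_
  refine Filter.Eventually.of_forall fun n => ?_
  rw [Real.norm_of_nonneg (h0 n)]; exact h1 n

lemma integral_mul_gk_le_left {f : ℝ × ℝ → ℝ} (hf : Measurable f) (h0 : ∀ n, 0 ≤ f n) (h1 : ∀ n, f n ≤ 1)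
    (τ : ℝ) (hτ : 0 < τ) (y : ℝ × ℝ) : ∫ n, f n * gk τ (dot2 n y) ∂gam ≤ (∫ n, f n ∂gam) * (1 / √τ) := by
  rw [← integral_mul_const]
  refine integral_mono (integrable_mul_gk hf h0 h1 τ hτ y) ((integrable_01 hf h0 h1).mul_const _) fun n => ?_
  exact mul_le_mul_of_nonneg_left (gk_le _ _ hτ) (h0 n)

lemma integral_mul_gk_le_right {f : ℝ × ℝ → ℝ} (hf : Measurable f) (h0 : ∀ n, 0 ≤ f n) (h1 : ∀ n, f n ≤ 1)
    (τ : ℝ) (hτ : 0 < τ) (y : ℝ × ℝ) : ∫ n, f n * gk τ (dot2 n y) ∂gam ≤ 1 / √(τ + nsq y) := by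
  rw [← gauss2 τ hτ y]
  refine integral_mono (integrable_mul_gk hf h0 h1 τ hτ y) (integrable_gk_dot τ hτ y) fun n => ?_
  exact mul_le_of_le_one_left (gk_nonneg _ _) (h1 n)

/-- Markov's inequality for the measure of the conormals of rich strips through `q`. -/
lemma integral_incf_le (q : ℝ × ℝ) (c : ℝ) (hd : 0 < d) (hT : 0 < T) (hc : 0 < c)
    (h : ∀ i ∈ I, c ^ 2 ≤ nsq (x i - q)) :
    ∫ n, incf I x d T q n ∂gam ≤ I.card / (T * c) := by
  have hd2 : 0 < d ^ 2 := by positivity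
  have h1 : ∫ n, incf I x d T q n ∂gam ≤ ∫ n, 1 / T * incF I x d q n ∂gam := by
    refine integral_mono (integrable_01 (measurable_incf I x d T q) (incf_nonneg I x d T q)
      (incf_le_one I x d T q)) ?_ fun n => incf_le I x d T q n hT
    refine Integrable.const_mul ?_ _
    unfold incF
    exact integrable_finsetSum _ fun i _ => integrable_gk_dot _ hd2 _
  refine h1.trans ?_
  rw [integral_const_mul]
  unfold incF
  rw [integral_finsetSum _ fun i _ => integrable_gk_dot _ hd2 _]
  simp_rw [gauss2 _ hd2]
  have h2 : ∑ i ∈ I, 1 / √(d ^ 2 + nsq (x i - q)) ≤ ∑ i ∈ I, 1 / c := by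
    refine Finset.sum_le_sum fun i hi => ?_
    gcongr
    exact Real.le_sqrt_of_sq_le (by linarith [h i hi])
  rw [Finset.sum_const, nsmul_eq_mul] at h2
  calc _ ≤ 1 / T * (I.card * (1 / c)) := by gcongr
    _ = _ := by field_simp

end

section
variable {ι κ : Type*} (G : Finset ι) (J : Finset κ) (x : ι → ℝ × ℝ) (p : κ → ℝ × ℝ)
  (f : κ → ℝ × ℝ → ℝ)

/-- Correlation of the points `x i` with the weighted pencils of lines at `p j`, at variance `τ`. -/
noncomputable def incJ (τ : ℝ) : ℝ :=
  ∑ i ∈ G, ∑ j ∈ J, ∫ n, f j n * gk τ (dot2 n (x i - p j)) ∂gam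

/-- The inequality `gauss_step` at the variances `r²` and `4 r²`, with weight `l`, integrated over the
conormals. -/
lemma inc_step_aux (hf : ∀ j, Measurable (f j)) (h0 : ∀ j n, 0 ≤ f j n) (h1 : ∀ j n, f j n ≤ 1)
    (r l : ℝ) (hr : 0 < r) (hl : 0 < l) :
    incJ G J x p f (r ^ 2) - incJ G J x p f (4 * r ^ 2) ≤
      l / 2 * (∑ i ∈ G, ∑ i' ∈ G, (1 / √(r ^ 2 + nsq (x i - x i')) + 1 / √(4 * r ^ 2 + nsq (x i - x i'))
        - 2 * (1 / √(5 / 2 * r ^ 2 + nsq (x i - x i'))))) +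
      1 / (2 * l) * (∑ j ∈ J, ∑ j' ∈ J, (∫ n, f j n * f j' n * gk (r ^ 2) (dot2 n (p j - p j')) ∂gam +
        ∫ n, f j n * f j' n * gk (4 * r ^ 2) (dot2 n (p j - p j')) ∂gam +
        2 * ∫ n, f j n * f j' n * gk (5 / 2 * r ^ 2) (dot2 n (p j - p j')) ∂gam)) := by
  have hr1 : 0 < r ^ 2 := by positivity
  have hr2 : 0 < 4 * r ^ 2 := by positivity
  have hr3 : 0 < 5 / 2 * r ^ 2 := by positivity
  have hff : ∀ j j', Measurable fun n => f j n * f j' n := fun j j' => (hf j).mul (hf j')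
  have hff0 : ∀ j j' n, 0 ≤ f j n * f j' n := fun j j' n => mul_nonneg (h0 j n) (h0 j' n)
  have hff1 : ∀ j j' n, f j n * f j' n ≤ 1 := fun j j' n => mul_le_one₀ (h1 j n) (h0 j' n) (h1 j' n)
  have iJ : ∀ τ, 0 < τ → ∀ i j, Integrable (fun n => f j n * gk τ (dot2 n (x i - p j))) gam :=
    fun τ hτ i j => integrable_mul_gk (hf j) (h0 j) (h1 j) τ hτ _
  have iP : ∀ τ, 0 < τ → ∀ j j', Integrable (fun n => f j n * f j' n * gk τ (dot2 n (p j - p j'))) gam :=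
    fun τ hτ j j' => integrable_mul_gk (hff j j') (hff0 j j') (hff1 j j') τ hτ _
  have iX : ∀ τ, 0 < τ → ∀ i i', Integrable (fun n => gk τ (dot2 n (x i - x i'))) gam :=
    fun τ hτ i i' => integrable_gk_dot τ hτ _
  have iL : ∀ i j, Integrable (fun n => f j n * gk (r ^ 2) (dot2 n (x i - p j)) -
      f j n * gk (4 * r ^ 2) (dot2 n (x i - p j))) gam := fun i j => (iJ _ hr1 i j).sub (iJ _ hr2 i j)
  have iA : ∀ i i', Integrable (fun n => gk (r ^ 2) (dot2 n (x i - x i')) + gk (4 * r ^ 2) (dot2 n (x i - x i'))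
      - 2 * gk (5 / 2 * r ^ 2) (dot2 n (x i - x i'))) gam := fun i i' =>
      ((iX _ hr1 i i').add (iX _ hr2 i i')).sub ((iX _ hr3 i i').const_mul 2)
  have iB : ∀ j j', Integrable (fun n => f j n * f j' n * gk (r ^ 2) (dot2 n (p j - p j')) +
      f j n * f j' n * gk (4 * r ^ 2) (dot2 n (p j - p j')) +
      2 * (f j n * f j' n * gk (5 / 2 * r ^ 2) (dot2 n (p j - p j')))) gam := fun j j' =>
      ((iP _ hr1 j j').add (iP _ hr2 j j')).add ((iP _ hr3 j j').const_mul 2)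
  have sL := integrable_finsetSum G fun i (_ : i ∈ G) => integrable_finsetSum J fun j (_ : j ∈ J) => iL i j
  have sA := (integrable_finsetSum G fun i (_ : i ∈ G) => integrable_finsetSum G fun j (_ : j ∈ G) => iA i j)
  have sB := (integrable_finsetSum J fun i (_ : i ∈ J) => integrable_finsetSum J fun j (_ : j ∈ J) => iB i j)
  have hmono := integral_mono sL ((sA.const_mul (l / 2)).add (sB.const_mul (1 / (2 * l)))) (fun n => by
    have := gauss_step G J (fun _ => 1) (fun i => dot2 n (x i)) (fun j => f j n) (fun j => dot2 n (p j))
      (a := 2 * r ^ 2) (a' := r ^ 2 / 2) (by positivity) (by positivity) hl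
    simp only [Pi.add_apply]
    rw [show r ^ 2 / 2 + r ^ 2 / 2 = r ^ 2 by ring, show 2 * r ^ 2 + 2 * r ^ 2 = 4 * r ^ 2 by ring,
      show 2 * r ^ 2 + r ^ 2 / 2 = 5 / 2 * r ^ 2 by ring] at this
    simp only [dot2_sub]
    refine le_trans (le_of_eq ?_) (this.trans (le_of_eq ?_))
    · refine Finset.sum_congr rfl fun i _ => Finset.sum_congr rfl fun j _ => by ring
    · congr 2
      · refine Finset.sum_congr rfl fun i _ => Finset.sum_congr rfl fun j _ => by ring
      · refine Finset.sum_congr rfl fun i _ => Finset.sum_congr rfl fun j _ => by ring)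
  have eL : incJ G J x p f (r ^ 2) - incJ G J x p f (4 * r ^ 2) =
      ∫ n, ∑ i ∈ G, ∑ j ∈ J, (f j n * gk (r ^ 2) (dot2 n (x i - p j)) -
      f j n * gk (4 * r ^ 2) (dot2 n (x i - p j))) ∂gam := by
    unfold incJ
    rw [integral_finsetSum _ fun i _ => integrable_finsetSum J fun j (_ : j ∈ J) => iL i j, ← Finset.sum_sub_distrib]
    refine Finset.sum_congr rfl fun i _ => ?_
    rw [integral_finsetSum _ fun j _ => iL i j, ← Finset.sum_sub_distrib]
    refine Finset.sum_congr rfl fun j _ => ?_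
    rw [integral_sub (iJ _ hr1 i j) (iJ _ hr2 i j)]
  rw [eL]
  refine hmono.trans (le_of_eq ?_)
  rw [integral_add' (sA.const_mul (l / 2)) (sB.const_mul (1 / (2 * l))), integral_const_mul, integral_const_mul]
  congr 2
  · rw [integral_finsetSum _ fun i _ => integrable_finsetSum G fun j (_ : j ∈ G) => iA i j]
    refine Finset.sum_congr rfl fun i _ => ?_
    rw [integral_finsetSum _ fun j _ => iA i j]
    refine Finset.sum_congr rfl fun i' _ => ?_
    rw [integral_sub, integral_add, integral_const_mul, gauss2 _ hr1, gauss2 _ hr2, gauss2 _ hr3]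
    · exact iX _ hr1 i i'
    · exact iX _ hr2 i i'
    · exact (iX _ hr1 i i').add (iX _ hr2 i i')
    · exact (iX _ hr3 i i').const_mul 2
  · rw [integral_finsetSum _ fun i _ => integrable_finsetSum J fun j (_ : j ∈ J) => iB i j]
    refine Finset.sum_congr rfl fun i _ => ?_
    rw [integral_finsetSum _ fun j _ => iB i j]
    refine Finset.sum_congr rfl fun i' _ => ?_
    rw [integral_add, integral_add, integral_const_mul]
    · exact iP _ hr1 i i'
    · exact iP _ hr2 i i'
    · exact (iP _ hr1 i i').add (iP _ hr2 i i')
    · exact (iP _ hr3 i i').const_mul 2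

/-- One dyadic step of the scale decomposition, in terms of the energies of the two families. -/
lemma inc_step (hf : ∀ j, Measurable (f j)) (h0 : ∀ j n, 0 ≤ f j n) (h1 : ∀ j n, f j n ≤ 1)
    (N1 N2 E1 E2 D k d h r : ℝ) (hN1 : 0 < N1) (hN2 : 0 < N2) (hE1 : 0 < E1) (hE2 : 0 < E2)
    (hG : (G.card : ℝ) ≤ N1) (hJ : (J.card : ℝ) ≤ N2) (hD0 : 0 ≤ D) (hD : D ≤ 5) (hk0 : 0 ≤ k) (hk1 : k ≤ 1)
    (hb : 0 ≤ 2 - D - k) (hd : 0 < d) (hr : d ≤ r) (hh : 0 < h)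
    (hfh : ∀ j ∈ J, ∫ n, f j n ∂gam ≤ h)
    (hx : ∀ i ∈ G, ∑ i' ∈ G, (d ^ 2 + nsq (x i - x i')) ^ (-D / 2) ≤ E1 * N1)
    (hp : ∀ j ∈ J, ∑ j' ∈ J, (d ^ 2 + nsq (p j - p j')) ^ (-k / 2) ≤ E2 * N2) :
    incJ G J x p f (r ^ 2) - incJ G J x p f (4 * r ^ 2) ≤
      4 * (N1 * N2) * √(E1 * E2 * d ^ (-(2 - D - k)) * h ^ (1 - k)) := by
  have hr0 : 0 < r := hd.trans_le hr
  have hdr : d ^ 2 ≤ r ^ 2 := by gcongr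
  set a := 4 * r ^ (D - 1) * (E1 * N1 ^ 2) with ha
  set b := 4 * (h / r) ^ (1 - k) * (E2 * N2 ^ 2) with hbdef
  have key : incJ G J x p f (r ^ 2) - incJ G J x p f (4 * r ^ 2) ≤ √(a * b) := by
    refine amgm_opt (by positivity) (by positivity) fun l hl => ?_
    refine (inc_step_aux G J x p f hf h0 h1 r l hr0 hl).trans ?_
    gcongr
    · calc _ ≤ ∑ i ∈ G, ∑ i' ∈ G, 4 * r ^ (D - 1) * (d ^ 2 + nsq (x i - x i')) ^ (-D / 2) := by
            refine Finset.sum_le_sum fun i _ => Finset.sum_le_sum fun i' _ => ?_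
            have := second_diff (r ^ 2 + nsq (x i - x i')) r D hr0 (by linarith [nsq_nonneg (x i - x i')]) hD
            rw [show r ^ 2 + nsq (x i - x i') + 3 * r ^ 2 = 4 * r ^ 2 + nsq (x i - x i') by ring,
              show r ^ 2 + nsq (x i - x i') + 3 / 2 * r ^ 2 = 5 / 2 * r ^ 2 + nsq (x i - x i') by ring] at this
            refine this.trans ?_
            have hnn := nsq_nonneg (x i - x i')
            refine mul_le_mul_of_nonneg_left ?_ (by positivity)
            exact Real.rpow_le_rpow_of_nonpos (by positivity) (by linarith) (by linarith)
        _ = ∑ i ∈ G, 4 * r ^ (D - 1) * ∑ i' ∈ G, (d ^ 2 + nsq (x i - x i')) ^ (-D / 2) := by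
            simp_rw [Finset.mul_sum]
        _ ≤ ∑ i ∈ G, 4 * r ^ (D - 1) * (E1 * N1) := by
            refine Finset.sum_le_sum fun i hi => ?_
            gcongr; exact hx i hi
        _ = G.card * (4 * r ^ (D - 1) * (E1 * N1)) := by rw [Finset.sum_const, nsmul_eq_mul]
        _ ≤ N1 * (4 * r ^ (D - 1) * (E1 * N1)) := by gcongr
        _ = a := by rw [ha]; ring
    · have kb : ∀ j ∈ J, ∀ j' ∈ J, ∀ τ, r ^ 2 ≤ τ → ∫ n, f j n * f j' n * gk τ (dot2 n (p j - p j')) ∂gam ≤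
          (h / r) ^ (1 - k) * (d ^ 2 + nsq (p j - p j')) ^ (-k / 2) := by
        intro j hj j' hj' τ hτ
        have hτ0 : 0 < τ := lt_of_lt_of_le (by positivity) hτ
        have hff : Measurable fun n => f j n * f j' n := (hf j).mul (hf j')
        have hff0 : ∀ n, 0 ≤ f j n * f j' n := fun n => mul_nonneg (h0 j n) (h0 j' n)
        have hff1 : ∀ n, f j n * f j' n ≤ 1 := fun n => mul_le_one₀ (h1 j n) (h0 j' n) (h1 j' n)
        have hnn := nsq_nonneg (p j - p j')
        have e1 : ∫ n, f j n * f j' n * gk τ (dot2 n (p j - p j')) ∂gam ≤ h / r := by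
          refine (integral_mul_gk_le_left hff hff0 hff1 τ hτ0 _).trans ?_
          have i1 : ∫ n, f j n * f j' n ∂gam ≤ h := by
            refine le_trans ?_ (hfh j hj)
            refine integral_mono (integrable_01 hff hff0 hff1) (integrable_01 (hf j) (h0 j) (h1 j)) fun n => ?_
            exact mul_le_of_le_one_right (h0 j n) (h1 j' n)
          rw [← div_eq_mul_one_div]
          exact div_le_div₀ hh.le i1 hr0 (Real.le_sqrt_of_sq_le hτ)
        have e2 : ∫ n, f j n * f j' n * gk τ (dot2 n (p j - p j')) ∂gam ≤ (d ^ 2 + nsq (p j - p j')) ^ (-(1/2) : ℝ) := by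
          refine (integral_mul_gk_le_right hff hff0 hff1 τ hτ0 _).trans ?_
          rw [Real.rpow_neg (by positivity), ← Real.sqrt_eq_rpow, one_div]
          gcongr
          linarith
        refine (interp (integral_nonneg fun n => mul_nonneg (hff0 n) (gk_nonneg _ _)) e1 e2 hk0 hk1).trans (le_of_eq ?_)
        rw [← Real.rpow_mul (by positivity)]
        congr 2; ring
      calc _ ≤ ∑ j ∈ J, ∑ j' ∈ J, 4 * (h / r) ^ (1 - k) * (d ^ 2 + nsq (p j - p j')) ^ (-k / 2) := by
            refine Finset.sum_le_sum fun j hj => Finset.sum_le_sum fun j' hj' => ?_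
            have t1 := kb j hj j' hj' (r ^ 2) le_rfl
            have t2 := kb j hj j' hj' (4 * r ^ 2) (by nlinarith)
            have t3 := kb j hj j' hj' (5 / 2 * r ^ 2) (by nlinarith)
            linarith
        _ = ∑ j ∈ J, 4 * (h / r) ^ (1 - k) * ∑ j' ∈ J, (d ^ 2 + nsq (p j - p j')) ^ (-k / 2) := by
            simp_rw [Finset.mul_sum]
        _ ≤ ∑ j ∈ J, 4 * (h / r) ^ (1 - k) * (E2 * N2) := by
            refine Finset.sum_le_sum fun i hi => ?_
            gcongr; exact hp i hi
        _ = J.card * (4 * (h / r) ^ (1 - k) * (E2 * N2)) := by rw [Finset.sum_const, nsmul_eq_mul]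
        _ ≤ N2 * (4 * (h / r) ^ (1 - k) * (E2 * N2)) := by gcongr
        _ = b := by rw [hbdef]; ring
  refine key.trans ?_
  have e1 : a * b = (4 * (N1 * N2)) ^ 2 * (E1 * E2 * r ^ (-(2 - D - k)) * h ^ (1 - k)) := by
    rw [ha, hbdef, Real.div_rpow hh.le hr0.le]
    have : r ^ (-(2 - D - k)) = r ^ (D - 1) / r ^ (1 - k) := by
      rw [← Real.rpow_sub hr0]; congr 1; ring
    rw [this]
    field_simp
  rw [e1, Real.sqrt_mul (by positivity), Real.sqrt_sq (by positivity)]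
  gcongr 4 * (N1 * N2) * √(E1 * E2 * ?_ * h ^ (1 - k))
  exact Real.rpow_le_rpow_of_nonpos hd hr (by linarith)

end

/-! ### The planar incidence bound -/

/-- Quantitative planar incidence bound: if two families of points have small energies `E1`, `E2`, then few
pairs `(x i, p j)` span a line whose `d`-neighbourhood contains a proportion `M` of the points `x i'`. -/
theorem incidence (c C : ℝ) (hc : 0 < c) (hC : 0 < C) : ∃ K0 : ℝ, 0 < K0 ∧
    ∀ {ι κ : Type} (I G : Finset ι) (J : Finset κ) (x : ι → ℝ × ℝ) (p : κ → ℝ × ℝ)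
      (N1 N2 E1 E2 D k d M : ℝ) (K : ℕ), G ⊆ I → (I.card : ℝ) ≤ N1 → (J.card : ℝ) ≤ N2 →
      0 < N1 → 0 < N2 → 0 < E1 → 0 < E2 → 0 ≤ D → D ≤ 5 → 0 ≤ k → k ≤ 1 → 0 ≤ 2 - D - k →
      0 < d → d ≤ 1 → 1 ≤ d * 2 ^ K → 0 < M →
      (∀ i ∈ I, ∀ j ∈ J, c ^ 2 ≤ nsq (x i - p j) ∧ nsq (x i - p j) ≤ C ^ 2) →
      (∀ i ∈ G, ∑ i' ∈ G, (d ^ 2 + nsq (x i - x i')) ^ (-D / 2) ≤ E1 * N1) →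
      (∀ j ∈ J, ∑ j' ∈ J, (d ^ 2 + nsq (p j - p j')) ^ (-k / 2) ≤ E2 * N2) →
      (((G ×ˢ J).filter fun ij => M * N1 ≤ ((I.filter fun i' =>
          |(x ij.1 - p ij.2).1 * (x i' - p ij.2).2 - (x ij.1 - p ij.2).2 * (x i' - p ij.2).1| ≤ d).card : ℝ)).card : ℝ)
        ≤ K0 * (d / M + K * √(E1 * E2 * d ^ (-(2 - D - k)) * (d / M) ^ (1 - k))) * (N1 * N2) := by
  set κ0 := Real.exp (-(C + 4 / c) ^ 2 / 2) with hκ0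
  have hκ : 0 < κ0 := Real.exp_pos _
  set c2 := Real.exp (-9/2) ^ 2 / 9 with hc2
  have hc2p : 0 < c2 := by positivity
  set B := max 1 (1 / (κ0 * c)) with hB
  have hB1 : 1 ≤ B := le_max_left _ _
  have hB2 : 1 / (κ0 * c) ≤ B := le_max_right _ _
  refine ⟨4 * B / (2 * κ0 * c2), by positivity, ?_⟩
  intro ι κ I G J x p N1 N2 E1 E2 D k d M K hGI hI hJ hN1 hN2 hE1 hE2 hD0 hD hk0 hk1 hb hd hd1 hK hM hxp hx hp
  -- `f j` is the indicator of the conormals of rich strips through `p j`; a strip with `M N1` points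
  -- has smoothed count at least `T`.
  set T := κ0 * M * N1 / d with hT
  have hTp : 0 < T := by positivity
  set f : κ → ℝ × ℝ → ℝ := fun j => incf I x d T (p j) with hf
  have hfm : ∀ j, Measurable (f j) := fun j => measurable_incf I x d T (p j)
  have h0 : ∀ j n, 0 ≤ f j n := fun j => incf_nonneg I x d T (p j)
  have h1 : ∀ j n, f j n ≤ 1 := fun j => incf_le_one I x d T (p j)
  set h := B * (d / M) with hh
  have hhp : 0 < h := by positivity
  have hfh : ∀ j ∈ J, ∫ n, f j n ∂gam ≤ h := by
    intro j hj
    refine (integral_incf_le I x d T (p j) c hd hTp hc fun i hi => (hxp i hi j hj).1).trans ?_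
    calc (I.card : ℝ) / (T * c) ≤ N1 / (T * c) := by gcongr
      _ = 1 / (κ0 * c) * (d / M) := by rw [hT]; field_simp
      _ ≤ h := by rw [hh]; gcongr
  have hGN : (G.card : ℝ) ≤ N1 := le_trans (by exact_mod_cast Finset.card_le_card hGI) hI
  set Y := √(E1 * E2 * d ^ (-(2 - D - k)) * h ^ (1 - k)) with hY
  -- telescoping over dyadic scales
  have tel : ∀ m : ℕ, incJ G J x p f (d ^ 2) - incJ G J x p f ((d * 2 ^ m) ^ 2) ≤ m * (4 * (N1 * N2) * Y) := by
    intro m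
    induction m with
    | zero => simp
    | succ m ih =>
      have := inc_step G J x p f hfm h0 h1 N1 N2 E1 E2 D k d h (d * 2 ^ m) hN1 hN2 hE1 hE2 hGN hJ hD0 hD hk0 hk1
        hb hd (le_mul_of_one_le_right hd.le (one_le_pow₀ (by norm_num))) hhp hfh hx hp
      rw [show 4 * (d * 2 ^ m) ^ 2 = (d * 2 ^ (m + 1)) ^ 2 by rw [pow_succ]; ring] at this
      push_cast
      linarith
  -- At scale `≥ 1` the kernel is at most `1` and only the measure of the rich conormals matters.
  have top : incJ G J x p f ((d * 2 ^ K) ^ 2) ≤ h * (N1 * N2) := by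
    unfold incJ
    calc _ ≤ ∑ i ∈ G, ∑ j ∈ J, h := by
          refine Finset.sum_le_sum fun i _ => Finset.sum_le_sum fun j hj => ?_
          refine (integral_mul_gk_le_left (hfm j) (h0 j) (h1 j) _ (by positivity) _).trans ?_
          rw [Real.sqrt_sq (by positivity)]
          have : 1 / (d * 2 ^ K) ≤ 1 := by rw [div_le_one (by positivity)]; exact hK
          calc _ ≤ h * 1 := mul_le_mul (hfh j hj) this (by positivity) hhp.le
            _ = h := mul_one h
      _ = G.card * (J.card * h) := by simp [Finset.sum_const, nsmul_eq_mul]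
      _ ≤ N1 * (N2 * h) := by gcongr
      _ = _ := by ring
  set bad := (G ×ˢ J).filter fun ij => M * N1 ≤ ((I.filter fun i' =>
          |(x ij.1 - p ij.2).1 * (x i' - p ij.2).2 - (x ij.1 - p ij.2).2 * (x i' - p ij.2).1| ≤ d).card : ℝ) with hbad
  -- At scale `d` every bad pair contributes a definite amount, from the almost-normals of its line.
  have bot : 2 * κ0 * c2 * bad.card ≤ incJ G J x p f (d ^ 2) := by
    unfold incJ
    rw [← Finset.sum_product' (f := fun i j => ∫ n, f j n * gk (d ^ 2) (dot2 n (x i - p j)) ∂gam)]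
    calc 2 * κ0 * c2 * bad.card = ∑ ij ∈ bad, 2 * κ0 * c2 := by rw [Finset.sum_const, nsmul_eq_mul]; ring
      _ ≤ ∑ ij ∈ bad, ∫ n, f ij.2 n * gk (d ^ 2) (dot2 n (x ij.1 - p ij.2)) ∂gam := by
          refine Finset.sum_le_sum fun ij hij => ?_
          rw [hbad, Finset.mem_filter, Finset.mem_product] at hij
          obtain ⟨⟨hi, hj⟩, hcount⟩ := hij
          obtain ⟨S, hSm, hSmu, hS⟩ := normals (x ij.1 - p ij.2) c C d hc hC (hxp _ (hGI hi) _ hj).1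
            (hxp _ (hGI hi) _ hj).2 hd.le hd1
          have hgk : ∀ s, |s| ≤ (C + 4 / c) * d → κ0 / d ≤ gk (d ^ 2) s := by
            intro s hs
            unfold gk
            rw [Real.sqrt_sq hd.le]
            gcongr
            rw [hκ0]
            refine Real.exp_le_exp.2 ?_
            rw [div_le_div_iff₀ (by norm_num) (by positivity)]
            have : s ^ 2 ≤ ((C + 4 / c) * d) ^ 2 := sq_le_sq' (by linarith [(abs_le.1 hs).1]) (abs_le.1 hs).2
            nlinarith
          have hSb : ∀ n ∈ S, κ0 / d ≤ f ij.2 n * gk (d ^ 2) (dot2 n (x ij.1 - p ij.2)) := by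
            intro n hn
            obtain ⟨hn1, hn2⟩ := hS n hn
            have hone : f ij.2 n = 1 := by
              simp only [hf, incf]
              rw [if_pos]
              unfold incF
              calc T = M * N1 * (κ0 / d) := by rw [hT]; ring
                _ ≤ ((I.filter fun i' => |(x ij.1 - p ij.2).1 * (x i' - p ij.2).2
                      - (x ij.1 - p ij.2).2 * (x i' - p ij.2).1| ≤ d).card : ℝ) * (κ0 / d) := by gcongr
                _ = ∑ i' ∈ (I.filter fun i' => |(x ij.1 - p ij.2).1 * (x i' - p ij.2).2
                      - (x ij.1 - p ij.2).2 * (x i' - p ij.2).1| ≤ d), κ0 / d := by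
                      rw [Finset.sum_const, nsmul_eq_mul]
                _ ≤ ∑ i' ∈ (I.filter fun i' => |(x ij.1 - p ij.2).1 * (x i' - p ij.2).2
                      - (x ij.1 - p ij.2).2 * (x i' - p ij.2).1| ≤ d), gk (d ^ 2) (dot2 n (x i' - p ij.2)) := by
                      refine Finset.sum_le_sum fun i' hi' => ?_
                      rw [Finset.mem_filter] at hi'
                      exact hgk _ (hn2 _ (hxp _ hi'.1 _ hj).2 hi'.2)
                _ ≤ _ := Finset.sum_le_sum_of_subset_of_nonneg (Finset.filter_subset _ _)
                      fun _ _ _ => gk_nonneg _ _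
            rw [hone, one_mul]
            refine hgk _ (hn1.trans ?_)
            have : 0 ≤ 4 / c * d := by positivity
            linarith
          calc 2 * κ0 * c2 = κ0 / d * (c2 * (2 * d)) := by field_simp
            _ ≤ κ0 / d * gam.real S := by gcongr
            _ = ∫ n in S, κ0 / d ∂gam := by rw [setIntegral_const, smul_eq_mul]; ring
            _ ≤ ∫ n in S, f ij.2 n * gk (d ^ 2) (dot2 n (x ij.1 - p ij.2)) ∂gam := by
                refine setIntegral_mono_on (integrable_const _).integrableOn
                  (integrable_mul_gk (hfm _) (h0 _) (h1 _) _ (by positivity) _).integrableOn hSm hSb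
            _ ≤ _ := setIntegral_le_integral (integrable_mul_gk (hfm _) (h0 _) (h1 _) _ (by positivity) _)
                (Filter.Eventually.of_forall fun n => mul_nonneg (h0 _ _) (gk_nonneg _ _))
      _ ≤ _ := Finset.sum_le_sum_of_subset_of_nonneg (Finset.filter_subset _ _)
          fun _ _ _ => integral_nonneg fun n => mul_nonneg (h0 _ _) (gk_nonneg _ _)
  have hYle : Y ≤ B * √(E1 * E2 * d ^ (-(2 - D - k)) * (d / M) ^ (1 - k)) := by
    rw [hY, hh]
    have : (B * (d / M)) ^ (1 - k) ≤ B ^ 2 * (d / M) ^ (1 - k) := by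
      rw [Real.mul_rpow (by positivity) (by positivity)]
      gcongr
      rw [← Real.rpow_natCast B 2]
      exact Real.rpow_le_rpow_of_exponent_le hB1 (by push_cast; linarith)
    calc _ ≤ √(E1 * E2 * d ^ (-(2 - D - k)) * (B ^ 2 * (d / M) ^ (1 - k))) := by gcongr
      _ = √(B ^ 2 * (E1 * E2 * d ^ (-(2 - D - k)) * (d / M) ^ (1 - k))) := by congr 1; ring
      _ = _ := by rw [Real.sqrt_mul (by positivity), Real.sqrt_sq (by positivity)]
  set Z := √(E1 * E2 * d ^ (-(2 - D - k)) * (d / M) ^ (1 - k)) with hZ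
  have hfin : 2 * κ0 * c2 * bad.card ≤ 4 * B * (d / M + K * Z) * (N1 * N2) := by
    have t := tel K
    have hKY : (K : ℝ) * (4 * (N1 * N2) * Y) ≤ K * (4 * (N1 * N2) * (B * Z)) := by gcongr
    have hn : h * (N1 * N2) ≤ 4 * B * (d / M) * (N1 * N2) := by
      rw [hh]; gcongr; nlinarith
    linarith
  rw [div_mul_eq_mul_div, div_mul_eq_mul_div, le_div_iff₀ (by positivity)]
  linarith

/-! ### Block families and coded points -/

/-- A finite family of words of equal length, all beginning with `012`, with uniform norm bounds
`ns A_w ≤ PP`, `ns A_w⁻¹ ≤ RQ`. -/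
structure Sys0 where
  W : Finset (List (Fin 3))
  L : ℕ
  PP : ℝ
  RQ : ℝ
  hlen : ∀ w ∈ W, w.length = L
  hpre : ∀ w ∈ W, ∃ v, w = [0, 1, 2] ++ v
  hne : W.Nonempty
  hP : ∀ w ∈ W, ns (Aw w) ≤ PP
  hQ : ∀ w ∈ W, ns (Aw w)⁻¹ ≤ RQ

namespace Sys0
variable (S : Sys0)

/-- Number of words. -/
noncomputable def N : ℝ := S.W.card

/-- The separation scale of one block. -/
noncomputable def al : ℝ := 1 / (S.PP * S.RQ)

/-- All concatenations of `n` words of the family. -/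
def pw : ℕ → Finset (List (Fin 3))
  | 0 => {[]}
  | n + 1 => Finset.image₂ (· ++ ·) S.W (pw n)

lemma N_pos : 0 < S.N := by
  have := S.hne.card_pos
  unfold N; exact_mod_cast this

lemma PP_ge : 3 ≤ S.PP := by
  obtain ⟨w, hw⟩ := S.hne
  exact (three_le_ns_Aw w).trans (S.hP w hw)

lemma RQ_ge : 1 ≤ S.RQ := by
  obtain ⟨w, hw⟩ := S.hne
  exact (one_le_ns_inv w).trans (S.hQ w hw)

lemma al_pos : 0 < S.al := by
  have := S.PP_ge; have := S.RQ_ge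
  unfold al; positivity

lemma al_le : S.al ≤ 1 / 3 := by
  have := S.PP_ge; have := S.RQ_ge
  unfold al
  gcongr
  nlinarith

lemma al_lt_one : S.al < 1 := S.al_le.trans_lt (by norm_num)

lemma length_pw {n : ℕ} {v : List (Fin 3)} (hv : v ∈ S.pw n) : v.length = n * S.L := by
  induction n generalizing v with
  | zero => simp [pw] at hv; simp [hv]
  | succ n ih =>
    simp only [pw, Finset.mem_image₂] at hv
    obtain ⟨a, ha, b, hb, rfl⟩ := hv
    rw [List.length_append, S.hlen a ha, ih hb]; ring

lemma pw_add (n m : ℕ) : S.pw (n + m) = Finset.image₂ (· ++ ·) (S.pw n) (S.pw m) := by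
  induction n with
  | zero => ext v; simp [pw]
  | succ n ih =>
    rw [show n + 1 + m = (n + m) + 1 by ring]
    ext v
    simp only [pw, ih, Finset.mem_image₂]
    constructor
    · rintro ⟨a, ha, b, ⟨b1, hb1, b2, hb2, rfl⟩, rfl⟩
      exact ⟨a ++ b1, ⟨a, ha, b1, hb1, rfl⟩, b2, hb2, by simp⟩
    · rintro ⟨c, ⟨a, ha, b1, hb1, rfl⟩, b2, hb2, rfl⟩
      exact ⟨a, ha, b1 ++ b2, ⟨b1, hb1, b2, hb2, rfl⟩, by simp⟩

lemma append_inj_pw {n : ℕ} {a a' b b' : List (Fin 3)} (ha : a ∈ S.pw n) (ha' : a' ∈ S.pw n)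
    (h : a ++ b = a' ++ b') : a = a' ∧ b = b' :=
  List.append_inj h ((S.length_pw ha).trans (S.length_pw ha').symm)

lemma card_pw (n : ℕ) : ((S.pw n).card : ℝ) = S.N ^ n := by
  induction n with
  | zero => simp [pw]
  | succ n ih =>
    rw [pow_succ', ← ih]
    unfold N
    rw [← Nat.cast_mul]
    congr 1
    rw [pw, Finset.card_image₂_iff]
    rintro ⟨a, b⟩ ⟨ha, hb⟩ ⟨a', b'⟩ ⟨ha', hb'⟩ h
    have := List.append_inj h ((S.hlen a ha).trans (S.hlen a' ha').symm)
    exact Prod.ext this.1 this.2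

lemma ns_pw {n : ℕ} {v : List (Fin 3)} (hv : v ∈ S.pw n) : ns (Aw v) ≤ 3 * S.PP ^ n := by
  induction n generalizing v with
  | zero =>
    simp [pw] at hv
    rw [hv, Aw_nil]
    simp [ns, Matrix.one_apply, Fin.sum_univ_three]
    try norm_num
  | succ n ih =>
    simp only [pw, Finset.mem_image₂] at hv
    obtain ⟨a, ha, b, hb, rfl⟩ := hv
    have h0 := S.PP_ge
    calc ns (Aw (a ++ b)) ≤ ns (Aw a) * ns (Aw b) := ns_Aw_append_le a b
      _ ≤ S.PP * (3 * S.PP ^ n) := by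
        have := S.hP a ha; have := ih hb; have := ns_nonneg (Aw a); have := ns_nonneg (Aw b)
        gcongr
      _ = _ := by ring

lemma ns_inv_pw {n : ℕ} {v : List (Fin 3)} (hv : v ∈ S.pw n) : ns (Aw v)⁻¹ ≤ 3 * S.RQ ^ n := by
  induction n generalizing v with
  | zero =>
    simp [pw] at hv
    rw [hv, Aw_nil]
    simp [ns, Matrix.one_apply, Fin.sum_univ_three]
    try norm_num
  | succ n ih =>
    simp only [pw, Finset.mem_image₂] at hv
    obtain ⟨a, ha, b, hb, rfl⟩ := hv
    have h0 := S.RQ_ge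
    calc ns (Aw (a ++ b))⁻¹ ≤ ns (Aw a)⁻¹ * ns (Aw b)⁻¹ := ns_inv_append_le a b
      _ ≤ S.RQ * (3 * S.RQ ^ n) := by
        have := S.hQ a ha; have := ih hb; have := ns_nonneg (Aw a)⁻¹; have := ns_nonneg (Aw b)⁻¹
        gcongr
      _ = _ := by ring

end Sys0

/-- The base point `f_{012}(e_0)`. -/
noncomputable def y0 : Fin 3 → ℝ := ![4/7, 2/7, 1/7]

lemma y0_mem : y0 ∈ Sx := by
  refine ⟨fun i => ?_, ?_⟩
  · fin_cases i <;> simp [y0] <;> norm_num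
  · simp [y0, omega3]; norm_num

/-- The point of the gasket coded by `v`. -/
noncomputable def Xp (v : List (Fin 3)) : Fin 3 → ℝ := cv v y0

lemma Xp_mem (v : List (Fin 3)) : Xp v ∈ Sx := cv_mem y0_mem v

lemma Xp_append (u v : List (Fin 3)) : Xp (u ++ v) = cv u (Xp v) := cv_append y0_mem u v

lemma Aw_h : Aw [0, 1, 2] = !![4,3,2; 2,2,1; 1,1,1] := by
  simp [Aw, A, Matrix.mul_fin_three]
  norm_num

lemma cv_h_ge {x : Fin 3 → ℝ} (hx : x ∈ Sx) (i : Fin 3) : 1 / 7 ≤ cv [0, 1, 2] x i := by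
  have h0 := hx.1 0; have h1 := hx.1 1; have h2 := hx.1 2
  have hs : x 0 + x 1 + x 2 = 1 := hx.2
  have hom := omega_pos hx [0, 1, 2]
  rw [cv, Pi.smul_apply, smul_eq_mul, ← div_eq_inv_mul, le_div_iff₀ hom]
  rw [Aw_h]
  fin_cases i <;> simp [Matrix.mulVec, dotProduct, Fin.sum_univ_three, omega3] <;> linarith

lemma Sys0.Xp_ge (S : Sys0) {m : ℕ} {v : List (Fin 3)} (hv : v ∈ S.pw m) (i : Fin 3) : 1 / 7 ≤ Xp v i := by
  cases m with
  | zero =>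
    simp [pw] at hv
    rw [hv, Xp, cv_nil y0_mem]
    fin_cases i <;> simp [y0] <;> norm_num
  | succ m =>
    simp only [pw, Finset.mem_image₂] at hv
    obtain ⟨a, ha, b, hb, rfl⟩ := hv
    obtain ⟨a', rfl⟩ := S.hpre a ha
    rw [List.append_assoc, Xp_append]
    exact cv_h_ge (Xp_mem _) i

namespace Sys0
variable (S : Sys0)

/-- Points near a coded point share its first `n` blocks. -/
lemma prefix_of_close {n m : ℕ} {a a' b b' : List (Fin 3)} (ha : a ∈ S.pw n) (ha' : a' ∈ S.pw n)
    (hb : b ∈ S.pw m) (h : n1 (Xp (a ++ b) - Xp (a' ++ b')) ≤ 1 / 64 * S.al ^ n) : a = a' := by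
  by_contra hne
  have hl := (S.length_pw ha).trans (S.length_pw ha').symm
  have h1 : ¬ a <+: a' := fun hp => hne (hp.eq_of_length hl)
  have h2 : ¬ a' <+: a := fun hp => hne (hp.eq_of_length hl.symm).symm
  have := separation a a' h1 h2 (Xp_mem b') (Xp_mem b) (S.Xp_ge hb) (by norm_num)
  rw [← Xp_append, ← Xp_append] at this
  have h3 := S.PP_ge
  have h4 := S.RQ_ge
  have h5 : 1 / 63 * S.al ^ n ≤ 1 / 7 / (ns (Aw a) * ns (Aw a)⁻¹) := by
    have hp1 := ns_Aw_pos a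
    have hp2 := ns_inv_pos a
    calc 1 / 63 * S.al ^ n = 1 / 7 / ((3 * S.PP ^ n) * (3 * S.RQ ^ n)) := by
          unfold al; rw [div_pow, mul_pow]; field_simp; norm_num
      _ ≤ _ := by
          have := S.ns_pw ha; have := S.ns_inv_pw ha
          gcongr
  have := pow_pos S.al_pos n
  linarith

/-- Number of coded points of generation `m` within distance comparable to `al ^ n` of `Xp v`. -/
noncomputable def ball (m n : ℕ) (v : List (Fin 3)) : ℝ :=
  ((S.pw m).filter fun v' => n1 (Xp v - Xp v') ≤ 1 / 64 * S.al ^ n).card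

/-- Frostman-type property with exponent `D` for most coded points. -/
def Ball (D : ℝ) : Prop := ∃ C θ : ℝ, ∃ K : ℕ, 0 < C ∧ 0 < θ ∧ θ < 1 ∧ ∀ n m : ℕ, K * n ≤ m →
  (((S.pw m).filter fun v => S.al ^ (n * D) * S.N ^ m < S.ball m n v).card : ℝ) ≤ C * θ ^ n * S.N ^ m

lemma ball_le (m n : ℕ) (v : List (Fin 3)) : S.ball m n v ≤ S.N ^ m := by
  rw [← card_pw]
  unfold ball
  exact_mod_cast Finset.card_filter_le _ _

lemma filter_le (m : ℕ) (p : List (Fin 3) → Prop) [DecidablePred p] :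
    (((S.pw m).filter p).card : ℝ) ≤ S.N ^ m := by
  rw [← card_pw]
  exact_mod_cast Finset.card_filter_le _ _

/-- In the conformal case separation alone gives the ball property. -/
lemma Ball_of_card (s : ℝ) (h : S.al ^ (-s) ≤ S.N) : S.Ball s := by
  refine ⟨1, 1 / 2, 1, by norm_num, by norm_num, by norm_num, fun n m hm => ?_⟩
  rw [one_mul] at hm
  obtain ⟨k, rfl⟩ := Nat.exists_eq_add_of_le hm
  have : (S.pw (n + k)).filter (fun v => S.al ^ (n * s) * S.N ^ (n + k) < S.ball (n + k) n v) = ∅ := by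
    rw [Finset.filter_eq_empty_iff]
    intro v hv
    rw [not_lt]
    rw [pw_add, Finset.mem_image₂] at hv
    obtain ⟨a, ha, b, hb, rfl⟩ := hv
    have h1 : S.ball (n + k) n (a ++ b) ≤ S.N ^ k := by
      rw [← card_pw]
      unfold ball
      have : ((S.pw (n + k)).filter fun v' => n1 (Xp (a ++ b) - Xp v') ≤ 1 / 64 * S.al ^ n) ⊆
          (S.pw k).image (a ++ ·) := by
        intro v' hv'
        rw [Finset.mem_filter, pw_add, Finset.mem_image₂] at hv'
        obtain ⟨⟨a', ha', b', hb', rfl⟩, hcl⟩ := hv'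
        rw [← S.prefix_of_close ha ha' hb hcl]
        exact Finset.mem_image_of_mem _ hb'
      exact_mod_cast (Finset.card_le_card this).trans Finset.card_image_le
    refine h1.trans ?_
    have h2 : (S.al ^ (-s)) ^ n ≤ S.N ^ n := by
      have := Real.rpow_nonneg S.al_pos.le (-s)
      gcongr
    have h3 : S.al ^ (n * s) * (S.al ^ (-s)) ^ n = 1 := by
      rw [← Real.rpow_natCast (S.al ^ (-s)) n, ← Real.rpow_mul S.al_pos.le, ← Real.rpow_add S.al_pos]
      ring_nf; simp
    have h4 := pow_pos S.N_pos k
    have h5 := Real.rpow_pos_of_pos S.al_pos (n * s)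
    rw [pow_add]
    calc S.N ^ k = S.al ^ (n * s) * (S.al ^ (-s)) ^ n * S.N ^ k := by rw [h3, one_mul]
      _ ≤ S.al ^ (n * s) * S.N ^ n * S.N ^ k := by gcongr
      _ = _ := by ring
  rw [this]
  have := S.N_pos
  simp; positivity

end Sys0

/-! ### From ball estimates to Hausdorff dimension -/

lemma toE_mem_simplex {x : Fin 3 → ℝ} (hx : x ∈ Sx) : toE x ∈ simplex := by
  rw [mem_simplex, ofE_toE]; exact hx

lemma e0_mem : basis3 0 ∈ Sx := by
  refine ⟨fun i => ?_, ?_⟩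
  · fin_cases i <;> simp [basis3]
  · simp [basis3, omega3]

lemma y0_eq : y0 = cv [0, 1, 2] (basis3 0) := by
  rw [cv, Aw_h]
  funext i
  fin_cases i <;> simp [y0, basis3, omega3, Matrix.mulVec, dotProduct, Fin.sum_univ_three] <;> norm_num

lemma cv_replicate_e0 (k : ℕ) : cv (List.replicate k 0) (basis3 0) = basis3 0 := by
  induction k with
  | zero => simp [cv_nil e0_mem]
  | succ k ih =>
    rw [List.replicate_succ, ← List.singleton_append, cv_append e0_mem, ih, cv, Aw_singleton]
    funext i
    fin_cases i <;> simp [A, basis3, omega3, Matrix.mulVec, dotProduct, Fin.sum_univ_three]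

/-- Coded points lie in the gasket: `e_0` is fixed by the letter `0`, so they have infinite codings. -/
lemma Xp_mem_gasket (v : List (Fin 3)) : toE (Xp v) ∈ gasket := by
  rw [gasket, Set.mem_iInter]
  intro n
  have h : Xp v = cv (v ++ ([0, 1, 2] ++ List.replicate (n + 1) 0)) (basis3 0) := by
    rw [cv_append e0_mem, cv_append e0_mem, cv_replicate_e0, ← y0_eq]; rfl
  set u := v ++ ([0, 1, 2] ++ List.replicate (n + 1) 0) with hu
  have hl : n + 1 ≤ u.length := by simp [hu]; omega
  simp only [Set.mem_iUnion, Set.mem_ofPred_eq, Set.mem_image]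
  refine ⟨u.take (n + 1), by simp [hl], toE (cv (u.drop (n + 1)) (basis3 0)),
    toE_mem_simplex (cv_mem e0_mem _), ?_⟩
  rw [fmap_eq, ofE_toE, ← cv_append e0_mem, List.take_append_drop, h]

lemma continuous_ofE : Continuous ofE := PiLp.continuous_ofLp 2 _
lemma continuous_toE : Continuous toE := PiLp.continuous_toLp 2 _

lemma continuous_omega3 : Continuous omega3 := by unfold omega3; fun_prop

lemma isCompact_simplex : IsCompact simplex := by
  refine Metric.isCompact_of_isClosed_isBounded ?_ ?_
  · have : simplex = (⋂ i, {x | 0 ≤ ofE x i}) ∩ {x | omega3 (ofE x) = 1} := by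
      ext x; simp [simplex]
    rw [this]
    refine IsClosed.inter (isClosed_iInter fun i => ?_) ?_
    · exact isClosed_le continuous_const ((continuous_apply i).comp continuous_ofE)
    · exact isClosed_eq (continuous_omega3.comp continuous_ofE) continuous_const
  · rw [Metric.isBounded_iff]
    refine ⟨2, fun x hx y hy => (dist_le_n1 x y).trans ?_⟩
    have h1 := n1_Sx ((mem_simplex _).1 hx)
    have h2 := n1_Sx ((mem_simplex _).1 hy)
    have := n1_sub (ofE x) (ofE y)
    linarith

lemma continuousOn_fmap (w : List (Fin 3)) : ContinuousOn (fmap w) simplex := by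
  unfold fmap
  refine continuous_toE.comp_continuousOn ?_
  have h1 : Continuous fun x : E3 => Aw w *ᵥ ofE x :=
    continuous_const.matrix_mulVec continuous_ofE
  have h2 : ContinuousOn (fun x : E3 => (omega3 (Aw w *ᵥ ofE x))⁻¹) simplex :=
    (continuous_omega3.comp h1).continuousOn.inv₀
      fun x hx => (omega_pos ((mem_simplex _).1 hx) w).ne'
  exact h2.smul h1.continuousOn

lemma isCompact_gasket : IsCompact gasket := by
  have hc : ∀ n : ℕ, IsCompact (⋃ w ∈ {w : List (Fin 3) | w.length = n + 1}, fmap w '' simplex) :=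
    fun n => (List.finite_length_eq (Fin 3) (n + 1)).isCompact_biUnion fun w _ =>
      isCompact_simplex.image_of_continuousOn (continuousOn_fmap w)
  refine (hc 0).of_isClosed_subset (isClosed_iInter fun n => (hc n).isClosed) ?_
  exact Set.iInter_subset _ 0

namespace Sys0
variable (S : Sys0)

/-- The ball property prevents the gasket from being covered by finitely many balls whose radii
have a small `D`-th power sum. -/
lemma no_cover {D : ℝ} (hD : 0 < D) (hB : S.Ball D) : ∃ ε : ℝ, 0 < ε ∧
    ∀ (t : Finset ℕ) (c : ℕ → E3) (ρ : ℕ → ℝ), (∀ i ∈ t, 0 < ρ i) →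
      gasket ⊆ (⋃ i ∈ t, Metric.closedBall (c i) (ρ i)) → ¬ ∑ i ∈ t, ρ i ^ D ≤ ε := by
  classical
  obtain ⟨C, θ, K, hC, hθ, hθ1, hbad⟩ := hB
  have ha := S.al_pos
  have ha1 := S.al_lt_one
  -- From scale `n0` on, the exceptional words of all scales together are at most a quarter of all.
  obtain ⟨n0, hn0⟩ : ∃ n0 : ℕ, C * (θ ^ n0 / (1 - θ)) ≤ 1 / 4 := by
    have h1 : 0 < (1 - θ) / (4 * C) := by
      have : 0 < 1 - θ := by linarith
      positivity
    obtain ⟨n0, h⟩ := exists_pow_lt_of_lt_one h1 hθ1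
    refine ⟨n0, ?_⟩
    have h2 : 0 < 1 - θ := by linarith
    rw [lt_div_iff₀ (by positivity)] at h
    rw [← mul_div_assoc, div_le_iff₀ h2]
    linarith
  have hC2 : (0:ℝ) < (384 / S.al) ^ D := by positivity
  refine ⟨min ((S.al ^ n0 / 384) ^ D) (1 / (4 * (384 / S.al) ^ D)), by positivity, ?_⟩
  intro t c ρ hρ hcov hsum
  have hrho : ∀ i ∈ t, 384 * ρ i ≤ S.al ^ n0 := by
    intro i hi
    have h1 : ρ i ^ D ≤ (S.al ^ n0 / 384) ^ D :=
      (Finset.single_le_sum (f := fun i => ρ i ^ D)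
        (fun j hj => Real.rpow_nonneg (hρ j hj).le D) hi).trans (hsum.trans (min_le_left _ _))
    rw [Real.rpow_le_rpow_iff (hρ i hi).le (by positivity) hD] at h1
    linarith
  -- `nn i` is the scale of the `i`-th ball.
  have hex : ∀ i : ℕ, ∃ n : ℕ, i ∈ t → S.al ^ (n + 1) < 384 * ρ i ∧ 384 * ρ i ≤ S.al ^ n := by
    intro i
    by_cases hi : i ∈ t
    · obtain ⟨n, h1, h2⟩ := exists_nat_pow_near_of_lt_one (x := 384 * ρ i) (y := S.al)
        (by have := hρ i hi; positivity) ((hrho i hi).trans (pow_le_one₀ ha.le ha1.le)) ha ha1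
      exact ⟨n, fun _ => ⟨h1, h2⟩⟩
    · exact ⟨0, fun h => absurd h hi⟩
  choose nn hnn using hex
  have hnn0 : ∀ i ∈ t, n0 ≤ nn i := by
    intro i hi
    have := (hnn i hi).1.trans_le (hrho i hi)
    have := (pow_lt_pow_iff_right_of_lt_one₀ ha ha1).1 this
    omega
  set nm := t.sup nn with hnm
  set m := K * nm with hm
  set bad := fun n : ℕ => (S.pw m).filter fun v => S.al ^ (n * D) * S.N ^ m < S.ball m n v with hbd
  set good := fun i : ℕ => (S.pw m).filter fun v =>
    toE (Xp v) ∈ Metric.closedBall (c i) (ρ i) ∧ v ∉ bad (nn i) with hgd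
  -- Every word is bad at some scale, or is a good word coding a point of some ball.
  have hsub : S.pw m ⊆ (Finset.Ico n0 (nm + 1)).biUnion bad ∪ t.biUnion good := by
    intro v hv
    have h1 := hcov (Xp_mem_gasket v)
    simp only [Set.mem_iUnion] at h1
    obtain ⟨i, hi, h2⟩ := h1
    rw [Finset.mem_union, Finset.mem_biUnion, Finset.mem_biUnion]
    by_cases hb : v ∈ bad (nn i)
    · left
      exact ⟨nn i, Finset.mem_Ico.2 ⟨hnn0 i hi, Nat.lt_succ_of_le (Finset.le_sup hi)⟩, hb⟩
    · right
      exact ⟨i, hi, Finset.mem_filter.2 ⟨hv, h2, hb⟩⟩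
  have hcard : S.N ^ m ≤ ∑ n ∈ Finset.Ico n0 (nm + 1), ((bad n).card : ℝ) +
      ∑ i ∈ t, ((good i).card : ℝ) := by
    rw [← card_pw]
    have h1 := (Finset.card_le_card hsub).trans (Finset.card_union_le _ _)
    have h2 := Finset.card_biUnion_le (s := Finset.Ico n0 (nm + 1)) (t := bad)
    have h3 := Finset.card_biUnion_le (s := t) (t := good)
    exact_mod_cast h1.trans (add_le_add h2 h3)
  have hNm := pow_pos S.N_pos m
  have hb1 : ∑ n ∈ Finset.Ico n0 (nm + 1), ((bad n).card : ℝ) ≤ 1 / 4 * S.N ^ m := by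
    calc _ ≤ ∑ n ∈ Finset.Ico n0 (nm + 1), C * θ ^ n * S.N ^ m := by
          refine Finset.sum_le_sum fun n hn => hbad n m ?_
          rw [Finset.mem_Ico] at hn
          exact Nat.mul_le_mul_left K (by omega)
      _ = C * (∑ n ∈ Finset.Ico n0 (nm + 1), θ ^ n) * S.N ^ m := by
          rw [Finset.mul_sum, Finset.sum_mul]
      _ ≤ C * (θ ^ n0 / (1 - θ)) * S.N ^ m := by
          have := geom_sum_Ico_le_of_lt_one (m := n0) (n := nm + 1) hθ.le hθ1
          gcongr
      _ ≤ _ := by gcongr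
  have hb2 : ∑ i ∈ t, ((good i).card : ℝ) ≤ 1 / 4 * S.N ^ m := by
    calc _ ≤ ∑ i ∈ t, (384 / S.al) ^ D * ρ i ^ D * S.N ^ m := by
          refine Finset.sum_le_sum fun i hi => ?_
          have hpos : 0 ≤ (384 / S.al) ^ D * ρ i ^ D * S.N ^ m := by
            have := (hρ i hi).le
            positivity
          rcases (good i).eq_empty_or_nonempty with h | ⟨v, hv⟩
          · rw [h]; simpa using hpos
          have hvm := Finset.mem_filter.1 hv
          have h1 : ((good i).card : ℝ) ≤ S.ball m (nn i) v := by
            unfold ball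
            refine Nat.cast_le.2 (Finset.card_le_card fun v' hv' => ?_)
            have hv'm := Finset.mem_filter.1 hv'
            refine Finset.mem_filter.2 ⟨hv'm.1, ?_⟩
            have h2 := n1_le_dist (toE (Xp v)) (toE (Xp v'))
            rw [ofE_toE, ofE_toE] at h2
            have h3 := dist_triangle_right (toE (Xp v)) (toE (Xp v')) (c i)
            have h4 := Metric.mem_closedBall.1 hvm.2.1
            have h5 := Metric.mem_closedBall.1 hv'm.2.1
            have h6 := (hnn i hi).2
            linarith
          have h2 : S.ball m (nn i) v ≤ S.al ^ (nn i * D) * S.N ^ m := by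
            by_contra hcon
            exact hvm.2.2 (Finset.mem_filter.2 ⟨hvm.1, not_le.1 hcon⟩)
          have h3 : S.al ^ (nn i * D) ≤ (384 / S.al) ^ D * ρ i ^ D := by
            rw [← Real.mul_rpow (by positivity) (hρ i hi).le, Real.rpow_mul ha.le,
              Real.rpow_natCast]
            refine Real.rpow_le_rpow (by positivity) ?_ hD.le
            rw [div_mul_eq_mul_div, le_div_iff₀ ha, ← pow_succ]
            exact (hnn i hi).1.le
          calc _ ≤ _ := h1.trans h2
            _ ≤ _ := by gcongr
      _ = (384 / S.al) ^ D * (∑ i ∈ t, ρ i ^ D) * S.N ^ m := by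
          rw [Finset.mul_sum, Finset.sum_mul]
      _ ≤ (384 / S.al) ^ D * (1 / (4 * (384 / S.al) ^ D)) * S.N ^ m := by
          have := hsum.trans (min_le_right _ _)
          gcongr
      _ = _ := by field_simp
  linarith

/-- The ball property for exponent `D` bounds the dimension below by `D`: by compactness a cover with small
`D`-sum may be replaced by a finite one by balls. -/
lemma le_dimH {D : ℝ} (hD : 0 < D) (hB : S.Ball D) : ENNReal.ofReal D ≤ dimH gasket := by
  obtain ⟨ε, hε, hno⟩ := S.no_cover hD hB
  by_contra hlt
  rw [not_le] at hlt
  have hz : μH[D] gasket = 0 := by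
    have := hausdorffMeasure_of_dimH_lt (d := D.toNNReal) hlt
    rwa [Real.coe_toNNReal D hD.le] at this
  rw [Measure.hausdorffMeasure_apply] at hz
  simp only [ENNReal.iSup_eq_zero] at hz
  have hz1 := hz 1 one_pos
  obtain ⟨η, hη⟩ : ∃ η : ℝ, η = ε / (2 * 2 ^ D) := ⟨_, rfl⟩
  have hη0 : 0 < η := by rw [hη]; positivity
  have hz2 := hz1.trans_lt (ENNReal.ofReal_pos.2 hη0)
  simp only [iInf_lt_iff] at hz2
  obtain ⟨t, hcov, hdiam, hsum⟩ := hz2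
  set d : ℕ → ℝ := fun i => (Metric.ediam (t i)).toReal with hd
  have hd0 : ∀ i, 0 ≤ d i := fun i => ENNReal.toReal_nonneg
  have hfin : ∀ i, Metric.ediam (t i) ≠ ⊤ := fun i => ((hdiam i).trans_lt ENNReal.one_lt_top).ne
  set e : ℕ → ℝ := fun i => (η * (1 / 2) ^ (i + 1)) ^ (1 / D) with he
  have he0 : ∀ i, 0 < e i := fun i => by rw [he]; positivity
  have heD : ∀ i, e i ^ D = η * (1 / 2) ^ (i + 1) := by
    intro i
    rw [he, ← Real.rpow_mul (by positivity)]
    rw [one_div_mul_cancel hD.ne', Real.rpow_one]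
  have hc : ∀ i, ∃ c : E3, (t i).Nonempty → c ∈ t i := by
    intro i
    rcases (t i).eq_empty_or_nonempty with h | ⟨c, hc⟩
    · exact ⟨0, fun h' => absurd h h'.ne_empty⟩
    · exact ⟨c, fun _ => hc⟩
  choose c hc using hc
  have hsub : ∀ i, t i ⊆ Metric.ball (c i) (d i + e i) := by
    intro i x hx
    have h1 := Metric.edist_le_ediam_of_mem hx (hc i ⟨x, hx⟩)
    rw [Metric.mem_ball]
    have h2 : dist x (c i) ≤ d i := by
      rw [dist_edist]
      exact ENNReal.toReal_mono (hfin i) h1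
    linarith [he0 i]
  obtain ⟨u, hu⟩ := isCompact_gasket.elim_finite_subcover
    (fun i => Metric.ball (c i) (d i + e i)) (fun i => Metric.isOpen_ball)
    (hcov.trans (Set.iUnion_mono hsub))
  refine hno u c (fun i => d i + e i) (fun i _ => by linarith [hd0 i, he0 i])
    (hu.trans (Set.iUnion₂_mono fun i _ => Metric.ball_subset_closedBall)) ?_
  have hs1 : ∑ i ∈ u, d i ^ D ≤ η := by
    rw [← ENNReal.ofReal_le_ofReal_iff hη0.le,
      ENNReal.ofReal_sum_of_nonneg fun i _ => Real.rpow_nonneg (hd0 i) D]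
    refine le_trans ?_ hsum.le
    refine le_trans ?_ (ENNReal.sum_le_tsum u)
    refine Finset.sum_le_sum fun i _ => ?_
    rcases (t i).eq_empty_or_nonempty with h | h
    · simp [hd, h, Real.zero_rpow hD.ne']
    · rw [ciSup_pos h, ← ENNReal.ofReal_rpow_of_nonneg (hd0 i) hD.le, hd]
      simp only
      rw [ENNReal.ofReal_toReal (hfin i)]
  have hs2 : ∑ i ∈ u, e i ^ D ≤ η := by
    have hg : HasSum (fun i : ℕ => η * (1 / 2 : ℝ) ^ (i + 1)) (η * 1) := by
      refine HasSum.mul_left η ?_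
      simpa [pow_succ', div_eq_mul_inv] using hasSum_geometric_two' 1
    have := sum_le_hasSum u (fun i _ => by positivity) hg
    rw [mul_one] at this
    refine le_trans (le_of_eq ?_) this
    exact Finset.sum_congr rfl fun i _ => heD i
  calc ∑ i ∈ u, (d i + e i) ^ D ≤ ∑ i ∈ u, 2 ^ D * (d i ^ D + e i ^ D) := by
        refine Finset.sum_le_sum fun i _ => ?_
        have h1 : d i + e i ≤ 2 * max (d i) (e i) := by
          have := le_max_left (d i) (e i); have := le_max_right (d i) (e i); linarith
        have h0 := hd0 i
        have h0' := (he0 i).le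
        have hm : 0 ≤ max (d i) (e i) := le_max_of_le_left h0
        calc _ ≤ (2 * max (d i) (e i)) ^ D := Real.rpow_le_rpow (by positivity) h1 hD.le
          _ = 2 ^ D * max (d i) (e i) ^ D := Real.mul_rpow (by norm_num) hm
          _ ≤ _ := by
            gcongr
            have a1 := Real.rpow_nonneg h0 D
            have a2 := Real.rpow_nonneg h0' D
            rcases max_choice (d i) (e i) with h | h <;> rw [h] <;> linarith
    _ = 2 ^ D * (∑ i ∈ u, d i ^ D + ∑ i ∈ u, e i ^ D) := by
        rw [← Finset.mul_sum, Finset.sum_add_distrib]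
    _ ≤ 2 ^ D * (η + η) := by gcongr
    _ = ε := by rw [hη]; field_simp; norm_num

end Sys0

/-! ### Expanding block families and tubes -/

/-- A block family whose inverse matrices expand a common cone by at least the factor `RR`, and which
has at least `rho * al ^ (-s)` words, where `rho = PP / (RR * RQ)` and `al = 1 / (PP * RQ)`. The basis
vector `i0` lies in the cone; `th` measures how far `rho` may fall below `al ^ (1/2)`. -/
structure Sys extends Sys0 where
  s : ℝ
  th : ℝ
  RR : ℝ
  cone : (Fin 3 → ℝ) → Prop
  i0 : Fin 3
  hs : 3 / 2 < s
  hs2 : s < 2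
  hth : 0 ≤ th
  hth2 : th < s - 3 / 2
  hcone0 : cone (basis3 i0)
  hcone : ∀ w ∈ W, ∀ q, cone q → cone ((Aw w)⁻¹ *ᵥ q) ∧ RR * n1 q ≤ n1 ((Aw w)⁻¹ *ᵥ q)
  hRR : 0 < RR
  hRQ : RR ≤ RQ
  hrho : PP < RR * RQ
  hN : PP / (RR * RQ) * (1 / (PP * RQ)) ^ (-s) ≤ W.card
  hal : (1 / (PP * RQ)) ^ (1 / 2 + th) ≤ PP / (RR * RQ)

namespace Sys
variable (S : Sys)

/-- The width, in the simplex, of the tubes mapped by one block into balls of radius `≈ al`. -/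
noncomputable def rho : ℝ := S.PP / (S.RR * S.RQ)

/-- The unnormalised covector attached to `w`. -/
noncomputable def q (w : List (Fin 3)) : Fin 3 → ℝ := (Aw w)⁻¹ *ᵥ basis3 S.i0

/-- The normalised covector attached to `w`. -/
noncomputable def p (w : List (Fin 3)) : Fin 3 → ℝ := (n1 (S.q w))⁻¹ • S.q w

lemma rho_pos : 0 < S.rho := by
  have := S.PP_ge; have := S.RQ_ge; have := S.hRR
  unfold rho; positivity

lemma rho_lt_one : S.rho < 1 := by
  have := S.RQ_ge; have := S.hRR
  unfold rho; rw [div_lt_one (by positivity)]; exact S.hrho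

lemma N_ge : S.rho * S.al ^ (-S.s) ≤ S.N := S.hN

lemma al_rho : S.al ^ (1 / 2 + S.th) ≤ S.rho := S.hal

lemma al_le_rho : S.al ≤ S.rho := by
  have h := S.hRR; have h1 := S.hRQ; have h2 := S.PP_ge; have h3 := S.RQ_ge
  refine le_trans ?_ S.al_rho
  have : S.al = S.al ^ (1:ℝ) := (Real.rpow_one _).symm
  conv_lhs => rw [this]
  refine Real.rpow_le_rpow_of_exponent_ge S.al_pos S.al_lt_one.le ?_
  linarith [S.hth2, S.hs2]

lemma cone_pw {n : ℕ} {v : List (Fin 3)} (hv : v ∈ S.pw n) (x : Fin 3 → ℝ) (hx : S.cone x) :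
    S.cone ((Aw v)⁻¹ *ᵥ x) ∧ S.RR ^ n * n1 x ≤ n1 ((Aw v)⁻¹ *ᵥ x) := by
  induction n generalizing v x with
  | zero =>
    simp [Sys0.pw] at hv
    subst hv
    simp [Aw_nil, hx]
  | succ n ih =>
    simp only [Sys0.pw, Finset.mem_image₂] at hv
    obtain ⟨a, ha, b, hb, rfl⟩ := hv
    rw [inv_Aw_append, ← Matrix.mulVec_mulVec]
    obtain ⟨h1, h2⟩ := S.hcone a ha x hx
    obtain ⟨h3, h4⟩ := ih hb _ h1
    refine ⟨h3, le_trans ?_ h4⟩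
    rw [pow_succ, mul_assoc]
    have := S.hRR
    gcongr

lemma n1_basis3 (i : Fin 3) : n1 (basis3 i) = 1 := by
  fin_cases i <;> simp [n1, basis3]

lemma q_ge {n : ℕ} {v : List (Fin 3)} (hv : v ∈ S.pw n) : S.RR ^ n ≤ n1 (S.q v) := by
  have := (S.cone_pw hv _ S.hcone0).2
  rwa [n1_basis3, mul_one] at this

lemma q_pos {n : ℕ} {v : List (Fin 3)} (hv : v ∈ S.pw n) : 0 < n1 (S.q v) :=
  (pow_pos S.hRR n).trans_le (S.q_ge hv)

lemma n1_p {n : ℕ} {v : List (Fin 3)} (hv : v ∈ S.pw n) : n1 (S.p v) = 1 := by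
  have := S.q_pos hv
  rw [p, n1_smul, abs_of_pos (by positivity), inv_mul_cancel₀ this.ne']

/-- Number of coded points of generation `m` in the `t`-tube around the line through `Xp y`
and the point `p`. -/
noncomputable def tube (m : ℕ) (t : ℝ) (p : Fin 3 → ℝ) (y : List (Fin 3)) : ℝ :=
  ((S.pw m).filter fun y' => |p ⬝ᵥ (Xp y ⨯₃ Xp y')| ≤ t).card

/-- Most tubes at scale `rho ^ n` carry a proportion at most `rho ^ (n * (1 - ε))` of the points. -/
def Tub (ε : ℝ) : Prop := ∃ C θ : ℝ, ∃ K : ℕ, 0 < C ∧ 0 < θ ∧ θ < 1 ∧ ∀ n m : ℕ, K * n ≤ m →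
  (((S.pw n ×ˢ S.pw m).filter fun wy => S.rho ^ (n * (1 - ε)) * S.N ^ m
    < S.tube m (S.rho ^ n) (S.p wy.1) wy.2).card : ℝ) ≤ C * θ ^ n * S.N ^ (n + m)

lemma tube_le (m : ℕ) (t : ℝ) (p : Fin 3 → ℝ) (y : List (Fin 3)) : S.tube m t p y ≤ S.N ^ m := by
  rw [← Sys0.card_pw]
  unfold tube
  exact_mod_cast Finset.card_filter_le _ _

lemma Tub_one : S.Tub 1 := by
  refine ⟨1, 1 / 2, 1, by norm_num, by norm_num, by norm_num, fun n m _ => ?_⟩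
  rw [Finset.filter_false_of_mem]
  · have := S.N_pos
    simp; positivity
  · intro wy _
    simpa using S.tube_le m (S.rho ^ n) (S.p wy.1) wy.2

/-- Nearby points of the cylinder `w` come from points lying in a thin tube around a line through `p w`,
because `q w ⬝ᵥ (y ⨯₃ y')` is a coordinate of `A_w y ⨯₃ A_w y'`. -/
lemma p_dot {n : ℕ} {w : List (Fin 3)} (hw : w ∈ S.pw n) {y y' : List (Fin 3)}
    (h : n1 (Xp (w ++ y) - Xp (w ++ y')) ≤ 1 / 64 * S.al ^ n) :
    |S.p w ⬝ᵥ (Xp y ⨯₃ Xp y')| ≤ S.rho ^ n := by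
  have hx := Xp_mem y
  have hx' := Xp_mem y'
  have hq := S.q_pos hw
  have ho := omega_pos hx w
  have ho' := omega_pos hx' w
  rw [Xp_append, Xp_append] at h
  have h1 : n1 (cv w (Xp y) ⨯₃ cv w (Xp y')) ≤ 1 / 64 * S.al ^ n :=
    (n1_cross_le_sub (n1_Sx (cv_mem hx w)).le).trans h
  have h2 : |basis3 S.i0 ⬝ᵥ (cv w (Xp y) ⨯₃ cv w (Xp y'))| ≤ 1 / 64 * S.al ^ n := by
    refine le_trans ?_ h1
    have := abs_dot_le (basis3 S.i0) (cv w (Xp y) ⨯₃ cv w (Xp y'))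
    rwa [n1_basis3, one_mul] at this
  have h3 : basis3 S.i0 ⬝ᵥ (cv w (Xp y) ⨯₃ cv w (Xp y')) =
      ((omega3 (Aw w *ᵥ Xp y))⁻¹ * (omega3 (Aw w *ᵥ Xp y'))⁻¹) * n1 (S.q w) *
        (S.p w ⬝ᵥ (Xp y ⨯₃ Xp y')) := by
    rw [cross_cv, dotProduct_smul, Matrix.dotProduct_mulVec, Matrix.vecMul_transpose, p, q,
      smul_dotProduct, smul_eq_mul, smul_eq_mul]
    rw [q] at hq
    field_simp
  rw [h3, abs_mul, abs_of_pos (by positivity)] at h2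
  have h4 : omega3 (Aw w *ᵥ Xp y) ≤ 3 * S.PP ^ n := (omega_le_ns hx w).trans (S.ns_pw hw)
  have h5 : omega3 (Aw w *ᵥ Xp y') ≤ 3 * S.PP ^ n := (omega_le_ns hx' w).trans (S.ns_pw hw)
  have hP := S.PP_ge
  have hR := S.hRR
  have hQ := S.RQ_ge
  have h6 : ((3 * S.PP ^ n)⁻¹ * (3 * S.PP ^ n)⁻¹) * S.RR ^ n * |S.p w ⬝ᵥ (Xp y ⨯₃ Xp y')| ≤
      1 / 64 * S.al ^ n := by
    refine le_trans ?_ h2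
    have := S.q_ge hw
    gcongr
  have h7 : |S.p w ⬝ᵥ (Xp y ⨯₃ Xp y')| = (9 * (S.PP ^ n * S.PP ^ n) / S.RR ^ n) *
      (((3 * S.PP ^ n)⁻¹ * (3 * S.PP ^ n)⁻¹) * S.RR ^ n * |S.p w ⬝ᵥ (Xp y ⨯₃ Xp y')|) := by
    field_simp; norm_num
  rw [h7]
  calc _ ≤ (9 * (S.PP ^ n * S.PP ^ n) / S.RR ^ n) * (1 / 64 * S.al ^ n) := by gcongr
    _ = 9 / 64 * S.rho ^ n := by
      rw [Sys0.al, rho, div_pow, div_pow, mul_pow, mul_pow, one_pow]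
      field_simp
    _ ≤ _ := by
      have := pow_pos S.rho_pos n
      linarith

/-- Tube estimates imply ball estimates. -/
lemma Ball_of_Tub {ε : ℝ} (hε : 0 ≤ ε) (h : S.Tub ε) :
    S.Ball (S.s - ε * (1 / 2 + S.th)) := by
  classical
  obtain ⟨C, θ, K, hC, hθ, hθ1, hT⟩ := h
  refine ⟨C, θ, K + 1, hC, hθ, hθ1, fun n m hm => ?_⟩
  obtain ⟨k, rfl⟩ : ∃ k, m = n + k := Nat.exists_eq_add_of_le (by nlinarith)
  have hk : K * n ≤ k := by nlinarith
  refine le_trans ?_ (hT n k hk)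
  have ha := S.al_pos
  have hr := S.rho_pos
  have hN := S.N_pos
  -- Uses the lower bound `N ≥ rho * al ^ (-s)` and `rho ≥ al ^ (1/2 + th)`.
  have key : S.rho ^ (n * (1 - ε)) ≤ S.al ^ (n * (S.s - ε * (1 / 2 + S.th))) * S.N ^ n := by
    have h1 : S.rho ^ (1 - ε) ≤ S.al ^ (S.s - ε * (1 / 2 + S.th)) * S.N := by
      calc S.rho ^ (1 - ε) = S.rho * (S.rho ^ ε)⁻¹ := by
            rw [sub_eq_add_neg, Real.rpow_add hr, Real.rpow_one, Real.rpow_neg hr.le]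
        _ ≤ S.rho * ((S.al ^ (1 / 2 + S.th)) ^ ε)⁻¹ := by
            have := S.al_rho
            gcongr
        _ = S.al ^ (S.s - ε * (1 / 2 + S.th)) * (S.rho * S.al ^ (-S.s)) := by
            rw [← Real.rpow_mul ha.le, ← Real.rpow_neg ha.le, mul_left_comm, ← Real.rpow_add ha]
            congr 2; ring
        _ ≤ _ := by
            have := S.N_ge
            gcongr
    have h2 : (S.rho ^ (1 - ε)) ^ n ≤ (S.al ^ (S.s - ε * (1 / 2 + S.th)) * S.N) ^ n := by gcongr
    rwa [mul_pow, ← Real.rpow_natCast (S.rho ^ _), ← Real.rpow_natCast (S.al ^ _),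
      ← Real.rpow_mul hr.le, ← Real.rpow_mul ha.le, mul_comm _ (n:ℝ), mul_comm _ (n:ℝ)] at h2
  have hsub : (S.pw (n + k)).filter (fun v => S.al ^ (n * (S.s - ε * (1 / 2 + S.th))) *
      S.N ^ (n + k) < S.ball (n + k) n v) ⊆
      ((S.pw n ×ˢ S.pw k).filter fun wy => S.rho ^ (n * (1 - ε)) * S.N ^ k
        < S.tube k (S.rho ^ n) (S.p wy.1) wy.2).image fun wy => wy.1 ++ wy.2 := by
    intro v hv
    rw [Finset.mem_filter] at hv
    obtain ⟨hv, hlt⟩ := hv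
    rw [Sys0.pw_add, Finset.mem_image₂] at hv
    obtain ⟨w, hw, y, hy, rfl⟩ := hv
    rw [Finset.mem_image]
    refine ⟨(w, y), Finset.mem_filter.2 ⟨Finset.mem_product.2 ⟨hw, hy⟩, ?_⟩, rfl⟩
    -- Nearby points share the prefix `w`, and their tails lie in a tube.
    have h1 : S.ball (n + k) n (w ++ y) ≤ S.tube k (S.rho ^ n) (S.p w) y := by
      unfold Sys0.ball tube
      have : ((S.pw (n + k)).filter fun v' => n1 (Xp (w ++ y) - Xp v') ≤ 1 / 64 * S.al ^ n) ⊆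
          ((S.pw k).filter fun y' => |S.p w ⬝ᵥ (Xp y ⨯₃ Xp y')| ≤ S.rho ^ n).image (w ++ ·) := by
        intro v' hv'
        rw [Finset.mem_filter, Sys0.pw_add, Finset.mem_image₂] at hv'
        obtain ⟨⟨a', ha', b', hb', rfl⟩, hcl⟩ := hv'
        have := S.prefix_of_close hw ha' hy hcl
        subst this
        exact Finset.mem_image_of_mem _ (Finset.mem_filter.2 ⟨hb', S.p_dot hw hcl⟩)
      exact_mod_cast (Finset.card_le_card this).trans Finset.card_image_le
    have h2 := hlt.trans_le h1
    refine lt_of_le_of_lt ?_ h2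
    rw [pow_add, ← mul_assoc]
    gcongr
  exact_mod_cast (Finset.card_le_card hsub).trans Finset.card_image_le

end Sys

/-! ### Counting the directions of blocks -/

lemma A_transpose_mulVec (i : Fin 3) (x : Fin 3 → ℝ) (j : Fin 3) :
    ((A i)ᵀ *ᵥ x) j = if j = i then x i else x i + x j := by
  fin_cases i <;> fin_cases j <;> simp [A, Matrix.mulVec, dotProduct, Fin.sum_univ_three] <;> ring

/-- The last letter of a word is read off from the position of the smallest coordinate of a
positive vector in the image of the transposed matrix. -/
lemma A_transpose_inj {i i' : Fin 3} {x x' : Fin 3 → ℝ} (hx : ∀ j, 0 < x j) (hx' : ∀ j, 0 < x' j)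
    (h : (A i)ᵀ *ᵥ x = (A i')ᵀ *ᵥ x') : i = i' ∧ x = x' := by
  have hj := fun j => congrFun h j
  simp only [A_transpose_mulVec] at hj
  have hi : i = i' := by
    by_contra hne
    have h1 := hj i
    have h2 := hj i'
    rw [if_pos rfl, if_neg hne] at h1
    rw [if_pos rfl, if_neg (Ne.symm hne)] at h2
    linarith [hx i', hx' i]
  subst hi
  refine ⟨rfl, funext fun j => ?_⟩
  have h1 := hj i
  have h2 := hj j
  simp only [if_true] at h1
  by_cases h3 : j = i
  · rw [h3]; exact h1
  · rw [if_neg h3, if_neg h3] at h2; linarith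

lemma Aw_transpose_pos (t : List (Fin 3)) {x : Fin 3 → ℝ} (hx : ∀ j, 0 < x j) (j : Fin 3) :
    0 < ((Aw t)ᵀ *ᵥ x) j := by
  have h0 : ∀ i, 0 ≤ (Aw t)ᵀ j i * x i := fun i => mul_nonneg (Aw_nonneg t i j) (hx i).le
  have h1 : 0 < (Aw t)ᵀ j j * x j :=
    mul_pos (lt_of_lt_of_le one_pos (one_le_Aw_diag t j)) (hx j)
  exact h1.trans_le (Finset.single_le_sum (fun i _ => h0 i) (Finset.mem_univ j))

/-- Words of equal length have disjoint images of the open positive cone under the transposed matrices. -/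
lemma Aw_transpose_inj {t t' : List (Fin 3)} (hl : t.length = t'.length) {x x' : Fin 3 → ℝ}
    (hx : ∀ j, 0 < x j) (hx' : ∀ j, 0 < x' j) (h : (Aw t)ᵀ *ᵥ x = (Aw t')ᵀ *ᵥ x') : t = t' := by
  induction t using List.reverseRecOn generalizing t' with
  | nil => exact (List.length_eq_zero_iff.1 hl.symm).symm
  | append_singleton u a ih =>
    induction t' using List.reverseRecOn with
    | nil => simp at hl
    | append_singleton u' a' _ =>
      rw [Aw_append, Aw_append, Matrix.transpose_mul, Matrix.transpose_mul,
        ← Matrix.mulVec_mulVec, ← Matrix.mulVec_mulVec, Aw_singleton, Aw_singleton] at h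
      obtain ⟨h1, h2⟩ := A_transpose_inj (Aw_transpose_pos u hx) (Aw_transpose_pos u' hx') h
      rw [h1, ih (by simpa using hl) h2]

/-- The open image of the unit cube under the transpose of `Aw t`. -/
def cubeImg (t : List (Fin 3)) : Set (Fin 3 → ℝ) :=
  Matrix.toLin' ((Aw t)⁻¹ᵀ) ⁻¹' (Set.univ.pi fun _ => Set.Ioo (0:ℝ) 1)

lemma cubeImg_meas (t : List (Fin 3)) : MeasurableSet (cubeImg t) := by
  refine (LinearMap.continuous_of_finiteDimensional _).measurable ?_
  exact MeasurableSet.univ_pi fun _ => measurableSet_Ioo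

lemma cubeImg_vol (t : List (Fin 3)) : volume (cubeImg t) = 1 := by
  have hdet : LinearMap.det (Matrix.toLin' ((Aw t)⁻¹ᵀ)) = 1 := by
    rw [LinearMap.det_toLin', Matrix.det_transpose, Matrix.det_nonsing_inv, det_Aw]; simp
  rw [cubeImg, Measure.addHaar_preimage_linearMap _ (by rw [hdet]; norm_num), hdet, Real.volume_pi_Ioo]
  simp

lemma mem_cubeImg {t : List (Fin 3)} {z : Fin 3 → ℝ} (hz : z ∈ cubeImg t) :
    ∃ x : Fin 3 → ℝ, (∀ j, 0 < x j) ∧ n1 x ≤ 3 ∧ z = (Aw t)ᵀ *ᵥ x := by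
  refine ⟨(Aw t)⁻¹ᵀ *ᵥ z, fun j => (hz j trivial).1, ?_, ?_⟩
  · rw [n1_eq_sum, Fin.sum_univ_three]
    have := fun j => hz j trivial
    simp only [Matrix.toLin'_apply, Set.mem_Ioo] at this
    rw [abs_of_pos (this 0).1, abs_of_pos (this 1).1, abs_of_pos (this 2).1]
    linarith [(this 0).2, (this 1).2, (this 2).2]
  · rw [Matrix.mulVec_mulVec, ← Matrix.transpose_mul, inv_mul_Aw, Matrix.transpose_one,
      Matrix.one_mulVec]

lemma cubeImg_disjoint {t t' : List (Fin 3)} (hl : t.length = t'.length) (hne : t ≠ t') :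
    Disjoint (cubeImg t) (cubeImg t') := by
  rw [Set.disjoint_left]
  intro z h1 h2
  obtain ⟨x, hx, -, rfl⟩ := mem_cubeImg h1
  obtain ⟨x', hx', -, h⟩ := mem_cubeImg h2
  exact hne (Aw_transpose_inj hl hx hx' h)

/-- Volume of the part of a slab orthogonal to `p` inside an `ℓ¹` ball. -/
lemma slab_vol (p : Fin 3 → ℝ) (hp : n1 p = 1) (a b : ℝ) (ha : 0 ≤ a) (hb : 0 ≤ b) :
    volume {z : Fin 3 → ℝ | n1 z ≤ a ∧ |z ⬝ᵥ p| ≤ b} ≤ ENNReal.ofReal (24 * a ^ 2 * b) := by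
  obtain ⟨c, hc⟩ : ∃ c, 1 / 3 ≤ |p c| := by
    by_contra hcon
    push Not at hcon
    have h0 := hcon 0; have h1 := hcon 1; have h2 := hcon 2
    unfold n1 at hp
    linarith
  have hc0 : 0 < |p c| := by linarith
  set M : M3 := (1 : M3).updateRow c p with hM
  have hdet : M.det = p c := by
    rw [hM, Matrix.det_fin_three]
    fin_cases c <;> simp [Matrix.updateRow_apply]
  have hdet' : LinearMap.det (Matrix.toLin' M) = p c := by rw [LinearMap.det_toLin', hdet]
  set u : Fin 3 → ℝ := fun j => if j = c then b else a with hu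
  have hsub : {z : Fin 3 → ℝ | n1 z ≤ a ∧ |z ⬝ᵥ p| ≤ b} ⊆ Matrix.toLin' M ⁻¹' Set.Icc (-u) u := by
    rintro z ⟨h1, h2⟩
    have h3 : ∀ j, |(M *ᵥ z) j| ≤ u j := by
      intro j
      by_cases hj : j = c
      · subst hj
        simp only [hu, if_true, hM, Matrix.mulVec, Matrix.updateRow_self]
        rwa [dotProduct_comm]
      · have : (M *ᵥ z) j = z j := by
          simp only [hM, Matrix.mulVec]
          rw [Matrix.updateRow_ne hj]
          exact congrFun (Matrix.one_mulVec z) j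
        rw [this]
        simp only [hu, if_neg hj]
        exact (abs_le_n1 z j).trans h1
    exact ⟨fun j => (abs_le.1 (h3 j)).1, fun j => (abs_le.1 (h3 j)).2⟩
  refine (measure_mono hsub).trans ?_
  rw [Measure.addHaar_preimage_linearMap _ (by rw [hdet']; exact abs_pos.1 hc0), hdet',
    Real.volume_Icc_pi, ← ENNReal.ofReal_prod_of_nonneg, ← ENNReal.ofReal_mul (abs_nonneg _)]
  · refine ENNReal.ofReal_le_ofReal ?_
    have h1 : ∏ i, (u i - (-u) i) = 8 * a ^ 2 * b := by
      rw [Fin.prod_univ_three]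
      fin_cases c <;> simp [hu] <;> ring
    rw [h1, abs_inv]
    have h2 : |p c|⁻¹ ≤ 3 := by
      rw [inv_le_comm₀ hc0 (by norm_num)]; linarith
    calc _ ≤ 3 * (8 * a ^ 2 * b) := by gcongr
      _ = _ := by ring
  · intro i _
    simp only [hu, Pi.neg_apply]
    split_ifs <;> linarith

namespace Sys
variable (S : Sys)

/-- The number of possible final segments of length `m` blocks with covector near `p`. -/
lemma card_tails {m : ℕ} (p : Fin 3 → ℝ) (hp : n1 p = 1) (T : Finset (List (Fin 3)))
    (hT : T ⊆ S.pw m) (h : ∀ t ∈ T, ∃ x, S.cone x ∧ 0 < n1 x ∧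
      n1 (p ⨯₃ ((n1 ((Aw t)⁻¹ *ᵥ x))⁻¹ • ((Aw t)⁻¹ *ᵥ x))) ≤ S.al ^ m) :
    (T.card : ℝ) ≤ 24 * 9 ^ 2 * 12 * (S.rho / S.al) ^ m := by
  have hP := S.PP_ge
  have hR := S.hRR
  have hQ := S.RQ_ge
  have hRQ := S.hRQ
  have ha := S.al_pos
  have hsub : (⋃ t ∈ T, cubeImg t) ⊆
      {z : Fin 3 → ℝ | n1 z ≤ 9 * S.PP ^ m ∧ |z ⬝ᵥ p| ≤ 12 * (S.RR⁻¹) ^ m} := by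
    intro z hz
    simp only [Set.mem_iUnion] at hz
    obtain ⟨t, ht, hz⟩ := hz
    obtain ⟨y, hy, hy3, rfl⟩ := mem_cubeImg hz
    obtain ⟨x, hx, hx0, hcl⟩ := h t ht
    have htm := hT ht
    have hb1 : n1 ((Aw t)ᵀ *ᵥ y) ≤ 9 * S.PP ^ m := by
      have h1 := n1_mulVec (Aw t)ᵀ y
      rw [ns_transpose] at h1
      have h2 := S.ns_pw htm
      have h3 := n1_nonneg y
      calc _ ≤ _ := h1
        _ ≤ (3 * S.PP ^ m) * 3 := by
          have := ns_nonneg (Aw t)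
          gcongr
        _ = _ := by ring
    refine ⟨hb1, ?_⟩
    set z := (Aw t)ᵀ *ᵥ y with hzdef
    have hge := (S.cone_pw htm x hx).2
    set Q := (Aw t)⁻¹ *ᵥ x with hQdef
    have hQpos : 0 < n1 Q := lt_of_lt_of_le (by positivity) hge
    set p' := (n1 Q)⁻¹ • Q with hp'
    have hp'1 : n1 p' = 1 := by
      rw [hp', n1_smul, abs_of_pos (by positivity), inv_mul_cancel₀ hQpos.ne']
    have hzp' : |z ⬝ᵥ p'| ≤ 3 * (S.RR⁻¹) ^ m := by
      have h1 : z ⬝ᵥ Q = y ⬝ᵥ x := by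
        rw [hzdef, hQdef, Matrix.dotProduct_mulVec, Matrix.vecMul_mulVec,
          Matrix.transpose_transpose, ← Matrix.dotProduct_mulVec, mul_inv_Aw, Matrix.one_mulVec]
      rw [hp', dotProduct_smul, h1, smul_eq_mul, abs_mul, abs_of_pos (by positivity)]
      calc (n1 Q)⁻¹ * |y ⬝ᵥ x| ≤ (S.RR ^ m * n1 x)⁻¹ * (3 * n1 x) := by
            have := (abs_dot_le y x).trans (mul_le_mul_of_nonneg_right hy3 hx0.le)
            gcongr
        _ = _ := by rw [inv_pow]; field_simp
    have hcr : z ⨯₃ (p ⨯₃ p') = (z ⬝ᵥ p') • p - (z ⬝ᵥ p) • p' := by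
      funext i
      fin_cases i <;> simp [crossProduct, dotProduct, Fin.sum_univ_three] <;> ring
    have h2 : |z ⬝ᵥ p| ≤ n1 z * n1 (p ⨯₃ p') + |z ⬝ᵥ p'| := by
      have h3 : (z ⬝ᵥ p) • p' = (z ⬝ᵥ p') • p - z ⨯₃ (p ⨯₃ p') := by rw [hcr]; abel
      have h4 := n1_sub ((z ⬝ᵥ p') • p) (z ⨯₃ (p ⨯₃ p'))
      rw [← h3, n1_smul _ p', n1_smul _ p, hp, hp'1] at h4
      have := n1_cross z (p ⨯₃ p')
      linarith
    have h5 : n1 z * n1 (p ⨯₃ p') ≤ 9 * (S.RR⁻¹) ^ m := by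
      calc _ ≤ (9 * S.PP ^ m) * S.al ^ m := by
            have := n1_nonneg z
            have := n1_nonneg (p ⨯₃ p')
            gcongr
        _ = 9 * (S.RQ⁻¹) ^ m := by
            rw [mul_assoc, ← mul_pow]; congr 2
            rw [Sys0.al]; field_simp
        _ ≤ _ := by gcongr
    linarith
  have hvol := (measure_mono (μ := volume) hsub).trans
    (slab_vol p hp _ _ (by positivity) (by positivity))
  rw [measure_biUnion_finset] at hvol
  · simp only [cubeImg_vol, Finset.sum_const, nsmul_eq_mul, mul_one] at hvol
    rw [← ENNReal.ofReal_natCast, ENNReal.ofReal_le_ofReal_iff (by positivity)] at hvol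
    refine hvol.trans (le_of_eq ?_)
    have : S.rho / S.al = S.PP * S.PP * S.RR⁻¹ := by
      rw [rho, Sys0.al]; field_simp
    rw [this, mul_pow, mul_pow]; ring
  · intro t ht t' ht' hne
    exact cubeImg_disjoint ((S.length_pw (hT ht)).trans (S.length_pw (hT ht')).symm) hne
  · exact fun t _ => cubeImg_meas t

/-- Frostman estimate for the covectors. -/
lemma card_near {n m : ℕ} (hmn : m ≤ n) (p : Fin 3 → ℝ) (hp : n1 p = 1) :
    (((S.pw n).filter fun w' => n1 (p ⨯₃ S.p w') ≤ S.al ^ m).card : ℝ) ≤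
      24 * 9 ^ 2 * 12 * S.al ^ (m * (S.s - 1)) * S.N ^ n := by
  classical
  obtain ⟨k, rfl⟩ : ∃ k, n = k + m := ⟨n - m, by omega⟩
  have ha := S.al_pos
  have hr := S.rho_pos
  have hN := S.N_pos
  set T := (S.pw m).filter fun t => ∃ u ∈ S.pw k, n1 (p ⨯₃ S.p (u ++ t)) ≤ S.al ^ m with hT
  have hTc : (T.card : ℝ) ≤ 24 * 9 ^ 2 * 12 * (S.rho / S.al) ^ m := by
    refine S.card_tails p hp T (Finset.filter_subset _ _) fun t ht => ?_
    obtain ⟨ht, u, hu, hcl⟩ := Finset.mem_filter.1 ht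
    refine ⟨S.q u, (S.cone_pw hu _ S.hcone0).1, S.q_pos hu, ?_⟩
    have : (Aw t)⁻¹ *ᵥ S.q u = S.q (u ++ t) := by
      rw [q, q, inv_Aw_append, Matrix.mulVec_mulVec]
    rw [this]; exact hcl
  have hsub : ((S.pw (k + m)).filter fun w' => n1 (p ⨯₃ S.p w') ≤ S.al ^ m) ⊆
      Finset.image₂ (· ++ ·) (S.pw k) T := by
    intro v hv
    rw [Finset.mem_filter, Sys0.pw_add, Finset.mem_image₂] at hv
    obtain ⟨⟨u, hu, t, ht, rfl⟩, hcl⟩ := hv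
    rw [Finset.mem_image₂]
    exact ⟨u, hu, t, Finset.mem_filter.2 ⟨ht, u, hu, hcl⟩, rfl⟩
  have h1 : (((S.pw (k + m)).filter fun w' => n1 (p ⨯₃ S.p w') ≤ S.al ^ m).card : ℝ) ≤
      S.N ^ k * T.card := by
    rw [← Sys0.card_pw]
    exact_mod_cast (Finset.card_le_card hsub).trans (Finset.card_image₂_le _ _ _)
  have h2 : S.rho / S.al ≤ S.al ^ (S.s - 1) * S.N := by
    calc S.rho / S.al = S.al ^ (S.s - 1) * (S.rho * S.al ^ (-S.s)) := by
          rw [mul_left_comm, ← Real.rpow_add ha, show S.s - 1 + -S.s = -1 by ring, Real.rpow_neg_one]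
          rfl
      _ ≤ _ := by
          have := S.N_ge
          gcongr
  have h3 : S.al ^ (m * (S.s - 1)) = (S.al ^ (S.s - 1)) ^ m := by
    rw [mul_comm, Real.rpow_mul ha.le, Real.rpow_natCast]
  calc _ ≤ _ := h1
    _ ≤ S.N ^ k * (24 * 9 ^ 2 * 12 * (S.al ^ (S.s - 1) * S.N) ^ m) := by
      refine mul_le_mul_of_nonneg_left (hTc.trans ?_) (by positivity)
      gcongr
    _ = _ := by rw [h3, mul_pow, pow_add]; ring

end Sys

/-! ### Charts and energies -/

/-- The affine chart `v ↦ (v_{c+1}/v_c, v_{c+2}/v_c)` of the projective plane. -/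
noncomputable def chart (c : Fin 3) (v : Fin 3 → ℝ) : ℝ × ℝ := (v (c + 1) / v c, v (c + 2) / v c)

lemma chart_det (c : Fin 3) {p x y : Fin 3 → ℝ} (hp : p c ≠ 0) (hx : x c ≠ 0) (hy : y c ≠ 0) :
    p ⬝ᵥ (x ⨯₃ y) = p c * x c * y c *
      ((chart c x - chart c p).1 * (chart c y - chart c p).2 -
        (chart c x - chart c p).2 * (chart c y - chart c p).1) := by
  fin_cases c <;> simp [chart, crossProduct, dotProduct, Fin.sum_univ_three] at * <;> field_simp <;> ring

lemma n1_cross_chart (c : Fin 3) {x y : Fin 3 → ℝ} (hx : n1 x ≤ 1) (hy : n1 y ≤ 1)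
    (hxc : x c ≠ 0) (hyc : y c ≠ 0) :
    n1 (x ⨯₃ y) ^ 2 ≤ 8 * nsq (chart c x - chart c y) := by
  have hxi := fun i => (abs_le_n1 x i).trans hx
  have hyi := fun i => (abs_le_n1 y i).trans hy
  obtain ⟨a, ha⟩ : ∃ a, a = (chart c x - chart c y).1 := ⟨_, rfl⟩
  obtain ⟨b, hb⟩ : ∃ b, b = (chart c x - chart c y).2 := ⟨_, rfl⟩
  have e1 : x c * y (c + 1) - x (c + 1) * y c = -(x c * y c * a) := by
    rw [ha]; simp only [chart, Prod.fst_sub]; field_simp; ring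
  have e2 : x c * y (c + 2) - x (c + 2) * y c = -(x c * y c * b) := by
    rw [hb]; simp only [chart, Prod.snd_sub]; field_simp; ring
  have e3 : x (c + 1) * y (c + 2) - x (c + 2) * y (c + 1) =
      x (c + 2) * (y c * a) - x (c + 1) * (y c * b) := by
    rw [ha, hb]; simp only [chart, Prod.snd_sub, Prod.fst_sub]; field_simp; ring
  have bd : ∀ i j, ∀ t, |x i * (y j * t)| ≤ |t| := by
    intro i j t
    rw [abs_mul, abs_mul]
    calc _ ≤ 1 * (1 * |t|) := by
          have := hxi i; have := hyi j; gcongr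
      _ = _ := by ring
  have b1 : |x c * y (c + 1) - x (c + 1) * y c| ≤ |a| := by
    rw [e1, abs_neg, mul_assoc]; exact bd _ _ _
  have b2 : |x c * y (c + 2) - x (c + 2) * y c| ≤ |b| := by
    rw [e2, abs_neg, mul_assoc]; exact bd _ _ _
  have b3 : |x (c + 1) * y (c + 2) - x (c + 2) * y (c + 1)| ≤ |a| + |b| := by
    rw [e3]
    exact (abs_sub _ _).trans (add_le_add (bd _ _ _) (bd _ _ _))
  have hn : n1 (x ⨯₃ y) = |x c * y (c + 1) - x (c + 1) * y c| + |x c * y (c + 2) - x (c + 2) * y c|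
      + |x (c + 1) * y (c + 2) - x (c + 2) * y (c + 1)| := by
    have s1 := abs_sub_comm (x 0 * y 1) (x 1 * y 0)
    have s2 := abs_sub_comm (x 0 * y 2) (x 2 * y 0)
    have s3 := abs_sub_comm (x 1 * y 2) (x 2 * y 1)
    fin_cases c <;> simp [n1, crossProduct] <;> linarith
  have h4 : n1 (x ⨯₃ y) ≤ 2 * (|a| + |b|) := by rw [hn]; linarith
  have h5 := n1_nonneg (x ⨯₃ y)
  have h6 : nsq (chart c x - chart c y) = |a| ^ 2 + |b| ^ 2 := by
    rw [nsq, ← ha, ← hb, sq_abs, sq_abs]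
  rw [h6]
  nlinarith [sq_nonneg (|a| - |b|), abs_nonneg a, abs_nonneg b]

/-- Pointwise dyadic bound for the Riesz-type kernel. -/
lemma kernel_le {a D c u v : ℝ} {j0 n : ℕ} (ha : 0 < a) (ha1 : a < 1) (hD : 0 ≤ D) (hc : 0 < c)
    (hjn : j0 ≤ n) (hv1 : 0 ≤ u → (c * u) ^ 2 ≤ v) (hv2 : (c * a ^ n) ^ 2 ≤ v) :
    v ^ (-D / 2) ≤ c ^ (-D) * (a ^ (-(j0 * D)) +
      ∑ j ∈ Finset.Icc j0 n, if u ≤ a ^ j then a ^ (-((j + 1) * D)) else 0) := by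
  have key : ∀ w : ℝ, 0 < w → (c * w) ^ 2 ≤ v → v ^ (-D / 2) ≤ c ^ (-D) * w ^ (-D) := by
    intro w hw h
    rw [← Real.mul_rpow hc.le hw.le]
    have : (c * w) ^ (-D) = ((c * w) ^ 2) ^ (-D / 2) := by
      rw [← Real.rpow_natCast (c * w) 2, ← Real.rpow_mul (by positivity)]
      congr 1; push_cast; ring
    rw [this]
    exact Real.rpow_le_rpow_of_nonpos (by positivity) h (by linarith)
  have hpw : ∀ j : ℕ, (a ^ j) ^ (-D) = a ^ (-(j * D)) := by
    intro j
    rw [← Real.rpow_natCast a j, ← Real.rpow_mul ha.le]; congr 1; ring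
  have hnn : ∀ j ∈ Finset.Icc j0 n, 0 ≤ if u ≤ a ^ j then a ^ (-(((j:ℕ) + 1) * D)) else 0 := by
    intro j _
    split_ifs
    · positivity
    · rfl
  have hsum := Finset.sum_nonneg hnn
  have hcD : 0 < c ^ (-D) := by positivity
  by_cases h0 : u ≤ a ^ j0
  · -- the last scale at which `u` is still small
    obtain ⟨j, hj0, hj, huj, hv⟩ : ∃ j : ℕ, j0 ≤ j ∧ j ≤ n ∧ u ≤ a ^ j ∧ (c * a ^ (j + 1)) ^ 2 ≤ v := by
      by_cases hn : u ≤ a ^ n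
      · refine ⟨n, hjn, le_rfl, hn, le_trans ?_ hv2⟩
        have : a ^ (n + 1) ≤ a ^ n := pow_le_pow_of_le_one ha.le ha1.le (by omega)
        gcongr
      · have hex : ∃ j, j0 ≤ j ∧ a ^ j < u := ⟨n, hjn, not_le.1 hn⟩
        classical
        obtain ⟨h1, h2⟩ := Nat.find_spec hex
        set j1 := Nat.find hex with hj1
        have h3 : j1 ≤ n := Nat.find_min' hex ⟨hjn, not_le.1 hn⟩
        have h4 : j1 ≠ j0 := by rintro h; rw [h] at h2; linarith
        obtain ⟨j, hj⟩ : ∃ j, j1 = j + 1 := ⟨j1 - 1, by omega⟩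
        refine ⟨j, by omega, by omega, ?_, ?_⟩
        · by_contra hcon
          exact Nat.find_min hex (m := j) (by omega) ⟨by omega, not_le.1 hcon⟩
        · rw [hj] at h2
          have := pow_pos ha (j + 1)
          refine le_trans ?_ (hv1 (by linarith))
          gcongr
    refine (key _ (by positivity) hv).trans ?_
    rw [hpw]
    gcongr
    have h1 := Finset.single_le_sum hnn (Finset.mem_Icc.2 ⟨hj0, hj⟩)
    rw [if_pos huj] at h1
    have h2 : 0 ≤ a ^ (-(j0 * D)) := by positivity
    push_cast
    linarith
  · rw [not_le] at h0
    have h1 := pow_pos ha j0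
    have h2 := hv1 (by linarith)
    refine (key _ h1 (le_trans ?_ h2)).trans ?_
    · gcongr
    · rw [hpw]; gcongr; linarith

/-- Energy estimate from ball-count estimates. -/
lemma energy_le {ι : Type} (s : Finset ι) (u v : ι → ℝ) {a D c B N : ℝ} {j0 n : ℕ} (ha : 0 < a)
    (ha1 : a < 1) (hD : 0 ≤ D) (hc : 0 < c) (hB : 0 ≤ B) (hN : 0 ≤ N) (hjn : j0 ≤ n) (hcard : (s.card : ℝ) ≤ N)
    (hv1 : ∀ i ∈ s, 0 ≤ u i → (c * u i) ^ 2 ≤ v i) (hv2 : ∀ i ∈ s, (c * a ^ n) ^ 2 ≤ v i)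
    (hb : ∀ j, j0 ≤ j → j ≤ n → ((s.filter fun i => u i ≤ a ^ j).card : ℝ) ≤ B * a ^ (j * D) * N) :
    ∑ i ∈ s, v i ^ (-D / 2) ≤ c ^ (-D) * (a ^ (-(j0 * D)) + (n + 1) * (B * a ^ (-D))) * N := by
  have hcD : 0 < c ^ (-D) := by positivity
  calc ∑ i ∈ s, v i ^ (-D / 2) ≤ ∑ i ∈ s, c ^ (-D) * (a ^ (-(j0 * D)) +
        ∑ j ∈ Finset.Icc j0 n, if u i ≤ a ^ j then a ^ (-((j + 1) * D)) else 0) :=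
        Finset.sum_le_sum fun i hi => kernel_le ha ha1 hD hc hjn (hv1 i hi) (hv2 i hi)
    _ = c ^ (-D) * (s.card * a ^ (-(j0 * D)) + ∑ j ∈ Finset.Icc j0 n,
          ((s.filter fun i => u i ≤ a ^ j).card : ℝ) * a ^ (-((j + 1) * D))) := by
        rw [← Finset.mul_sum, Finset.sum_add_distrib, Finset.sum_const, nsmul_eq_mul,
          Finset.sum_comm]
        congr 2
        refine Finset.sum_congr rfl fun j _ => ?_
        rw [← Finset.sum_filter, Finset.sum_const, nsmul_eq_mul]
    _ ≤ c ^ (-D) * (N * a ^ (-(j0 * D)) + ∑ j ∈ Finset.Icc j0 n, B * a ^ (-D) * N) := by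
        refine mul_le_mul_of_nonneg_left (add_le_add ?_ (Finset.sum_le_sum fun j hj => ?_)) hcD.le
        · gcongr
        rw [Finset.mem_Icc] at hj
        calc _ ≤ B * a ^ (j * D) * N * a ^ (-((j + 1) * D)) := by
              have := hb j hj.1 hj.2
              gcongr
          _ = B * (a ^ (j * D) * a ^ (-((j + 1) * D))) * N := by ring
          _ = _ := by rw [← Real.rpow_add ha, show (j:ℝ) * D + -((j + 1) * D) = -D by ring]
    _ ≤ c ^ (-D) * (N * a ^ (-(j0 * D)) + (n + 1) * (B * a ^ (-D) * N)) := by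
        rw [Finset.sum_const, nsmul_eq_mul]
        gcongr
        have : (Finset.Icc j0 n).card ≤ n + 1 := by simp
        exact_mod_cast this
    _ = _ := by ring

namespace Sys
variable (S : Sys)

/-- The covector `p w` never lies in the open positive or negative cone. -/
lemma exists_p_nonpos {n : ℕ} {w : List (Fin 3)} (hw : w ∈ S.pw n) {c : Fin 3} (hc : S.p w c ≠ 0) :
    ∃ a, a ≠ c ∧ S.p w a / S.p w c ≤ 0 := by
  by_contra hcon
  push Not at hcon
  have hpos : ∀ a, 0 < S.p w a / S.p w c := by
    intro a
    by_cases h : a = c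
    · rw [h, div_self hc]; exact one_pos
    · exact hcon a h
  have hq := S.q_pos hw
  obtain ⟨j, hj⟩ : ∃ j, j ≠ S.i0 := ⟨S.i0 + 1, by simp⟩
  have h1 : (Aw w *ᵥ S.p w) j = 0 := by
    rw [p, Matrix.mulVec_smul, q, Matrix.mulVec_mulVec, mul_inv_Aw, Matrix.one_mulVec]
    simp [basis3, hj]
  have h2 : 0 < (Aw w *ᵥ (fun a => S.p w a / S.p w c)) j := by
    have h0 : ∀ i, 0 ≤ Aw w j i * (S.p w i / S.p w c) :=
      fun i => mul_nonneg (Aw_nonneg w j i) (hpos i).le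
    have h1 : 0 < Aw w j j * (S.p w j / S.p w c) :=
      mul_pos (lt_of_lt_of_le one_pos (one_le_Aw_diag w j)) (hpos j)
    exact h1.trans_le (Finset.single_le_sum (fun i _ => h0 i) (Finset.mem_univ j))
  have h3 : (fun a => S.p w a / S.p w c) = (S.p w c)⁻¹ • S.p w := by
    funext a; simp [div_eq_inv_mul]
  rw [h3, Matrix.mulVec_smul, Pi.smul_apply, h1] at h2
  simp at h2

/-- In a chart, coded points and the points `p w` are uniformly separated and bounded: the coordinates of
`Xp y` are positive and bounded below, whereas `p w` has a nonpositive coordinate ratio. -/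
lemma chart_dist {n m : ℕ} {w y : List (Fin 3)} (hw : w ∈ S.pw n) (hy : y ∈ S.pw m) {c : Fin 3}
    (hc : 1 / 3 ≤ |S.p w c|) : (1 / 7 : ℝ) ^ 2 ≤ nsq (chart c (Xp y) - chart c (S.p w)) ∧
      nsq (chart c (Xp y) - chart c (S.p w)) ≤ 15 ^ 2 := by
  have hX := fun i => S.Xp_ge hy i
  have hX1 : ∀ i, Xp y i ≤ 1 := fun i =>
    (le_abs_self _).trans ((abs_le_n1 _ i).trans (n1_Sx (Xp_mem y)).le)
  have hp1 : ∀ i, |S.p w i| ≤ 1 := fun i => (abs_le_n1 _ i).trans (S.n1_p hw).le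
  have hc0 : 0 < |S.p w c| := by linarith
  have hXc : 0 < Xp y c := by linarith [hX c]
  have hr : ∀ a, 1 / 7 ≤ Xp y a / Xp y c ∧ Xp y a / Xp y c ≤ 7 := by
    intro a
    rw [le_div_iff₀ hXc, div_le_iff₀ hXc]
    constructor <;> linarith [hX a, hX c, hX1 a, hX1 c]
  have hpr : ∀ a, |S.p w a / S.p w c| ≤ 3 := by
    intro a
    rw [abs_div, div_le_iff₀ hc0]
    linarith [hp1 a]
  have hd : ∀ a, |Xp y a / Xp y c - S.p w a / S.p w c| ≤ 10 := by
    intro a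
    have h1 := hr a
    have h2 := abs_le.1 (hpr a)
    rw [abs_le]; constructor <;> linarith
  have hsq : ∀ a, (Xp y a / Xp y c - S.p w a / S.p w c) ^ 2 ≤ 10 ^ 2 := fun a => by
    rw [← sq_abs]; have := hd a; gcongr
  have hn : nsq (chart c (Xp y) - chart c (S.p w)) =
      (Xp y (c + 1) / Xp y c - S.p w (c + 1) / S.p w c) ^ 2 +
      (Xp y (c + 2) / Xp y c - S.p w (c + 2) / S.p w c) ^ 2 := by
    simp [nsq, chart]
  rw [hn]
  refine ⟨?_, by linarith [hsq (c + 1), hsq (c + 2)]⟩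
  obtain ⟨a, hac, ha⟩ := S.exists_p_nonpos hw (abs_pos.1 hc0)
  have h7 : (1 / 7 : ℝ) ^ 2 ≤ (Xp y a / Xp y c - S.p w a / S.p w c) ^ 2 := by
    have := (hr a).1
    gcongr; linarith
  have : a = c + 1 ∨ a = c + 2 := by
    revert hac; clear * -; revert a c; decide
  rcases this with rfl | rfl
  · linarith [sq_nonneg (Xp y (c + 2) / Xp y c - S.p w (c + 2) / S.p w c)]
  · linarith [sq_nonneg (Xp y (c + 1) / Xp y c - S.p w (c + 1) / S.p w c)]

end Sys

/-! ### Incidences of coded points in a chart -/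

namespace Sys
variable (S : Sys)

/-- Energy of exponent `D` of the coded points whose ball counts are controlled from scale `j0` on. -/
lemma X_energy {m n j0 : ℕ} {D d : ℝ} (hD : 0 ≤ D) (hjn : j0 ≤ n) (hd : S.al ^ n ≤ d) (c : Fin 3)
    (G : Finset (List (Fin 3))) (hGm : G ⊆ S.pw m) {y : List (Fin 3)} (hy : y ∈ G)
    (hb : ∀ j, j0 ≤ j → j ≤ n → S.ball m j y ≤ S.al ^ (j * D) * S.N ^ m) :
    ∑ y' ∈ G, (d ^ 2 + nsq (chart c (Xp y) - chart c (Xp y'))) ^ (-D / 2) ≤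
      (1 / 576) ^ (-D) * (S.al ^ (-(j0 * D)) + (n + 1) * (1 * S.al ^ (-D))) * S.N ^ m := by
  have ha := S.al_pos
  have hN := S.N_pos
  refine energy_le G (fun y' => 64 * n1 (Xp y - Xp y')) _ ha S.al_lt_one hD (by norm_num)
    zero_le_one (by positivity) hjn ?_ ?_ ?_ ?_
  · rw [← Sys0.card_pw]; exact_mod_cast Finset.card_le_card hGm
  · intro y' hy' _
    have hXc : ∀ {z}, z ∈ G → Xp z c ≠ 0 := fun {z} hz => by
      have := S.Xp_ge (hGm hz) c
      intro h; rw [h] at this; norm_num at this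
    have h1 := n1_sub_le_cross (Xp_mem y) (Xp_mem y')
    have h2 := n1_cross_chart c (n1_Sx (Xp_mem y)).le (n1_Sx (Xp_mem y')).le (hXc hy) (hXc hy')
    have h3 := n1_nonneg (Xp y - Xp y')
    nlinarith [sq_nonneg d, n1_nonneg (Xp y ⨯₃ Xp y'), nsq_nonneg (chart c (Xp y) - chart c (Xp y'))]
  · intro y' _
    have h1 := nsq_nonneg (chart c (Xp y) - chart c (Xp y'))
    have h2 := pow_pos ha n
    have h3 : (1 / 576 * S.al ^ n) ^ 2 ≤ d ^ 2 := by gcongr; linarith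
    linarith
  · intro j hj0 hjn
    rw [one_mul]
    refine le_trans ?_ (hb j hj0 hjn)
    unfold Sys0.ball
    refine Nat.cast_le.2 (Finset.card_le_card fun y' hy' => ?_)
    rw [Finset.mem_filter] at hy' ⊢
    exact ⟨hGm hy'.1, by linarith [hy'.2]⟩

/-- Energy of exponent `s - 1` of the covectors `p w`, from `card_near`. -/
lemma p_energy {n : ℕ} {d : ℝ} (hd : S.al ^ n ≤ d) (c : Fin 3) {w : List (Fin 3)}
    (hw : w ∈ (S.pw n).filter fun w => 1 / 3 ≤ |S.p w c|) :
    ∑ w' ∈ (S.pw n).filter fun w => 1 / 3 ≤ |S.p w c|,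
      (d ^ 2 + nsq (chart c (S.p w) - chart c (S.p w'))) ^ (-(S.s - 1) / 2) ≤
      (1 / 3) ^ (-(S.s - 1)) * (S.al ^ (-((0:ℕ) * (S.s - 1))) +
        (n + 1) * ((24 * 9 ^ 2 * 12) * S.al ^ (-(S.s - 1)))) * S.N ^ n := by
  have ha := S.al_pos
  have hN := S.N_pos
  have hs := S.hs
  refine energy_le _ (fun w' => n1 (S.p w ⨯₃ S.p w')) _ ha S.al_lt_one (by linarith) (by norm_num)
    (by norm_num) (by positivity) (Nat.zero_le n) ?_ ?_ ?_ ?_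
  · exact S.filter_le _ _
  · intro w' hw' _
    rw [Finset.mem_filter] at hw hw'
    have hXc : ∀ {z}, 1 / 3 ≤ |S.p z c| → S.p z c ≠ 0 := fun {z} hz h => by
      rw [h, abs_zero] at hz; norm_num at hz
    have h2 := n1_cross_chart c (S.n1_p hw.1).le (S.n1_p hw'.1).le (hXc hw.2) (hXc hw'.2)
    nlinarith [sq_nonneg d, nsq_nonneg (chart c (S.p w) - chart c (S.p w'))]
  · intro y' _
    have h1 := nsq_nonneg (chart c (S.p w) - chart c (S.p y'))
    have h2 := pow_pos ha n
    have h3 : (1 / 3 * S.al ^ n) ^ 2 ≤ d ^ 2 := by gcongr; linarith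
    linarith
  · intro j _ hjn
    refine le_trans ?_ (S.card_near hjn (S.p w) (S.n1_p (Finset.mem_filter.1 hw).1))
    refine Nat.cast_le.2 (Finset.card_le_card fun y' hy' => ?_)
    rw [Finset.mem_filter, Finset.mem_filter] at hy'
    exact Finset.mem_filter.2 ⟨hy'.1.1, hy'.2⟩

lemma tube_le_det {n m : ℕ} {w y : List (Fin 3)} {c : Fin 3} (hc : 1 / 3 ≤ |S.p w c|)
    (hy : y ∈ S.pw m) : S.tube m (S.rho ^ n) (S.p w) y ≤
    (((S.pw m).filter fun y' => |(chart c (Xp y) - chart c (S.p w)).1 *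
      (chart c (Xp y') - chart c (S.p w)).2 - (chart c (Xp y) - chart c (S.p w)).2 *
      (chart c (Xp y') - chart c (S.p w)).1| ≤ 147 * S.rho ^ n).card : ℝ) := by
  unfold tube
  refine Nat.cast_le.2 (Finset.card_le_card fun y' hy' => ?_)
  rw [Finset.mem_filter] at hy' ⊢
  refine ⟨hy'.1, ?_⟩
  have h1 := S.Xp_ge hy c
  have h2 := S.Xp_ge hy'.1 c
  have hp0 : S.p w c ≠ 0 := fun h => by rw [h, abs_zero] at hc; norm_num at hc
  have h3 := hy'.2
  rw [chart_det c hp0 (by linarith : Xp y c ≠ 0) (by linarith : Xp y' c ≠ 0), abs_mul, abs_mul, abs_mul,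
    abs_of_pos (by linarith : 0 < Xp y c), abs_of_pos (by linarith : 0 < Xp y' c)] at h3
  have h4 : (1 / 3 * (1 / 7) * (1 / 7) : ℝ) ≤ |S.p w c| * Xp y c * Xp y' c := by gcongr
  set t := |(chart c (Xp y) - chart c (S.p w)).1 *
      (chart c (Xp y') - chart c (S.p w)).2 - (chart c (Xp y) - chart c (S.p w)).2 *
      (chart c (Xp y') - chart c (S.p w)).1| with ht
  have h5 : 0 ≤ t := abs_nonneg _
  nlinarith [mul_le_mul_of_nonneg_right h4 h5]

/-- The incidence bound in one chart. -/
lemma chart_bound : ∃ K0 : ℝ, 0 < K0 ∧ ∀ (D : ℝ) (n m j0 Ks : ℕ) (M : ℝ) (G : Finset (List (Fin 3)))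
    (c : Fin 3), 0 ≤ D → D ≤ 3 - S.s → j0 ≤ n → 147 * S.rho ^ n ≤ 1 → 1 ≤ S.rho * 2 ^ Ks →
    G ⊆ S.pw m → 0 < M →
    (∀ y ∈ G, ∀ j, j0 ≤ j → j ≤ n → S.ball m j y ≤ S.al ^ (j * D) * S.N ^ m) →
    (((G ×ˢ (S.pw n).filter fun w => 1 / 3 ≤ |S.p w c|).filter fun yw =>
      M * S.N ^ m ≤ S.tube m (S.rho ^ n) (S.p yw.2) yw.1).card : ℝ) ≤
    K0 * (147 * S.rho ^ n / M + (Ks * n : ℕ) * √(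
      ((1 / 576) ^ (-D) * (S.al ^ (-(j0 * D)) + (n + 1) * (1 * S.al ^ (-D)))) *
      ((1 / 3) ^ (-(S.s - 1)) * (S.al ^ (-((0:ℕ) * (S.s - 1))) +
        (n + 1) * ((24 * 9 ^ 2 * 12) * S.al ^ (-(S.s - 1))))) *
      (147 * S.rho ^ n) ^ (-(2 - D - (S.s - 1))) * (147 * S.rho ^ n / M) ^ (1 - (S.s - 1)))) *
      (S.N ^ m * S.N ^ n) := by
  obtain ⟨K0, hK0, hinc⟩ := incidence (1 / 7) 15 (by norm_num) (by norm_num)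
  refine ⟨K0, hK0, ?_⟩
  intro D n m j0 Ks M G c hD hD2 hjn hd1 hKs hGm hM hG
  have ha := S.al_pos
  have hr := S.rho_pos
  have hN := S.N_pos
  have hs := S.hs
  have hs2 := S.hs2
  have hal : S.al ^ n ≤ 147 * S.rho ^ n := by
    have := pow_le_pow_left₀ ha.le S.al_le_rho n
    have := pow_pos hr n
    linarith
  have h := hinc (S.pw m) G ((S.pw n).filter fun w => 1 / 3 ≤ |S.p w c|)
    (fun y => chart c (Xp y)) (fun w => chart c (S.p w)) (S.N ^ m) (S.N ^ n)
    ((1 / 576) ^ (-D) * (S.al ^ (-(j0 * D)) + (n + 1) * (1 * S.al ^ (-D))))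
    ((1 / 3) ^ (-(S.s - 1)) * (S.al ^ (-((0:ℕ) * (S.s - 1))) +
        (n + 1) * ((24 * 9 ^ 2 * 12) * S.al ^ (-(S.s - 1))))) D (S.s - 1) (147 * S.rho ^ n) M
    (Ks * n) hGm (S.card_pw m).le (S.filter_le _ _) (by positivity) (by positivity)
    (by positivity) (by positivity) hD (by linarith) (by linarith) (by linarith) (by linarith)
    (by positivity) hd1
    (by
      rw [pow_mul, mul_assoc, ← mul_pow]
      have := one_le_pow₀ hKs (n := n)
      linarith)
    hM
    (fun y hy w hw => S.chart_dist (Finset.mem_filter.1 hw).1 hy (Finset.mem_filter.1 hw).2)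
    (fun y hy => S.X_energy hD hjn hal c G hGm hy (hG y hy))
    (fun w hw => S.p_energy hal c hw)
  refine le_trans (Nat.cast_le.2 (Finset.card_le_card fun yw hyw => ?_)) h
  rw [Finset.mem_filter, Finset.mem_product] at hyw ⊢
  refine ⟨hyw.1, hyw.2.trans ?_⟩
  exact S.tube_le_det (Finset.mem_filter.1 hyw.1.2).2 (hGm hyw.1.1)

end Sys

/-! ### Choice of scales -/

/-- A polynomial factor is absorbed by an exponential with a slightly larger base. -/
lemma exists_poly_le (g : ℝ) (hg : 0 < g) (hg1 : g < 1) :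
    ∃ C θ : ℝ, 0 < C ∧ 0 < θ ∧ θ < 1 ∧ ∀ n : ℕ, ((n:ℝ) + 1) ^ 2 * g ^ n ≤ C * θ ^ n := by
  have hsq : 0 < √g := Real.sqrt_pos.2 hg
  have hsq1 : √g < 1 := by
    rw [Real.sqrt_lt' one_pos]; simpa using hg1
  have ht := tendsto_pow_const_mul_const_pow_of_abs_lt_one 2
    (by rwa [abs_of_pos hsq] : |√g| < 1)
  obtain ⟨B, hB⟩ := ht.bddAbove_range
  have hB' : ∀ n : ℕ, (n:ℝ) ^ 2 * √g ^ n ≤ B := fun n => hB ⟨n, rfl⟩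
  have hB0 : 0 ≤ B := by simpa using hB' 0
  refine ⟨(B + 1) / √g, √g, by positivity, hsq, hsq1, fun n => ?_⟩
  have h1 := hB' (n + 1)
  have h2 : g ^ n = √g ^ n * √g ^ n := by
    rw [← mul_pow, Real.mul_self_sqrt hg.le]
  push_cast at h1
  rw [pow_succ (√g)] at h1
  rw [h2, ← mul_assoc]
  gcongr
  rw [le_div_iff₀ hsq]
  nlinarith

namespace Sys
variable (S : Sys)

set_option maxHeartbeats 1000000 in
/-- The right-hand side of the incidence bound, for the energies of `X_energy` with `j0 = n / T` and of
`p_energy`, decays exponentially in `n` once `T` is large. -/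
lemma scalar_bound {D ε : ℝ} (Ks : ℕ) (hD3 : D ≤ 3 - S.s) (hε : 0 < ε)
    (hβ : 3 - S.s - D < ε * (2 - S.s)) :
    ∃ (T : ℕ) (C θ : ℝ), 0 < T ∧ 0 < C ∧ 0 < θ ∧ θ < 1 ∧ ∀ n : ℕ,
    147 * S.rho ^ n / S.rho ^ (n * (1 - ε)) + (Ks * n : ℕ) * √(
      ((1 / 576) ^ (-D) * (S.al ^ (-((n / T : ℕ) * D)) + (n + 1) * (1 * S.al ^ (-D)))) *
      ((1 / 3) ^ (-(S.s - 1)) * (S.al ^ (-((0:ℕ) * (S.s - 1))) +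
        (n + 1) * ((24 * 9 ^ 2 * 12) * S.al ^ (-(S.s - 1))))) *
      (147 * S.rho ^ n) ^ (-(2 - D - (S.s - 1))) *
      (147 * S.rho ^ n / S.rho ^ (n * (1 - ε))) ^ (1 - (S.s - 1))) ≤ C * θ ^ n := by
  have ha := S.al_pos
  have ha1 := S.al_lt_one
  have hr := S.rho_pos
  have hr1 := S.rho_lt_one
  have hs := S.hs
  have hs2 := S.hs2
  set β : ℝ := ε * (2 - S.s) - (3 - S.s - D) with hβdef
  have hβ0 : 0 < β := by rw [hβdef]; linarith
  set g : ℝ := S.rho ^ (β / 4) with hg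
  have hg0 : 0 < g := Real.rpow_pos_of_pos hr _
  have hg1 : g < 1 := Real.rpow_lt_one hr.le hr1 (by positivity)
  obtain ⟨T, hT⟩ := exists_pow_lt_of_lt_one ha hg1
  have hT0 : 0 < T := by
    rcases Nat.eq_zero_or_pos T with rfl | h
    · simp at hT; linarith
    · exact h
  obtain ⟨C1, θ1, hC1, hθ1, hθ1', hpoly⟩ := exists_poly_le g hg0 hg1
  set e : ℝ := S.rho ^ ε with he
  have he0 : 0 < e := Real.rpow_pos_of_pos hr _
  have he1 : e < 1 := Real.rpow_lt_one hr.le hr1 hε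
  set c1 : ℝ := (1 / 576) ^ (-D) * (1 + S.al ^ (-D)) with hc1
  set c2 : ℝ := (1 / 3) ^ (-(S.s - 1)) * (1 + (24 * 9 ^ 2 * 12) * S.al ^ (-(S.s - 1))) with hc2
  have hc1p : 0 < c1 := by positivity
  have hc2p : 0 < c2 := by positivity
  set Q : ℝ := √(c1 * c2 * 147 ^ (2 - S.s)) with hQ
  have hQp : 0 < Q := by positivity
  refine ⟨T, 147 + Ks * Q * C1, max e θ1, hT0, by positivity, lt_max_of_lt_left he0,
    max_lt he1 hθ1', fun n => ?_⟩
  have hgn : g ^ n ≤ S.al ^ (n / T) := by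
    calc g ^ n ≤ g ^ (T * (n / T)) := pow_le_pow_of_le_one hg0.le hg1.le (Nat.mul_div_le n T)
      _ = (g ^ T) ^ (n / T) := pow_mul _ _ _
      _ ≤ _ := pow_le_pow_left₀ (by positivity) hT.le _
  have hdM : 147 * S.rho ^ n / S.rho ^ (n * (1 - ε)) = 147 * e ^ n := by
    rw [he, ← Real.rpow_natCast (S.rho ^ ε), ← Real.rpow_mul hr.le, mul_div_assoc,
      ← Real.rpow_natCast, ← Real.rpow_sub hr]
    congr 2; ring
  rw [hdM]
  have hE0 : S.al ^ (-((n / T : ℕ) * D)) ≤ ((g ^ n) ^ 2)⁻¹ := by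
    rw [Real.rpow_neg ha.le, Real.rpow_mul ha.le, Real.rpow_natCast]
    apply inv_anti₀ (by positivity)
    calc (g ^ n) ^ 2 ≤ (S.al ^ (n / T)) ^ 2 := by gcongr
      _ = (S.al ^ (n / T)) ^ (2:ℝ) := by norm_cast
      _ ≤ _ := Real.rpow_le_rpow_of_exponent_ge (by positivity)
          (pow_le_one₀ ha.le ha1.le) (by linarith)
  have hgi : 1 ≤ ((g ^ n) ^ 2)⁻¹ :=
    (one_le_inv₀ (by positivity)).2 (pow_le_one₀ (by positivity) (pow_le_one₀ hg0.le hg1.le))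
  have hE1 : (1 / 576) ^ (-D) * (S.al ^ (-((n / T : ℕ) * D)) + (n + 1) * (1 * S.al ^ (-D))) ≤
      c1 * ((n + 1) * ((g ^ n) ^ 2)⁻¹) := by
    rw [hc1, mul_assoc]
    gcongr
    have hn : (0:ℝ) ≤ n := n.cast_nonneg
    have hp : 0 < S.al ^ (-D) := Real.rpow_pos_of_pos ha _
    have e1 : S.al ^ (-((n / T : ℕ) * D)) ≤ (n + 1) * ((g ^ n) ^ 2)⁻¹ := by nlinarith
    have e2 : (n + 1) * (1 * S.al ^ (-D)) ≤ S.al ^ (-D) * ((n + 1) * ((g ^ n) ^ 2)⁻¹) := by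
      have : (0:ℝ) ≤ (n + 1) * S.al ^ (-D) := by positivity
      nlinarith
    linarith
  have hE2 : (1 / 3) ^ (-(S.s - 1)) * (S.al ^ (-((0:ℕ) * (S.s - 1))) +
        (n + 1) * ((24 * 9 ^ 2 * 12) * S.al ^ (-(S.s - 1)))) ≤ c2 * (n + 1) := by
    rw [hc2, mul_assoc (_ ^ _)]
    refine mul_le_mul_of_nonneg_left ?_ (by positivity)
    have hn : (0:ℝ) ≤ n := n.cast_nonneg
    rw [Nat.cast_zero, zero_mul, neg_zero, Real.rpow_zero]
    linarith
  have hE3 : (147 * S.rho ^ n) ^ (-(2 - D - (S.s - 1))) ≤ (S.rho ^ (-(3 - S.s - D))) ^ n := by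
    calc _ ≤ (S.rho ^ n) ^ (-(2 - D - (S.s - 1))) := by
          apply Real.rpow_le_rpow_of_nonpos (by positivity) _ (by linarith)
          have : 0 < S.rho ^ n := by positivity
          linarith
      _ = _ := by
          rw [← Real.rpow_natCast, ← Real.rpow_natCast, ← Real.rpow_mul hr.le,
            ← Real.rpow_mul hr.le]
          congr 1; ring
  have hE4 : (147 * e ^ n) ^ (1 - (S.s - 1)) = 147 ^ (2 - S.s) * (S.rho ^ (ε * (2 - S.s))) ^ n := by
    rw [Real.mul_rpow (by norm_num) (by positivity), he, ← Real.rpow_natCast, ← Real.rpow_natCast,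
      ← Real.rpow_mul hr.le, ← Real.rpow_mul hr.le, ← Real.rpow_mul hr.le]
    congr 2 <;> ring
  have hgg : (S.rho ^ (-(3 - S.s - D))) ^ n * (S.rho ^ (ε * (2 - S.s))) ^ n = (g ^ n) ^ 2 * (g ^ n) ^ 2 := by
    rw [← mul_pow, ← Real.rpow_add hr, ← mul_pow, ← mul_pow, ← pow_mul, mul_comm n 2, pow_mul]
    congr 1
    rw [hg, ← Real.rpow_add hr, ← Real.rpow_natCast, ← Real.rpow_mul hr.le]
    congr 1
    rw [hβdef]; push_cast; ring
  have hsqrt : √(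
      ((1 / 576) ^ (-D) * (S.al ^ (-((n / T : ℕ) * D)) + (n + 1) * (1 * S.al ^ (-D)))) *
      ((1 / 3) ^ (-(S.s - 1)) * (S.al ^ (-((0:ℕ) * (S.s - 1))) +
        (n + 1) * ((24 * 9 ^ 2 * 12) * S.al ^ (-(S.s - 1))))) *
      (147 * S.rho ^ n) ^ (-(2 - D - (S.s - 1))) *
      (147 * e ^ n) ^ (1 - (S.s - 1))) ≤ Q * ((n + 1) * g ^ n) := by
    apply Real.sqrt_le_iff.2 ⟨by positivity, ?_⟩
    rw [mul_pow Q, hQ, Real.sq_sqrt (by positivity), hE4]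
    calc _ ≤ (c1 * ((n + 1) * ((g ^ n) ^ 2)⁻¹)) * (c2 * (n + 1)) *
        (S.rho ^ (-(3 - S.s - D))) ^ n * (147 ^ (2 - S.s) * (S.rho ^ (ε * (2 - S.s))) ^ n) := by
          gcongr
      _ = (c1 * ((n + 1) * ((g ^ n) ^ 2)⁻¹)) * (c2 * (n + 1)) * 147 ^ (2 - S.s) *
          ((S.rho ^ (-(3 - S.s - D))) ^ n * (S.rho ^ (ε * (2 - S.s))) ^ n) := by ring
      _ = _ := by
        rw [hgg]
        field_simp
  have hn : (0:ℝ) ≤ n := n.cast_nonneg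
  calc _ ≤ 147 * e ^ n + (Ks * n : ℕ) * (Q * ((n + 1) * g ^ n)) := by gcongr
    _ ≤ 147 * e ^ n + Ks * Q * (((n:ℝ) + 1) ^ 2 * g ^ n) := by
        push_cast
        have : (n:ℝ) * (n + 1) ≤ (n + 1) ^ 2 := by nlinarith
        have h2 : 0 ≤ (Ks:ℝ) * Q * g ^ n := by positivity
        nlinarith
    _ ≤ 147 * e ^ n + Ks * Q * (C1 * θ1 ^ n) := by
        have := hpoly n
        gcongr
    _ ≤ 147 * (max e θ1) ^ n + Ks * Q * (C1 * (max e θ1) ^ n) := by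
        have := le_max_left e θ1
        have := le_max_right e θ1
        gcongr
    _ = _ := by ring

end Sys

/-! ### Bootstrapping tube estimates -/

lemma Sys0.Ball_mono (S : Sys0) {D D' : ℝ} (h : D' ≤ D) (hB : S.Ball D) : S.Ball D' := by
  obtain ⟨C, θ, K, hC, hθ, hθ1, hT⟩ := hB
  refine ⟨C, θ, K, hC, hθ, hθ1, fun n m hm => le_trans ?_ (hT n m hm)⟩
  have ha := S.al_pos
  have hN := S.N_pos
  refine Nat.cast_le.2 (Finset.card_le_card ?_)
  intro v hv
  rw [Finset.mem_filter] at hv ⊢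
  refine ⟨hv.1, lt_of_le_of_lt ?_ hv.2⟩
  have : S.al ^ (n * D) ≤ S.al ^ (n * D') :=
    Real.rpow_le_rpow_of_exponent_ge ha S.al_lt_one.le (by gcongr)
  gcongr

/-- `θ ^ (n / T)` decays exponentially in `n`. -/
lemma pow_div_le (θ : ℝ) (hθ : 0 < θ) (hθ1 : θ < 1) (T : ℕ) (hT : 0 < T) :
    ∃ η : ℝ, 0 < η ∧ η < 1 ∧ ∀ n : ℕ, θ ^ (n / T) ≤ θ⁻¹ * η ^ n := by
  refine ⟨θ ^ (1 / (T:ℝ)), Real.rpow_pos_of_pos hθ _, Real.rpow_lt_one hθ.le hθ1 (by positivity),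
    fun n => ?_⟩
  have hT' : (0:ℝ) < T := by exact_mod_cast hT
  rw [← Real.rpow_natCast, ← Real.rpow_natCast, ← Real.rpow_mul hθ.le, ← Real.rpow_neg_one,
    ← Real.rpow_add hθ]
  apply Real.rpow_le_rpow_of_exponent_ge hθ hθ1.le
  have h : (n:ℝ) ≤ T * ((n / T : ℕ) + 1) := by
    have := Nat.lt_mul_div_succ n hT
    exact_mod_cast this.le
  have h2 : 1 / (T:ℝ) * n ≤ (n / T : ℕ) + 1 := by
    rw [one_div, inv_mul_le_iff₀ hT']; exact h
  linarith

namespace Sys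
variable (S : Sys)

/-- Words whose ball counts are good on all scales between `j0` and `n`. -/
noncomputable def good (D : ℝ) (m j0 n : ℕ) : Finset (List (Fin 3)) := by
  classical
  exact (S.pw m).filter fun y => ∀ j, j0 ≤ j → j ≤ n → S.ball m j y ≤ S.al ^ (j * D) * S.N ^ m

lemma good_subset (D : ℝ) (m j0 n : ℕ) : S.good D m j0 n ⊆ S.pw m := by
  classical
  exact Finset.filter_subset _ _

/-- Summing the exceptional sets of the ball property over the scales `j ≥ j0`. -/
lemma card_not_good {D C θ : ℝ} {K : ℕ} (hC : 0 < C) (hθ : 0 < θ) (hθ1 : θ < 1)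
    (hB : ∀ n m : ℕ, K * n ≤ m → (((S.pw m).filter fun v =>
      S.al ^ (n * D) * S.N ^ m < S.ball m n v).card : ℝ) ≤ C * θ ^ n * S.N ^ m)
    {m n j0 : ℕ} (hm : K * n ≤ m) :
    ((S.pw m \ S.good D m j0 n).card : ℝ) ≤ C / (1 - θ) * θ ^ j0 * S.N ^ m := by
  classical
  have hN := S.N_pos
  have hsub : S.pw m \ S.good D m j0 n ⊆ (Finset.Ico j0 (n + 1)).biUnion fun j =>
      (S.pw m).filter fun v => S.al ^ (j * D) * S.N ^ m < S.ball m j v := by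
    intro y hy
    rw [Finset.mem_sdiff, good, Finset.mem_filter] at hy
    have h := hy.2
    push Not at h
    obtain ⟨j, h1, h2, h3⟩ := h hy.1
    exact Finset.mem_biUnion.2 ⟨j, Finset.mem_Ico.2 ⟨h1, by omega⟩,
      Finset.mem_filter.2 ⟨hy.1, h3⟩⟩
  calc ((S.pw m \ S.good D m j0 n).card : ℝ)
      ≤ ∑ j ∈ Finset.Ico j0 (n + 1), (((S.pw m).filter fun v =>
        S.al ^ (j * D) * S.N ^ m < S.ball m j v).card : ℝ) := by
        exact_mod_cast (Finset.card_le_card hsub).trans Finset.card_biUnion_le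
    _ ≤ ∑ j ∈ Finset.Ico j0 (n + 1), C * θ ^ j * S.N ^ m := by
        refine Finset.sum_le_sum fun j hj => hB j m ?_
        have := (Finset.mem_Ico.1 hj).2
        exact le_trans (Nat.mul_le_mul_left _ (by omega)) hm
    _ = (C * S.N ^ m) * ∑ j ∈ Finset.Ico j0 (n + 1), θ ^ j := by
        rw [Finset.mul_sum]
        exact Finset.sum_congr rfl fun j _ => by ring
    _ ≤ (C * S.N ^ m) * (θ ^ j0 / (1 - θ)) := by
        gcongr
        exact geom_sum_Ico_le_of_lt_one hθ.le hθ1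
    _ = _ := by ring

/-- Ball estimates imply tube estimates. -/
lemma Tub_of_Ball {D ε : ℝ} (hD : 0 ≤ D) (hD3 : D ≤ 3 - S.s) (hB : S.Ball D) (hε : 0 < ε)
    (hβ : 3 - S.s - D < ε * (2 - S.s)) : S.Tub ε := by
  classical
  obtain ⟨C0, θ0, Kb, hC0, hθ0, hθ01, hball⟩ := hB
  have hr := S.rho_pos
  have hr1 := S.rho_lt_one
  have hN := S.N_pos
  obtain ⟨Ks, hKs⟩ : ∃ Ks : ℕ, 1 ≤ S.rho * 2 ^ Ks := by
    obtain ⟨k, hk⟩ := pow_unbounded_of_one_lt (1 / S.rho) (by norm_num : (1:ℝ) < 2)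
    refine ⟨k, ?_⟩
    rw [div_lt_iff₀ hr] at hk
    linarith
  obtain ⟨K0, hK0, hch⟩ := S.chart_bound
  obtain ⟨T, C1, θ1, hT, hC1, hθ1, hθ11, hsc⟩ := S.scalar_bound Ks hD3 hε hβ
  obtain ⟨η, hη, hη1, hpd⟩ := pow_div_le θ0 hθ0 hθ01 T hT
  set θ : ℝ := max S.rho (max θ1 η) with hθ
  have hθp : 0 < θ := lt_max_of_lt_left hr
  have hle1 : S.rho ≤ θ := le_max_left _ _
  have hle2 : θ1 ≤ θ := (le_max_left _ _).trans (le_max_right _ _)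
  have hle3 : η ≤ θ := (le_max_right _ _).trans (le_max_right _ _)
  have h1θ : 0 < 1 - θ0 := by linarith
  refine ⟨147 + C0 / (1 - θ0) * θ0⁻¹ + 3 * (K0 * C1), θ, Kb, by positivity, hθp,
    max_lt hr1 (max_lt hθ11 hη1), fun n m hm => ?_⟩
  have hA : (0:ℝ) ≤ C0 / (1 - θ0) * θ0⁻¹ := by positivity
  have hB2 : (0:ℝ) ≤ 3 * (K0 * C1) := by positivity
  -- For boundedly many `n` the incidence bound does not apply, and the trivial bound suffices.
  rcases lt_or_ge 1 (147 * S.rho ^ n) with hbig | hd1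
  · have h1 : (((S.pw n ×ˢ S.pw m).filter fun wy => S.rho ^ (n * (1 - ε)) * S.N ^ m
        < S.tube m (S.rho ^ n) (S.p wy.1) wy.2).card : ℝ) ≤ S.N ^ (n + m) := by
      rw [pow_add, ← S.card_pw n, ← S.card_pw m]
      exact_mod_cast (Finset.card_filter_le _ _).trans (Finset.card_product _ _).le
    refine h1.trans ?_
    have h2 : S.rho ^ n ≤ θ ^ n := by gcongr
    have h3 : 1 ≤ (147 + C0 / (1 - θ0) * θ0⁻¹ + 3 * (K0 * C1)) * θ ^ n := by
      have : 0 < θ ^ n := by positivity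
      nlinarith [mul_nonneg hA this.le, mul_nonneg hB2 this.le]
    have h4 : (0:ℝ) < S.N ^ (n + m) := by positivity
    nlinarith
  set G := S.good D m (n / T) n with hG
  set M : ℝ := S.rho ^ (n * (1 - ε)) with hM
  have hMp : 0 < M := Real.rpow_pos_of_pos hr _
  set Bc : Fin 3 → Finset (List (Fin 3) × List (Fin 3)) := fun c =>
    (G ×ˢ (S.pw n).filter fun w => 1 / 3 ≤ |S.p w c|).filter fun yw =>
      M * S.N ^ m ≤ S.tube m (S.rho ^ n) (S.p yw.2) yw.1 with hBc
  -- A heavy tube starts at an exceptional word, or is seen in one of the three charts.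
  have hsub : ((S.pw n ×ˢ S.pw m).filter fun wy => M * S.N ^ m
        < S.tube m (S.rho ^ n) (S.p wy.1) wy.2) ⊆
      (S.pw n ×ˢ (S.pw m \ G)) ∪ (Finset.univ.biUnion Bc).image Prod.swap := by
    rintro ⟨w, y⟩ h
    rw [Finset.mem_filter, Finset.mem_product] at h
    obtain ⟨⟨hw, hy⟩, hlt⟩ := h
    simp only at hw hy hlt
    rw [Finset.mem_union]
    by_cases hyG : y ∈ G
    · right
      have hn := S.n1_p hw
      obtain ⟨c, hc⟩ : ∃ c, 1 / 3 ≤ |S.p w c| := by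
        by_contra hcon
        push Not at hcon
        have h0 := hcon 0
        have h1 := hcon 1
        have h2 := hcon 2
        unfold n1 at hn
        linarith
      refine Finset.mem_image.2 ⟨(y, w), Finset.mem_biUnion.2 ⟨c, Finset.mem_univ _, ?_⟩, rfl⟩
      exact Finset.mem_filter.2 ⟨Finset.mem_product.2 ⟨hyG, Finset.mem_filter.2 ⟨hw, hc⟩⟩, hlt.le⟩
    · left
      exact Finset.mem_product.2 ⟨hw, Finset.mem_sdiff.2 ⟨hy, hyG⟩⟩
  have hcard : (((S.pw n ×ˢ S.pw m).filter fun wy => M * S.N ^ m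
        < S.tube m (S.rho ^ n) (S.p wy.1) wy.2).card : ℝ) ≤
      (S.pw n).card * (S.pw m \ G).card + ∑ c, ((Bc c).card : ℝ) := by
    have h1 := (Finset.card_le_card hsub).trans (Finset.card_union_le _ _)
    rw [Finset.card_product] at h1
    have h2 := (Finset.card_image_le (s := Finset.univ.biUnion Bc) (f := Prod.swap)).trans
      Finset.card_biUnion_le
    have h3 := h1.trans (Nat.add_le_add_left h2 _)
    exact_mod_cast h3
  have hBcard : ∀ c, ((Bc c).card : ℝ) ≤ K0 * (C1 * θ ^ n) * (S.N ^ m * S.N ^ n) := by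
    intro c
    have h := hch D n m (n / T) Ks M G c hD hD3 (Nat.div_le_self _ _) hd1 hKs
      (S.good_subset _ _ _ _) hMp (fun y hy j h1 h2 => by
        rw [hG, good, Finset.mem_filter] at hy
        exact hy.2 j h1 h2)
    refine h.trans ?_
    have h5 : C1 * θ1 ^ n ≤ C1 * θ ^ n := by gcongr
    refine mul_le_mul_of_nonneg_right ?_ (by positivity)
    refine mul_le_mul_of_nonneg_left ?_ hK0.le
    exact (hsc n).trans h5
  have hGc : ((S.pw m \ G).card : ℝ) ≤ C0 / (1 - θ0) * (θ0⁻¹ * θ ^ n) * S.N ^ m := by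
    refine (S.card_not_good hC0 hθ0 hθ01 hball hm).trans ?_
    have h6 : θ0 ^ (n / T) ≤ θ0⁻¹ * θ ^ n := (hpd n).trans (by gcongr)
    gcongr
  refine hcard.trans ?_
  rw [S.card_pw n]
  calc _ ≤ S.N ^ n * (C0 / (1 - θ0) * (θ0⁻¹ * θ ^ n) * S.N ^ m) +
        ∑ c : Fin 3, K0 * (C1 * θ ^ n) * (S.N ^ m * S.N ^ n) := by
        gcongr with c _
        exact hBcard c
    _ = (C0 / (1 - θ0) * θ0⁻¹ + 3 * (K0 * C1)) * θ ^ n * S.N ^ (n + m) := by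
        rw [Fin.sum_univ_three, pow_add]; ring
    _ ≤ _ := by
        gcongr
        linarith

/-- One round of the bootstrap. The exponent of the ball estimate is capped at `3 - s`, where the
incidence bound is already conclusive. -/
lemma Tub_step {ε ε' : ℝ} (hε : 0 ≤ ε) (hε1 : ε ≤ 1) (h : S.Tub ε) (hε' : 0 < ε')
    (hlt : 3 - 2 * S.s + ε * (1 / 2 + S.th) < ε' * (2 - S.s)) : S.Tub ε' := by
  have h2 := S.hs2
  have h1 := S.hs
  have h3 := S.hth
  have h4 := S.hth2
  have hB := S.Ball_of_Tub hε h
  rcases le_total (S.s - ε * (1 / 2 + S.th)) (3 - S.s) with hle | hle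
  · exact S.Tub_of_Ball (by nlinarith) hle hB hε' (by linarith)
  · exact S.Tub_of_Ball (by linarith) le_rfl (S.Ball_mono hle hB) hε' (by nlinarith)

/-- All tube estimates hold: since `s > 3/2 + th`, each round of the bootstrap lowers `ε` by
`s - 3/2 - th`, starting from the trivial case `ε = 1`. -/
lemma Tub_all {ε : ℝ} (hε : 0 < ε) (hε1 : ε ≤ 1) : S.Tub ε := by
  have h2 := S.hs2
  have h1 := S.hs
  have h3 := S.hth
  have h4 := S.hth2
  set δ : ℝ := S.s - 3 / 2 - S.th with hδ
  have hδ0 : 0 < δ := by rw [hδ]; linarith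
  have key : ∀ k : ℕ, S.Tub (max ε (1 - k * δ)) := by
    intro k
    induction k with
    | zero =>
      simp only [Nat.cast_zero, zero_mul, sub_zero, max_eq_right hε1]
      exact S.Tub_one
    | succ k ih =>
      set x := max ε (1 - k * δ) with hx
      have hx0 : ε ≤ x := le_max_left _ _
      have hx1 : x ≤ 1 := max_le hε1 (by have : 0 ≤ (k:ℝ) * δ := by positivity
                                         linarith)
      refine S.Tub_step (by linarith) hx1 ih (lt_max_of_lt_left hε) ?_
      have hx' : x - δ ≤ max ε (1 - (k + 1 : ℕ) * δ) := by
        rcases le_total ε (1 - k * δ) with h | h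
        · rw [hx, max_eq_right h]
          refine le_trans (le_of_eq ?_) (le_max_right _ _)
          push_cast; ring
        · rw [hx, max_eq_left h]
          exact le_trans (by linarith) (le_max_left _ _)
      have h5 : (x - δ) * (2 - S.s) ≤ max ε (1 - (k + 1 : ℕ) * δ) * (2 - S.s) := by
        gcongr
      refine lt_of_lt_of_le ?_ h5
      have h6 : S.th = S.s - 3 / 2 - δ := by rw [hδ]; ring
      rw [h6]
      nlinarith
  obtain ⟨k, hk⟩ := exists_nat_gt (1 / δ)
  have h := key k
  rw [max_eq_left] at h
  · exact h
  · rw [div_lt_iff₀ hδ0] at hk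
    linarith

/-- The lower bound for the dimension furnished by an expanding block family. -/
theorem le_dimH_sys : ENNReal.ofReal S.s ≤ dimH gasket := by
  have h2 := S.hs2
  have h1 := S.hs
  have h3 := S.hth
  have h4 := S.hth2
  have key : ∀ D, 0 < D → D < S.s → ENNReal.ofReal D ≤ dimH gasket := by
    intro D hD hDs
    set ε := min 1 (S.s - D) with hε
    have hε0 : 0 < ε := lt_min one_pos (by linarith)
    have hB := S.Ball_of_Tub hε0.le (S.Tub_all hε0 (min_le_left _ _))
    refine S.le_dimH hD (S.Ball_mono ?_ hB)
    have := min_le_right 1 (S.s - D)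
    nlinarith
  refine le_of_forall_lt fun c hc => ?_
  have hc' : c ≠ ⊤ := (hc.trans_le le_top).ne
  lift c to NNReal using hc'
  rw [← ENNReal.ofReal_coe_nnreal, ENNReal.ofReal_lt_ofReal_iff (by linarith)] at hc
  obtain ⟨D, hD1, hD2⟩ := exists_between hc
  have hc0 : (0:ℝ) ≤ c := c.2
  refine lt_of_lt_of_le ?_ (key D (by linarith) hD2)
  rw [← ENNReal.ofReal_coe_nnreal, ENNReal.ofReal_lt_ofReal_iff (by linarith)]
  exact hD1

end Sys

/-! ### From prefix-free families to block families -/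

/-- Concatenations of `n` words of `W`. -/
def cat (W : Finset (List (Fin 3))) : ℕ → Finset (List (Fin 3))
  | 0 => {[]}
  | n + 1 => Finset.image₂ (· ++ ·) W (cat W n)

/-- No word of `W` is a proper prefix of another one. -/
def PrefixFree (W : Finset (List (Fin 3))) : Prop := ∀ w ∈ W, ∀ w' ∈ W, w <+: w' → w = w'

lemma cat_card {W : Finset (List (Fin 3))} (hW : PrefixFree W) (n : ℕ) :
    (cat W n).card = W.card ^ n := by
  induction n with
  | zero => simp [cat]
  | succ n ih =>
    rw [cat, pow_succ', ← ih, Finset.card_image₂_iff]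
    rintro ⟨a, b⟩ h ⟨a', b'⟩ h' heq
    simp only [Set.mem_prod, Finset.mem_coe] at h h' heq
    have haa : a = a' := by
      have h1 : a <+: a ++ b := List.prefix_append _ _
      have h2 : a' <+: a ++ b := by rw [heq]; exact List.prefix_append _ _
      rcases le_total a.length a'.length with hl | hl
      · exact hW _ h.1 _ h'.1 (List.prefix_of_prefix_length_le h1 h2 hl)
      · exact (hW _ h'.1 _ h.1 (List.prefix_of_prefix_length_le h2 h1 hl)).symm
    subst haa
    have := List.append_cancel_left heq
    subst this
    rfl

lemma cat_ns {W : Finset (List (Fin 3))} {PP RQ : ℝ} (hPP : 1 ≤ PP) (hRQ : 1 ≤ RQ)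
    (hP : ∀ w ∈ W, ns (Aw w) ≤ PP) (hQ : ∀ w ∈ W, ns (Aw w)⁻¹ ≤ RQ) {n : ℕ} :
    ∀ v ∈ cat W (n + 1), ns (Aw v) ≤ PP ^ (n + 1) ∧ ns (Aw v)⁻¹ ≤ RQ ^ (n + 1) := by
  induction n with
  | zero =>
    intro v hv
    rw [cat, cat, Finset.mem_image₂] at hv
    obtain ⟨a, ha, b, hb, rfl⟩ := hv
    rw [Finset.mem_singleton] at hb
    subst hb
    simpa using ⟨hP a ha, hQ a ha⟩
  | succ n ih =>
    intro v hv
    rw [cat, Finset.mem_image₂] at hv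
    obtain ⟨a, ha, b, hb, rfl⟩ := hv
    have h1 := ih b hb
    have h2 := hP a ha
    have h3 := hQ a ha
    have h4 := ns_nonneg (Aw a)
    have h5 := ns_nonneg (Aw b)
    have h6 := ns_nonneg (Aw b)⁻¹
    constructor
    · rw [pow_succ, mul_comm]
      refine (ns_Aw_append_le a b).trans ?_
      have := h1.1
      gcongr
    · rw [inv_Aw_append, pow_succ]
      refine (ns_mul _ _).trans ?_
      have := h1.2
      have := ns_nonneg (Aw a)⁻¹
      gcongr

lemma cat_cone {W : Finset (List (Fin 3))} {RR : ℝ} (hRR : 0 < RR) {cone : (Fin 3 → ℝ) → Prop}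
    (hc : ∀ w ∈ W, ∀ q, cone q → cone ((Aw w)⁻¹ *ᵥ q) ∧ RR * n1 q ≤ n1 ((Aw w)⁻¹ *ᵥ q)) {n : ℕ} :
    ∀ v ∈ cat W n, ∀ q, cone q → cone ((Aw v)⁻¹ *ᵥ q) ∧ RR ^ n * n1 q ≤ n1 ((Aw v)⁻¹ *ᵥ q) := by
  induction n with
  | zero =>
    intro v hv q hq
    rw [cat, Finset.mem_singleton] at hv
    subst hv
    simp [Aw_nil, hq]
  | succ n ih =>
    intro v hv q hq
    rw [cat, Finset.mem_image₂] at hv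
    obtain ⟨a, ha, b, hb, rfl⟩ := hv
    rw [inv_Aw_append, ← Matrix.mulVec_mulVec]
    obtain ⟨h1, h2⟩ := hc a ha q hq
    obtain ⟨h3, h4⟩ := ih b hb _ h1
    refine ⟨h3, le_trans ?_ h4⟩
    rw [pow_succ, mul_assoc]
    gcongr

lemma cat_length {W : Finset (List (Fin 3))} {B : ℕ} (hB : ∀ w ∈ W, w.length ≤ B) {n : ℕ} :
    ∀ v ∈ cat W n, v.length ≤ n * B := by
  induction n with
  | zero =>
    intro v hv
    rw [cat, Finset.mem_singleton] at hv
    simp [hv]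
  | succ n ih =>
    intro v hv
    rw [cat, Finset.mem_image₂] at hv
    obtain ⟨a, ha, b, hb, rfl⟩ := hv
    have h1 := hB a ha
    have h2 := ih b hb
    rw [List.length_append, Nat.succ_mul]
    omega

lemma cat_pre {W : Finset (List (Fin 3))} (hW : ∀ w ∈ W, ∃ v, w = [0, 1, 2] ++ v) {n : ℕ} :
    ∀ v ∈ cat W (n + 1), ∃ x, v = [0, 1, 2] ++ x := by
  intro v hv
  rw [cat, Finset.mem_image₂] at hv
  obtain ⟨a, ha, b, hb, rfl⟩ := hv
  obtain ⟨x, rfl⟩ := hW a ha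
  exact ⟨x ++ b, by rw [List.append_assoc]⟩

/-- Pigeonhole principle: some fibre carries at least the average. -/
lemma pigeon {α β : Type*} [DecidableEq β] (V : Finset α) (hV : V.Nonempty) (T : Finset β)
    (f : α → β) (hf : ∀ v ∈ V, f v ∈ T) :
    ∃ t ∈ T, V.card ≤ T.card * (V.filter fun v => f v = t).card := by
  by_contra hcon
  push Not at hcon
  have h1 := Finset.card_eq_sum_card_fiberwise hf
  have hT : T.Nonempty := ⟨_, hf _ hV.choose_spec⟩
  have h2 : ∑ t ∈ T, T.card * (V.filter fun v => f v = t).card < ∑ t ∈ T, V.card :=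
    Finset.sum_lt_sum_of_nonempty hT hcon
  rw [← Finset.mul_sum, Finset.sum_const, smul_eq_mul, ← h1] at h2
  exact lt_irrefl _ h2

/-- Passing to concatenations of `n` words and then to the most frequent length loses less than
any prescribed exponential factor. -/
lemma exists_equal_length {W : Finset (List (Fin 3))} (hW : PrefixFree W) (hne : W.Nonempty)
    {x : ℝ} (hx : 0 < x) (hlt : x < W.card) :
    ∃ n L : ℕ, x ^ (n + 1) ≤ (((cat W (n + 1)).filter fun v => v.length = L).card : ℝ) := by
  obtain ⟨B, hB⟩ : ∃ B : ℕ, ∀ w ∈ W, w.length ≤ B :=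
    ⟨W.sup List.length, fun w hw => Finset.le_sup (f := List.length) hw⟩
  have hN : (0:ℝ) < W.card := hx.trans hlt
  have ht := tendsto_pow_const_mul_const_pow_of_abs_lt_one 1
    (r := x / W.card) (by rw [abs_of_pos (by positivity), div_lt_one hN]; exact hlt)
  have ht2 := tendsto_pow_const_mul_const_pow_of_abs_lt_one 0
    (r := x / W.card) (by rw [abs_of_pos (by positivity), div_lt_one hN]; exact hlt)
  have ht3 := ((ht.const_mul (B:ℝ)).add ht2)
  rw [mul_zero, zero_add] at ht3
  obtain ⟨n, hn⟩ := ((ht3.comp (Filter.tendsto_add_atTop_nat 1)).eventually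
    (gt_mem_nhds one_pos)).exists
  simp only [Function.comp, pow_one, pow_zero, one_mul] at hn
  have hne2 : (cat W (n + 1)).Nonempty := by
    rw [← Finset.card_pos, cat_card hW]
    exact pow_pos (Finset.card_pos.2 hne) _
  obtain ⟨L, _, hL⟩ := pigeon (cat W (n + 1)) hne2 (Finset.range ((n + 1) * B + 1)) List.length
    (fun v hv => Finset.mem_range.2 (Nat.lt_succ_of_le (cat_length hB v hv)))
  refine ⟨n, L, ?_⟩
  rw [cat_card hW, Finset.card_range] at hL
  have hL' : (W.card : ℝ) ^ (n + 1) ≤ (((n + 1 : ℕ) : ℝ) * B + 1) *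
      ((cat W (n + 1)).filter fun v => v.length = L).card := by exact_mod_cast hL
  rw [div_pow] at hn
  have hp : (0:ℝ) < (W.card:ℝ) ^ (n + 1) := by positivity
  have h5 : (((n + 1 : ℕ) : ℝ) * B + 1) * x ^ (n + 1) < (W.card:ℝ) ^ (n + 1) := by
    have h6 : (B * (((n + 1 : ℕ) : ℝ) * (x ^ (n + 1) / (W.card:ℝ) ^ (n + 1))) +
      x ^ (n + 1) / (W.card:ℝ) ^ (n + 1)) =
      ((((n + 1 : ℕ) : ℝ) * B + 1) * x ^ (n + 1)) / (W.card:ℝ) ^ (n + 1) := by ring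
    rw [h6, div_lt_one hp] at hn
    exact hn
  have h7 : (0:ℝ) < ((n + 1 : ℕ) : ℝ) * B + 1 := by positivity
  exact (lt_of_mul_lt_mul_left (h5.trans_le hL') h7.le).le

lemma rpow_pow_comm' {x : ℝ} (hx : 0 ≤ x) (y : ℝ) (n : ℕ) : (x ^ n) ^ y = (x ^ y) ^ n := by
  rw [← Real.rpow_natCast, ← Real.rpow_natCast, ← Real.rpow_mul hx, ← Real.rpow_mul hx, mul_comm]

/-- Dimension bound from a prefix-free family in the conformal regime. -/
lemma dimH_of_conformal {W : Finset (List (Fin 3))} (hW : PrefixFree W) (hne : W.Nonempty)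
    (hpre : ∀ w ∈ W, ∃ v, w = [0, 1, 2] ++ v) {PP RQ s : ℝ} (hs : 0 < s)
    (hPP : 1 ≤ PP) (hRQ : 1 ≤ RQ)
    (hP : ∀ w ∈ W, ns (Aw w) ≤ PP) (hQ : ∀ w ∈ W, ns (Aw w)⁻¹ ≤ RQ)
    (hlt : (1 / (PP * RQ)) ^ (-s) < W.card) : ENNReal.ofReal s ≤ dimH gasket := by
  obtain ⟨n, L, hnL⟩ := exists_equal_length hW hne (by positivity) hlt
  have hpos : (0:ℝ) < ((1 / (PP * RQ)) ^ (-s)) ^ (n + 1) := by positivity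
  let S : Sys0 :=
    { W := (cat W (n + 1)).filter fun v => v.length = L
      L := L
      PP := PP ^ (n + 1)
      RQ := RQ ^ (n + 1)
      hlen := fun w hw => (Finset.mem_filter.1 hw).2
      hpre := fun w hw => cat_pre hpre w (Finset.mem_filter.1 hw).1
      hne := by
        rw [← Finset.card_pos]
        exact_mod_cast hpos.trans_le hnL
      hP := fun w hw => (cat_ns hPP hRQ hP hQ w (Finset.mem_filter.1 hw).1).1
      hQ := fun w hw => (cat_ns hPP hRQ hP hQ w (Finset.mem_filter.1 hw).1).2 }
  refine S.le_dimH hs (S.Ball_of_card s ?_)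
  change (1 / (PP ^ (n + 1) * RQ ^ (n + 1))) ^ (-s) ≤ _
  rw [← mul_pow, ← _root_.one_div_pow, rpow_pow_comm' (by positivity)]
  exact hnL

/-- Dimension bound from a prefix-free family expanding a cone. -/
lemma dimH_of_expanding {W : Finset (List (Fin 3))} (hW : PrefixFree W) (hne : W.Nonempty)
    (hpre : ∀ w ∈ W, ∃ v, w = [0, 1, 2] ++ v) {PP RQ RR s th : ℝ} {cone : (Fin 3 → ℝ) → Prop}
    {i0 : Fin 3} (hs : 3 / 2 < s) (hs2 : s < 2) (hth : 0 ≤ th) (hth2 : th < s - 3 / 2)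
    (hPP : 1 ≤ PP) (hRQ : 1 ≤ RQ)
    (hP : ∀ w ∈ W, ns (Aw w) ≤ PP) (hQ : ∀ w ∈ W, ns (Aw w)⁻¹ ≤ RQ)
    (hcone0 : cone (basis3 i0))
    (hcone : ∀ w ∈ W, ∀ q, cone q → cone ((Aw w)⁻¹ *ᵥ q) ∧ RR * n1 q ≤ n1 ((Aw w)⁻¹ *ᵥ q))
    (hRR : 0 < RR) (hRR2 : RR ≤ RQ) (hrho : PP < RR * RQ)
    (hlt : PP / (RR * RQ) * (1 / (PP * RQ)) ^ (-s) < W.card)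
    (hal : (1 / (PP * RQ)) ^ (1 / 2 + th) ≤ PP / (RR * RQ)) :
    ENNReal.ofReal s ≤ dimH gasket := by
  obtain ⟨n, L, hnL⟩ := exists_equal_length hW hne (by positivity) hlt
  have hpos : (0:ℝ) < (PP / (RR * RQ) * (1 / (PP * RQ)) ^ (-s)) ^ (n + 1) := by positivity
  let S : Sys :=
    { W := (cat W (n + 1)).filter fun v => v.length = L
      L := L
      PP := PP ^ (n + 1)
      RQ := RQ ^ (n + 1)
      hlen := fun w hw => (Finset.mem_filter.1 hw).2
      hpre := fun w hw => cat_pre hpre w (Finset.mem_filter.1 hw).1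
      hne := by
        rw [← Finset.card_pos]
        exact_mod_cast hpos.trans_le hnL
      hP := fun w hw => (cat_ns hPP hRQ hP hQ w (Finset.mem_filter.1 hw).1).1
      hQ := fun w hw => (cat_ns hPP hRQ hP hQ w (Finset.mem_filter.1 hw).1).2
      s := s
      th := th
      RR := RR ^ (n + 1)
      cone := cone
      i0 := i0
      hs := hs
      hs2 := hs2
      hth := hth
      hth2 := hth2
      hcone0 := hcone0
      hcone := fun w hw => cat_cone hRR hcone w (Finset.mem_filter.1 hw).1
      hRR := by positivity
      hRQ := by gcongr
      hrho := by
        rw [← mul_pow]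
        exact pow_lt_pow_left₀ hrho (by linarith) (by omega)
      hN := by
        rw [← mul_pow, ← mul_pow, ← _root_.one_div_pow, ← div_pow, rpow_pow_comm' (by positivity),
          ← mul_pow]
        exact hnL
      hal := by
        rw [← mul_pow, ← mul_pow, ← _root_.one_div_pow, ← div_pow, rpow_pow_comm' (by positivity)]
        gcongr }
  exact S.le_dimH_sys

/-! ### Blocks built from a class of words -/

lemma le_Aw_append (v x : List (Fin 3)) (i j : Fin 3) : Aw v i j ≤ Aw (v ++ x) i j := by
  rw [Aw_append, mul_apply]
  have h := Finset.single_le_sum (f := fun l => Aw v i l * Aw x l j)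
    (fun l _ => mul_nonneg (Aw_nonneg _ _ _) (Aw_nonneg _ _ _)) (Finset.mem_univ j)
  have h1 := one_le_Aw_diag x j
  have h2 := Aw_nonneg v i j
  refine le_trans ?_ h
  nlinarith

lemma ns_le_append (v x : List (Fin 3)) : ns (Aw v) ≤ ns (Aw (v ++ x)) := by
  unfold ns
  refine Finset.sum_le_sum fun i _ => Finset.sum_le_sum fun j _ => ?_
  rw [abs_of_nonneg (Aw_nonneg _ _ _), abs_of_nonneg (Aw_nonneg _ _ _)]
  exact le_Aw_append v x i j

lemma ns_Aw_le_pow (w : List (Fin 3)) : ns (Aw w) ≤ 5 ^ w.length * 3 := by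
  induction w with
  | nil => simp [Aw_nil, ns, Fin.sum_univ_three, Matrix.one_apply]; norm_num
  | cons k w ih =>
    rw [Aw_cons, List.length_cons, pow_succ]
    refine (ns_mul _ _).trans ?_
    rw [ns_A]
    linarith

lemma ns_inv_Aw_le_pow (w : List (Fin 3)) : ns (Aw w)⁻¹ ≤ 5 ^ w.length * 3 := by
  have h5 (k : Fin 3) : ns (A k)⁻¹ = 5 := by
    rw [A_inv_eq]
    fin_cases k <;> simp [ns, A, Fin.sum_univ_three, Matrix.one_apply] <;> norm_num
  induction w with
  | nil => simp [Aw_nil, ns, Fin.sum_univ_three, Matrix.one_apply]; norm_num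
  | cons k w ih =>
    have : (Aw (k :: w))⁻¹ = (Aw w)⁻¹ * (A k)⁻¹ := by rw [Aw_cons, Matrix.mul_inv_rev]
    rw [this, List.length_cons, pow_succ]
    refine (ns_mul _ _).trans ?_
    rw [h5]
    linarith

/-- After the word `[0, 1, 2]` all column sums are comparable, so that any further letter
increases the norm by a definite factor. -/
lemma ns_grow (x z : List (Fin 3)) (hz : z ≠ []) :
    7 / 5 * ns (Aw (x ++ [0, 1, 2])) ≤ ns (Aw (x ++ [0, 1, 2] ++ z)) := by
  obtain ⟨k, z, rfl⟩ := List.exists_cons_of_ne_nil hz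
  have e : x ++ [0, 1, 2] ++ k :: z = (x ++ [0, 1, 2] ++ [k]) ++ z := by simp
  rw [e]
  refine le_trans ?_ (ns_le_append _ _)
  have h := Aw_nonneg x
  simp only [ns, abs_of_nonneg (Aw_nonneg _ _ _)]
  rw [Aw_append (x ++ [0, 1, 2]), Aw_append, Aw_h, Aw_singleton]
  have h00 := h 0 0; have h01 := h 0 1; have h02 := h 0 2
  have h10 := h 1 0; have h11 := h 1 1; have h12 := h 1 2
  have h20 := h 2 0; have h21 := h 2 1; have h22 := h 2 2
  fin_cases k <;> simp [Matrix.mul_apply, Fin.sum_univ_three, A] <;> linarith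

/-- The block obtained from `v` by inserting the connecting word `g`. -/
def block (g v : List (Fin 3)) : List (Fin 3) := [0, 1, 2] ++ v ++ g ++ [0, 1, 2]

lemma block_inj (g : List (Fin 3)) : Function.Injective (block g) := by
  intro v v' h
  unfold block at h
  simpa using h

lemma ns_block {g v : List (Fin 3)} (hg : g.length = 3) :
    ns (Aw (block g v)) ≤ 5 ^ 12 * ns (Aw v) ∧ ns (Aw (block g v))⁻¹ ≤ 5 ^ 12 * ns (Aw v)⁻¹ := by
  have a1 := ns_Aw_le_pow [0, 1, 2]
  have a2 := ns_Aw_le_pow (g ++ [0, 1, 2])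
  have b1 := ns_inv_Aw_le_pow [0, 1, 2]
  have b2 := ns_inv_Aw_le_pow (g ++ [0, 1, 2])
  simp only [List.length_append, hg, List.length_cons, List.length_nil] at a1 a2 b1 b2
  have e : block g v = [0, 1, 2] ++ (v ++ (g ++ [0, 1, 2])) := by simp [block]
  rw [e]
  have p1 := ns_Aw_append_le [0, 1, 2] (v ++ (g ++ [0, 1, 2]))
  have p2 := ns_Aw_append_le v (g ++ [0, 1, 2])
  have q1 := ns_inv_append_le [0, 1, 2] (v ++ (g ++ [0, 1, 2]))
  have q2 := ns_inv_append_le v (g ++ [0, 1, 2])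
  have n1 := ns_nonneg (Aw v)
  have n2 := ns_nonneg (Aw v)⁻¹
  constructor
  · calc _ ≤ ns (Aw [0, 1, 2]) * ns (Aw (v ++ (g ++ [0, 1, 2]))) := p1
      _ ≤ (5 ^ (0 + 1 + 1 + 1) * 3) * (ns (Aw v) * (5 ^ (3 + (0 + 1 + 1 + 1)) * 3)) := by
        refine mul_le_mul a1 (p2.trans (by gcongr)) (ns_nonneg _) (by positivity)
      _ ≤ _ := by norm_num; linarith
  · calc _ ≤ ns (Aw [0, 1, 2])⁻¹ * ns (Aw (v ++ (g ++ [0, 1, 2])))⁻¹ := q1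
      _ ≤ (5 ^ (0 + 1 + 1 + 1) * 3) * (ns (Aw v)⁻¹ * (5 ^ (3 + (0 + 1 + 1 + 1)) * 3)) := by
        refine mul_le_mul b1 (q2.trans (by gcongr)) (ns_nonneg _) (by positivity)
      _ ≤ _ := by norm_num; linarith

/-- A positive proportion of words of comparable norm gives prefix-free blocks. -/
lemma exists_prefixFree {V : Finset (List (Fin 3))} (hV : V.Nonempty) {P : ℝ} (hP : 0 < P)
    (hVP : ∀ v ∈ V, P ≤ ns (Aw v) ∧ ns (Aw v) ≤ 2 * P) {g : List (Fin 3)} (hg : g.length = 3) :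
    ∃ V' ⊆ V, V.card ≤ 100 * V'.card ∧ PrefixFree (V'.image (block g)) := by
  classical
  have hex : ∀ v : List (Fin 3), ∃ t : ℕ, v ∈ V → P * (7 / 5) ^ t ≤ ns (Aw (v ++ g ++ [0, 1, 2])) ∧
      ns (Aw (v ++ g ++ [0, 1, 2])) < P * (7 / 5) ^ (t + 1) := by
    intro v
    by_cases hv : v ∈ V
    · have h1 : 1 ≤ ns (Aw (v ++ g ++ [0, 1, 2])) / P := by
        rw [le_div_iff₀ hP, one_mul, List.append_assoc]
        exact (hVP v hv).1.trans (ns_le_append _ _)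
      obtain ⟨t, ht1, ht2⟩ := exists_nat_pow_near h1 (by norm_num : (1:ℝ) < 7 / 5)
      refine ⟨t, fun _ => ?_⟩
      rw [le_div_iff₀ hP] at ht1
      rw [div_lt_iff₀ hP] at ht2
      constructor <;> linarith
    · exact ⟨0, fun h => absurd h hv⟩
  choose t ht using hex
  have htb : ∀ v ∈ V, t v ∈ Finset.range 100 := by
    intro v hv
    rw [Finset.mem_range]
    by_contra hcon
    push Not at hcon
    have h1 := (ht v hv).1
    have h2 : ns (Aw (v ++ g ++ [0, 1, 2])) ≤ 2 * P * (5 ^ 6 * 3) := by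
      rw [List.append_assoc]
      refine (ns_Aw_append_le _ _).trans ?_
      have h3 := ns_Aw_le_pow (g ++ [0, 1, 2])
      simp only [List.length_append, hg, List.length_cons, List.length_nil] at h3
      exact mul_le_mul (hVP v hv).2 h3 (ns_nonneg _) (by positivity)
    have h4 : (7 / 5 : ℝ) ^ 100 ≤ (7 / 5) ^ t v := pow_le_pow_right₀ (by norm_num) hcon
    have h5 : (10 ^ 6 : ℝ) < (7 / 5 : ℝ) ^ 100 := by norm_num
    nlinarith
  obtain ⟨t0, _, hcard⟩ := pigeon V hV (Finset.range 100) t htb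
  rw [Finset.card_range] at hcard
  refine ⟨V.filter fun v => t v = t0, Finset.filter_subset _ _, hcard, ?_⟩
  intro w hw w' hw' hpre
  rw [Finset.mem_image] at hw hw'
  obtain ⟨v, hv, rfl⟩ := hw
  obtain ⟨v', hv', rfl⟩ := hw'
  rw [Finset.mem_filter] at hv hv'
  obtain ⟨z, hz⟩ := hpre
  by_contra hne
  have hz0 : z ≠ [] := by
    rintro rfl
    rw [List.append_nil] at hz
    exact hne hz
  have e : v' ++ g ++ [0, 1, 2] = v ++ g ++ [0, 1, 2] ++ z := by
    unfold block at hz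
    have : [0, 1, 2] ++ (v ++ g ++ [0, 1, 2] ++ z) = [0, 1, 2] ++ (v' ++ g ++ [0, 1, 2]) := by
      rw [← List.append_assoc, ← List.append_assoc, ← List.append_assoc, hz]
      simp
    exact (List.append_cancel_left this).symm
  have h1 := ns_grow (v ++ g) z hz0
  rw [← e] at h1
  have h2 := (ht v hv.1).1
  have h3 := (ht v' hv'.1).2
  rw [hv.2] at h2
  rw [hv'.2, pow_succ] at h3
  linarith

/-! ### Cones preserved by near rank one inverses -/

/-- A bounded family of matrices has a positive proportion lying in a small cell. -/
lemma exists_cell (ε : ℝ) (hε : 0 < ε) : ∃ K : ℕ, 0 < K ∧ ∀ (V : Finset (List (Fin 3))), V.Nonempty →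
    ∀ F : List (Fin 3) → M3, (∀ v a b, |F v a b| ≤ 1) →
    ∃ v0 ∈ V, ∃ V' ⊆ V, V.card ≤ K * V'.card ∧ ∀ v ∈ V', ∀ a b, |F v a b - F v0 a b| ≤ ε := by
  classical
  obtain ⟨m, hm⟩ := exists_nat_gt (1 / ε + 1)
  set T : Finset (Fin 3 × Fin 3 → ℤ) := Fintype.piFinset fun _ => Finset.Icc (-(m:ℤ)) m with hT
  have hT0 : T.Nonempty := ⟨fun _ => 0, by simp [hT, Fintype.mem_piFinset]⟩
  refine ⟨T.card, Finset.card_pos.2 hT0, fun V hV F hF => ?_⟩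
  obtain ⟨t, _, ht⟩ := pigeon V hV T (fun v x => ⌊F v x.1 x.2 / ε⌋) (fun v _ => by
    rw [hT, Fintype.mem_piFinset]
    intro x
    have h := abs_le.1 (hF v x.1 x.2)
    have h1 : -(1 / ε) ≤ F v x.1 x.2 / ε := by rw [← neg_div]; gcongr; exact h.1
    have h2 : F v x.1 x.2 / ε ≤ 1 / ε := by gcongr; exact h.2
    rw [Finset.mem_Icc]
    constructor
    · rw [Int.le_floor]; push_cast; linarith
    · have : ⌊F v x.1 x.2 / ε⌋ < (m:ℤ) := by
        rw [Int.floor_lt]; push_cast; linarith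
      exact this.le)
  have hpos : 0 < (V.filter fun v => (fun x : Fin 3 × Fin 3 => ⌊F v x.1 x.2 / ε⌋) = t).card := by
    by_contra hcon
    have h0 : (V.filter fun v => (fun x : Fin 3 × Fin 3 => ⌊F v x.1 x.2 / ε⌋) = t).card = 0 := by omega
    rw [h0, mul_zero] at ht
    have := Finset.card_pos.2 hV
    omega
  obtain ⟨v0, hv0⟩ := Finset.card_pos.1 hpos
  refine ⟨v0, (Finset.mem_filter.1 hv0).1, _, Finset.filter_subset _ _, ht, fun v hv a b => ?_⟩
  have h : (fun x : Fin 3 × Fin 3 => ⌊F v x.1 x.2 / ε⌋) = fun x => ⌊F v0 x.1 x.2 / ε⌋ :=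
    (Finset.mem_filter.1 hv).2.trans (Finset.mem_filter.1 hv0).2.symm
  have h1 := Int.abs_sub_lt_one_of_floor_eq_floor (congrFun h (a, b))
  simp only at h1
  rw [← sub_div, abs_div, abs_of_pos hε, div_lt_one hε] at h1
  exact h1.le

lemma ns_h : ns (Aw [0, 1, 2]) ≤ 375 := by
  have := ns_Aw_le_pow [0, 1, 2]
  norm_num at this
  exact this

lemma ns_h_inv : ns (Aw [0, 1, 2])⁻¹ ≤ 375 := by
  have := ns_inv_Aw_le_pow [0, 1, 2]
  norm_num at this
  exact this

set_option maxHeartbeats 1000000 in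
/-- Blocks whose middle part has an inverse close to a multiple of the rank one matrix
`p rᵀ` preserve a cone and expand it by a factor comparable to the norm of the inverse. -/
lemma exists_cone : ∃ ε c2 : ℝ, 0 < ε ∧ 0 < c2 ∧ c2 ≤ 1 ∧ ∀ p r : Fin 3 → ℝ,
    1 ≤ n1 p → n1 p ≤ 3 → 1 ≤ n1 r → n1 r ≤ 3 →
    ∃ (g : List (Fin 3)) (i0 : Fin 3) (cone : (Fin 3 → ℝ) → Prop), g.length = 3 ∧
      cone (basis3 i0) ∧ ∀ (v : List (Fin 3)) (b : ℝ),
        (∀ k l, |(Aw v)⁻¹ k l - b * (p k * r l)| ≤ ε * |b|) → ∀ q, cone q →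
        cone ((Aw (block g v))⁻¹ *ᵥ q) ∧
          c2 * |b| * n1 q ≤ n1 ((Aw (block g v))⁻¹ *ᵥ q) := by
  obtain ⟨c0, hc0, hc0'⟩ : ∃ c0 : ℝ, 0 < c0 ∧ c0 = 1 / (135 * 375 ^ 2) := ⟨_, by norm_num, rfl⟩
  obtain ⟨M, hM⟩ : ∃ M : ℝ, M = 3 * 375 ^ 2 := ⟨_, rfl⟩
  have hM0 : 0 < M := by rw [hM]; norm_num
  obtain ⟨c, hc⟩ : ∃ c : ℝ, c = c0 / (2 * (M + 1)) := ⟨_, rfl⟩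
  have hcp : 0 < c := by rw [hc]; positivity
  have hc1 : c * (M + 1) = c0 / 2 := by rw [hc]; field_simp
  obtain ⟨ε, hε⟩ : ∃ ε : ℝ, ε * (1125 * (9 * 375 ^ 3)) = c * c0 / 2 :=
    ⟨c * c0 / 2 / (1125 * (9 * 375 ^ 3)), by field_simp⟩
  have hεp : 0 < ε := by
    have : 0 < ε * (1125 * (9 * 375 ^ 3)) := by rw [hε]; positivity
    exact pos_of_mul_pos_left this (by norm_num)
  have hc01 : c0 ≤ 1 := by rw [hc0']; norm_num
  have hcc : c ≤ 1 / 1125 := by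
    rw [hc, hc0', hM]; norm_num
  refine ⟨ε, c * c0 / 2250, hεp, by positivity, by nlinarith, ?_⟩
  intro p r hp hp3 hr hr3
  set H : M3 := (Aw [0, 1, 2])⁻¹ with hH
  have hHn : ns H ≤ 375 := ns_h_inv
  set r1 : Fin 3 → ℝ := Hᵀ *ᵥ r with hr1
  have hAH : (Aw [0, 1, 2])ᵀ * Hᵀ = 1 := by
    rw [← Matrix.transpose_mul, hH, inv_mul_Aw, Matrix.transpose_one]
  have hlow (x : Fin 3 → ℝ) : n1 x ≤ 375 * n1 (Hᵀ *ᵥ x) := by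
    refine (n1_le_of_mul _ _ hAH x).trans ?_
    rw [ns_transpose]
    exact mul_le_mul_of_nonneg_right ns_h (n1_nonneg _)
  have hr1le : n1 r1 ≤ 1125 := by
    refine (n1_mulVec _ _).trans ?_
    rw [ns_transpose]
    calc _ ≤ (375:ℝ) * 3 := mul_le_mul hHn hr3 (n1_nonneg _) (by norm_num)
      _ = _ := by norm_num
  have hr1ge := hlow r
  have hage := hlow r1
  obtain ⟨i, j, hij⟩ := exists_connector (Hᵀ *ᵥ r1) p
  set g : List (Fin 3) := [i, j, 2] with hg
  have hgn : ns (Aw g)⁻¹ ≤ 375 := by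
    have := ns_inv_Aw_le_pow g
    norm_num [hg] at this
    exact this
  set m : Fin 3 → ℝ := H *ᵥ ((Aw g)⁻¹ *ᵥ p) with hm
  have hdot : r1 ⬝ᵥ m = (Hᵀ *ᵥ r1) ⬝ᵥ ((Aw g)⁻¹ *ᵥ p) := by
    rw [hm, Matrix.dotProduct_mulVec, Matrix.mulVec_transpose]
  have hm0 : c0 ≤ |r1 ⬝ᵥ m| := by
    rw [hdot, hc0', div_le_iff₀ (by norm_num)]
    have : 1 ≤ 375 * (375 * n1 (Hᵀ *ᵥ r1)) := by linarith
    have h2 : n1 (Hᵀ *ᵥ r1) ≤ n1 (Hᵀ *ᵥ r1) * n1 p := le_mul_of_one_le_right (n1_nonneg _) hp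
    nlinarith
  have hmle : n1 m ≤ M := by
    refine (n1_mulVec _ _).trans ?_
    have h1 := n1_mulVec (Aw g)⁻¹ p
    have h2 : n1 ((Aw g)⁻¹ *ᵥ p) ≤ 375 * 3 :=
      h1.trans (mul_le_mul hgn hp3 (n1_nonneg _) (by norm_num))
    calc _ ≤ (375:ℝ) * (375 * 3) := mul_le_mul hHn h2 (n1_nonneg _) (by norm_num)
      _ = M := by rw [hM]; norm_num
  obtain ⟨i0, hi0⟩ : ∃ i0, n1 r1 ≤ 3 * |r1 i0| := by
    by_contra hcon
    push Not at hcon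
    have h0 := hcon 0; have h1 := hcon 1; have h2 := hcon 2
    unfold n1 at h0 h1 h2
    linarith
  refine ⟨g, i0, fun q => c * n1 q ≤ |r1 ⬝ᵥ q|, rfl, ?_, ?_⟩
  · change c * n1 (basis3 i0) ≤ |r1 ⬝ᵥ basis3 i0|
    rw [Sys.n1_basis3, basis3, dotProduct_single_one]
    linarith
  intro v b hb q hq
  set E : M3 := (Aw v)⁻¹ - b • Matrix.vecMulVec p r with hE
  have hEn : ns E ≤ 9 * (ε * |b|) := by
    have h (k l : Fin 3) : |E k l| ≤ ε * |b| := by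
      simpa [hE, Matrix.vecMulVec_apply] using hb k l
    unfold ns
    calc _ ≤ ∑ _i : Fin 3, ∑ _j : Fin 3, ε * |b| :=
          Finset.sum_le_sum fun k _ => Finset.sum_le_sum fun l _ => h k l
      _ = _ := by simp; ring
  set y := (Aw (block g v))⁻¹ *ᵥ q with hy
  set e : Fin 3 → ℝ := H *ᵥ ((Aw g)⁻¹ *ᵥ (E *ᵥ (H *ᵥ q))) with he
  have hrq : r ⬝ᵥ (H *ᵥ q) = r1 ⬝ᵥ q := by
    rw [hr1, Matrix.dotProduct_mulVec, Matrix.mulVec_transpose]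
  have hye : y = (b * (r1 ⬝ᵥ q)) • m + e := by
    have hB : (Aw v)⁻¹ = b • Matrix.vecMulVec p r + E := by rw [hE]; abel
    rw [hy, block, inv_Aw_append, inv_Aw_append, inv_Aw_append, ← hH, hB]
    simp only [← Matrix.mulVec_mulVec]
    rw [Matrix.add_mulVec, Matrix.smul_mulVec, Matrix.vecMulVec_mulVec, hrq]
    simp only [Matrix.mulVec_add, Matrix.mulVec_smul, he, hm]
    congr 1
    simp [smul_smul]
  set t := |r1 ⬝ᵥ q| with ht
  set X := n1 q with hX
  have hX0 : 0 ≤ X := n1_nonneg _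
  have ht0 : 0 ≤ t := abs_nonneg _
  have hb0 : 0 ≤ |b| := abs_nonneg _
  have hen : n1 e ≤ ε * (9 * 375 ^ 3) * (|b| * X) := by
    have h1 : n1 (H *ᵥ q) ≤ 375 * X :=
      (n1_mulVec _ _).trans (mul_le_mul_of_nonneg_right hHn hX0)
    have h2 : n1 (E *ᵥ (H *ᵥ q)) ≤ 9 * (ε * |b|) * (375 * X) :=
      (n1_mulVec _ _).trans (mul_le_mul hEn h1 (n1_nonneg _) (by positivity))
    have h3 : n1 ((Aw g)⁻¹ *ᵥ (E *ᵥ (H *ᵥ q))) ≤ 375 * (9 * (ε * |b|) * (375 * X)) :=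
      (n1_mulVec _ _).trans (mul_le_mul hgn h2 (n1_nonneg _) (by positivity))
    have h4 : n1 e ≤ 375 * (375 * (9 * (ε * |b|) * (375 * X))) :=
      (n1_mulVec _ _).trans (mul_le_mul hHn h3 (n1_nonneg _) (by positivity))
    calc _ ≤ _ := h4
      _ = _ := by ring
  have hcX : c * (|b| * X) ≤ |b| * t := by nlinarith
  -- the error term is at most half of the main term
  have hen2 : 1125 * n1 e ≤ |b| * t * c0 / 2 := by
    have h1 : 1125 * n1 e ≤ (c * c0 / 2) * (|b| * X) := by
      rw [← hε]; nlinarith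
    nlinarith
  have hen0 := n1_nonneg e
  have hlow1 : |b| * t * c0 / 2 ≤ |r1 ⬝ᵥ y| := by
    have h1 : r1 ⬝ᵥ y = b * (r1 ⬝ᵥ q) * (r1 ⬝ᵥ m) + r1 ⬝ᵥ e := by
      rw [hye, dotProduct_add, dotProduct_smul, smul_eq_mul]
    have h2 : |r1 ⬝ᵥ e| ≤ 1125 * n1 e :=
      (abs_dot_le _ _).trans (mul_le_mul_of_nonneg_right hr1le hen0)
    have h3 : |b * (r1 ⬝ᵥ q) * (r1 ⬝ᵥ m)| = |b| * t * |r1 ⬝ᵥ m| := by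
      rw [abs_mul, abs_mul]
    have h4 : |b| * t * c0 ≤ |b| * t * |r1 ⬝ᵥ m| := by gcongr
    have h5 := abs_sub_abs_le_abs_add (b * (r1 ⬝ᵥ q) * (r1 ⬝ᵥ m)) (r1 ⬝ᵥ e)
    rw [h1]
    linarith
  have hup : n1 y ≤ |b| * t * (M + 1) := by
    rw [hye]
    refine (n1_add _ _).trans ?_
    rw [n1_smul, abs_mul]
    have h1 : |b| * t * n1 m ≤ |b| * t * M := by gcongr
    have h2 : n1 e ≤ |b| * t := by
      have : 0 ≤ |b| * t := by positivity
      nlinarith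
    linarith
  constructor
  · calc c * n1 y ≤ c * (|b| * t * (M + 1)) := by gcongr
      _ = |b| * t * (c * (M + 1)) := by ring
      _ = |b| * t * c0 / 2 := by rw [hc1]; ring
      _ ≤ _ := hlow1
  · have h1 : |r1 ⬝ᵥ y| ≤ 1125 * n1 y :=
      (abs_dot_le _ _).trans (mul_le_mul_of_nonneg_right hr1le (n1_nonneg _))
    have h2 : c0 * (c * (|b| * X)) ≤ c0 * (|b| * t) := by gcongr
    linarith

/-! ### Dimension bounds from classes of words -/

/-- A class of words with many more than `(P R) ^ s` elements bounds the dimension by separation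
alone. -/
lemma dimH_class_conformal {V : Finset (List (Fin 3))} (hV : V.Nonempty) {P R s : ℝ} (hs : 0 < s)
    (hP1 : 1 ≤ P) (hR1 : 1 ≤ R) (hP : ∀ v ∈ V, P ≤ ns (Aw v) ∧ ns (Aw v) ≤ 2 * P)
    (hR : ∀ v ∈ V, R ≤ ns (Aw v)⁻¹ ∧ ns (Aw v)⁻¹ ≤ 2 * R)
    (hlt : 100 * (1 / (5 ^ 12 * (2 * P) * (5 ^ 12 * (2 * R)))) ^ (-s) < V.card) :
    ENNReal.ofReal s ≤ dimH gasket := by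
  classical
  have hg : ([0, 0, 2] : List (Fin 3)).length = 3 := rfl
  obtain ⟨V', hV', hcard, hpf⟩ := exists_prefixFree hV (by linarith : 0 < P) hP hg
  have hci : (V'.image (block [0, 0, 2])).card = V'.card :=
    Finset.card_image_of_injective _ (block_inj _)
  have hcard' : (V.card : ℝ) ≤ 100 * V'.card := by exact_mod_cast hcard
  have hV0 : (0:ℝ) < V.card := by exact_mod_cast Finset.card_pos.2 hV
  have hV'ne : V'.Nonempty := by
    rw [← Finset.card_pos]
    have : (0:ℝ) < V'.card := by linarith
    exact_mod_cast this
  refine dimH_of_conformal (PP := 5 ^ 12 * (2 * P)) (RQ := 5 ^ 12 * (2 * R)) hpf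
    (hV'ne.image _) ?_ hs (by nlinarith) (by nlinarith) ?_ ?_ ?_
  · intro w hw
    obtain ⟨v, hv, rfl⟩ := Finset.mem_image.1 hw
    exact ⟨v ++ [0, 0, 2] ++ [0, 1, 2], by simp [block]⟩
  · intro w hw
    obtain ⟨v, hv, rfl⟩ := Finset.mem_image.1 hw
    exact (ns_block hg).1.trans (by have := (hP v (hV' hv)).2; gcongr)
  · intro w hw
    obtain ⟨v, hv, rfl⟩ := Finset.mem_image.1 hw
    exact (ns_block hg).2.trans (by have := (hR v (hV' hv)).2; gcongr)
  · rw [hci]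
    linarith

/-- In a class of words whose inverses are far from conformal, a positive proportion of the
inverses is close to a common rank one direction, so that blocks with a common connector preserve
and expand a cone. -/
lemma dimH_class_expanding : ∃ e1 c2 K : ℝ, 0 < e1 ∧ 0 < c2 ∧ c2 ≤ 1 ∧ 0 < K ∧
    ∀ (V : Finset (List (Fin 3))) (P R s th : ℝ), V.Nonempty → 3 / 2 < s → s < 2 → 0 ≤ th →
      th < s - 3 / 2 → 1 ≤ P → 1 ≤ R → (∀ v ∈ V, P ≤ ns (Aw v) ∧ ns (Aw v) ≤ 2 * P) →
      (∀ v ∈ V, R ≤ ns (Aw v)⁻¹ ∧ ns (Aw v)⁻¹ ≤ 2 * R) → P ≤ e1 * R ^ 2 →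
      K * (9 * P / (c2 * R ^ 2) * (1 / (5 ^ 12 * (2 * P) * (5 ^ 12 * (2 * R)))) ^ (-s)) < V.card →
      (1 / (5 ^ 12 * (2 * P) * (5 ^ 12 * (2 * R)))) ^ (1 / 2 + th) ≤ 9 * P / (c2 * R ^ 2) →
      ENNReal.ofReal s ≤ dimH gasket := by
  classical
  obtain ⟨ε, c2, hε, hc2, hc21, hcone⟩ := exists_cone
  obtain ⟨K, hK, hcell⟩ := exists_cell (ε / 2) (by positivity)
  refine ⟨min (ε / 324) (c2 / 18), c2, 100 * K, by positivity, hc2, hc21,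
    by positivity, ?_⟩
  intro V P R s th hV hs hs2 hth hth2 hP1 hR1 hP hR hPR hlt hal
  have hR2 : 0 < R ^ 2 := by positivity
  have hPR1 : P ≤ ε / 324 * R ^ 2 := hPR.trans (by gcongr; exact min_le_left _ _)
  have hPR2 : P ≤ c2 / 18 * R ^ 2 := hPR.trans (by gcongr; exact min_le_right _ _)
  choose i j hij using fun v => exists_max_entry (Aw v)⁻¹
  set b : List (Fin 3) → ℝ := fun v => (Aw v)⁻¹ (i v) (j v) with hb
  have hb9 (v) : ns (Aw v)⁻¹ ≤ 9 * |b v| := by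
    unfold ns
    calc _ ≤ ∑ _i : Fin 3, ∑ _j : Fin 3, |b v| :=
          Finset.sum_le_sum fun k _ => Finset.sum_le_sum fun l _ => hij v k l
      _ = _ := by simp; ring
  have hbpos (v) : 0 < |b v| := by linarith [hb9 v, one_le_ns_inv v]
  have hbne (v) : b v ≠ 0 := abs_pos.1 (hbpos v)
  obtain ⟨v0, hv0, V1, hV1, hcard1, hclose⟩ := hcell V hV (fun v => (b v)⁻¹ • (Aw v)⁻¹) (by
    intro v k l
    rw [Matrix.smul_apply, smul_eq_mul, abs_mul, abs_inv, inv_mul_le_one₀ (hbpos v)]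
    exact hij v k l)
  simp only [Matrix.smul_apply, smul_eq_mul] at hclose
  set p : Fin 3 → ℝ := fun k => (b v0)⁻¹ * (Aw v0)⁻¹ k (j v0) with hp
  set r : Fin 3 → ℝ := fun l => (b v0)⁻¹ * (Aw v0)⁻¹ (i v0) l with hr
  have hF (k l) : |(b v0)⁻¹ * (Aw v0)⁻¹ k l| ≤ 1 := by
    rw [abs_mul, abs_inv, inv_mul_le_one₀ (hbpos v0)]
    exact hij v0 k l
  have hn1 (x : Fin 3 → ℝ) (m : Fin 3) (hm : x m = 1) (hx : ∀ k, |x k| ≤ 1) :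
      1 ≤ n1 x ∧ n1 x ≤ 3 := by
    have h0 := hx 0; have h1 := hx 1; have h2 := hx 2
    have a0 := abs_nonneg (x 0); have a1 := abs_nonneg (x 1); have a2 := abs_nonneg (x 2)
    have hm' : |x m| = 1 := by rw [hm, abs_one]
    unfold n1
    refine ⟨?_, by linarith⟩
    fin_cases m <;> simp at hm' <;> linarith
  obtain ⟨hp1, hp3⟩ := hn1 p (i v0) (inv_mul_cancel₀ (hbne v0)) (fun k => hF _ _)
  obtain ⟨hr1, hr3⟩ := hn1 r (j v0) (inv_mul_cancel₀ (hbne v0)) (fun k => hF _ _)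
  obtain ⟨g, i0, cone, hg, hcone0, hcone1⟩ := hcone p r hp1 hp3 hr1 hr3
  -- the representative is close to rank one because its two by two minors are small
  have hminor (k l) : |(b v0)⁻¹ * (Aw v0)⁻¹ k l - p k * r l| ≤ ε / 2 := by
    have h1 := minor_le_adjugate (Aw v0)⁻¹ (i v0) (j v0) k l
    rw [adjugate_inv_Aw] at h1
    have h2 : (b v0)⁻¹ * (Aw v0)⁻¹ k l - p k * r l =
        ((Aw v0)⁻¹ k l * (Aw v0)⁻¹ (i v0) (j v0) - (Aw v0)⁻¹ k (j v0) * (Aw v0)⁻¹ (i v0) l)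
          / (b v0) ^ 2 := by
      have := hbne v0
      rw [hp, hr]
      field_simp
      rw [mul_comm (b v0)]
    rw [h2, abs_div, abs_of_nonneg (sq_nonneg (b v0)), div_le_iff₀ (by have := hbne v0; positivity)]
    have h3 : R ≤ 9 * |b v0| := (hR v0 hv0).1.trans (hb9 v0)
    have h4 : R ^ 2 ≤ 81 * (b v0) ^ 2 := by
      rw [← sq_abs (b v0)]; nlinarith
    have h5 := (hP v0 hv0).2
    have h6 : ε / 324 * R ^ 2 ≤ ε / 324 * (81 * (b v0) ^ 2) := by gcongr
    linarith
  have hnear : ∀ v ∈ V1, ∀ k l, |(Aw v)⁻¹ k l - b v * (p k * r l)| ≤ ε * |b v| := by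
    intro v hv k l
    have h1 := hclose v hv k l
    have h2 := hminor k l
    have h3 : (Aw v)⁻¹ k l - b v * (p k * r l) =
        b v * (((b v)⁻¹ * (Aw v)⁻¹ k l - (b v0)⁻¹ * (Aw v0)⁻¹ k l) +
          ((b v0)⁻¹ * (Aw v0)⁻¹ k l - p k * r l)) := by
      rw [sub_add_sub_cancel, mul_sub, mul_inv_cancel_left₀ (hbne v)]
    rw [h3, abs_mul, mul_comm]
    refine mul_le_mul_of_nonneg_right ((abs_add_le _ _).trans ?_) (abs_nonneg _)
    linarith
  have hVc : (0:ℝ) < V.card := by exact_mod_cast Finset.card_pos.2 hV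
  have hcard1' : (V.card : ℝ) ≤ K * V1.card := by exact_mod_cast hcard1
  have hV1ne : V1.Nonempty := by
    rw [← Finset.card_pos]
    by_contra hcon
    have : V1.card = 0 := by omega
    rw [this, Nat.cast_zero, mul_zero] at hcard1'
    linarith
  obtain ⟨V', hV', hcard, hpf⟩ := exists_prefixFree hV1ne (by linarith : 0 < P)
    (fun v hv => hP v (hV1 hv)) hg
  have hci : (V'.image (block g)).card = V'.card := Finset.card_image_of_injective _ (block_inj _)
  have hcard' : (V1.card : ℝ) ≤ 100 * V'.card := by exact_mod_cast hcard
  have hV'ne : V'.Nonempty := by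
    rw [← Finset.card_pos]
    have h1 : (0:ℝ) < V1.card := by exact_mod_cast Finset.card_pos.2 hV1ne
    have : (0:ℝ) < V'.card := by linarith
    exact_mod_cast this
  have hrho : 5 ^ 12 * (2 * P) / (c2 * R / 9 * (5 ^ 12 * (2 * R))) = 9 * P / (c2 * R ^ 2) := by
    have : R ≠ 0 := by positivity
    field_simp
  have hsmall : 9 * P < c2 * R ^ 2 := by
    have : 0 < c2 * R ^ 2 := by positivity
    linarith
  have hK' : (0:ℝ) < K := by exact_mod_cast hK
  refine dimH_of_expanding (PP := 5 ^ 12 * (2 * P)) (RQ := 5 ^ 12 * (2 * R)) (RR := c2 * R / 9)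
    (th := th) (cone := cone) (i0 := i0) hpf
    (hV'ne.image _) ?_ hs hs2 hth hth2 (by nlinarith) (by nlinarith) ?_ ?_ hcone0 ?_
    (by positivity) (by nlinarith) ?_ ?_ (by rw [hrho]; exact hal)
  · intro w hw
    obtain ⟨v, hv, rfl⟩ := Finset.mem_image.1 hw
    exact ⟨v ++ g ++ [0, 1, 2], by simp [block]⟩
  · intro w hw
    obtain ⟨v, hv, rfl⟩ := Finset.mem_image.1 hw
    exact (ns_block hg).1.trans (by have := (hP v (hV1 (hV' hv))).2; gcongr)
  · intro w hw
    obtain ⟨v, hv, rfl⟩ := Finset.mem_image.1 hw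
    exact (ns_block hg).2.trans (by have := (hR v (hV1 (hV' hv))).2; gcongr)
  · intro w hw q hq
    obtain ⟨v, hv, rfl⟩ := Finset.mem_image.1 hw
    obtain ⟨h1, h2⟩ := hcone1 v (b v) (hnear v (hV' hv)) q hq
    refine ⟨h1, le_trans ?_ h2⟩
    refine mul_le_mul_of_nonneg_right ?_ (n1_nonneg q)
    have := (hR v (hV1 (hV' hv))).1.trans (hb9 v)
    rw [mul_div_assoc]
    gcongr
    linarith
  · nlinarith
  · rw [hci, hrho]
    set X := 9 * P / (c2 * R ^ 2) * (1 / (5 ^ 12 * (2 * P) * (5 ^ 12 * (2 * R)))) ^ (-s) with hX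
    have h1 : 100 * K * X < K * (100 * V'.card) :=
      hlt.trans_le (hcard1'.trans (by gcongr))
    have h2 : 100 * K * X = K * (100 * X) := by ring
    rw [h2] at h1
    have := lt_of_mul_lt_mul_left h1 hK'.le
    linarith

/-- A class of words of comparable norms whose cardinality exceeds the affinity count with exponent
`s` by a power of the norm forces dimension at least `s`. -/
lemma dimH_class {s η : ℝ} (hs : 3 / 2 < s) (hs2 : s < 2) (hη : 0 < η) : ∃ P0 : ℝ,
    ∀ (P R : ℝ) (V : Finset (List (Fin 3))), P0 ≤ P → 1 ≤ P → 1 ≤ R → V.Nonempty →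
      (∀ v ∈ V, P ≤ ns (Aw v) ∧ ns (Aw v) ≤ 2 * P) →
      (∀ v ∈ V, R ≤ ns (Aw v)⁻¹ ∧ ns (Aw v)⁻¹ ≤ 2 * R) →
      P ^ (1 + s + η) * R ^ (s - 2) ≤ V.card → ENNReal.ofReal s ≤ dimH gasket := by
  obtain ⟨e1, c2, K, he1, hc2, hc21, hK, hexp⟩ := dimH_class_expanding
  obtain ⟨D, hD⟩ : ∃ D : ℝ, D = (5 ^ 12 * 2 * (5 ^ 12 * 2)) ^ s := ⟨_, rfl⟩
  have hD0 : 0 < D := by rw [hD]; positivity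
  have hlim := (tendsto_rpow_atTop hη).eventually
    (Filter.eventually_gt_atTop (max (100 * D / e1) (K * 9 * D / c2)))
  obtain ⟨P0, hP0⟩ := Filter.eventually_atTop.1 hlim
  refine ⟨P0, fun P R V hPP0 hP1 hR1 hV hP hR hcard => ?_⟩
  have hbig := hP0 P hPP0
  have hP' : 0 < P := by linarith
  have hR' : 0 < R := by linarith
  have hal : (1 / (5 ^ 12 * (2 * P) * (5 ^ 12 * (2 * R)))) ^ (-s) = D * (P ^ s * R ^ s) := by
    have h : (5:ℝ) ^ 12 * (2 * P) * (5 ^ 12 * (2 * R)) = (5 ^ 12 * 2 * (5 ^ 12 * 2)) * (P * R) := by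
      ring
    rw [one_div, Real.inv_rpow (by positivity), Real.rpow_neg (by positivity), inv_inv, h,
      Real.mul_rpow (by positivity) (by positivity), Real.mul_rpow hP'.le hR'.le, hD]
  obtain ⟨Y, hY⟩ : ∃ Y : ℝ, Y = P ^ (1 + s) * R ^ (s - 2) := ⟨_, rfl⟩
  have hY0 : 0 < Y := by rw [hY]; positivity
  have hYR : P * (P ^ s * R ^ s) = Y * R ^ 2 := by
    have h1 : P ^ (1 + s) = P * P ^ s := by rw [Real.rpow_add hP', Real.rpow_one]
    have h2 : R ^ s = R ^ (s - 2) * R ^ 2 := by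
      rw [← Real.rpow_natCast R 2, ← Real.rpow_add hR']; norm_num
    rw [hY, h1, h2]; ring
  have hcard' : P ^ η * Y ≤ V.card := by
    refine le_trans (le_of_eq ?_) hcard
    rw [hY, Real.rpow_add hP' (1 + s) η]; ring
  rcases le_or_gt P (e1 * R ^ 2) with hc | hc
  · refine hexp V P R s 0 hV hs hs2 le_rfl (by linarith) hP1 hR1 hP hR hc ?_ ?_
    · refine lt_of_lt_of_le ?_ hcard'
      rw [hal]
      have h1 : K * (9 * P / (c2 * R ^ 2) * (D * (P ^ s * R ^ s))) = K * 9 * D / c2 * Y := by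
        have : 9 * P / (c2 * R ^ 2) * (D * (P ^ s * R ^ s)) =
          9 * D / (c2 * R ^ 2) * (P * (P ^ s * R ^ s)) := by ring
        rw [this, hYR]
        field_simp
      rw [h1]
      have := (le_max_right _ _).trans_lt hbig
      gcongr
    · rw [add_zero, ← Real.sqrt_eq_rpow, Real.sqrt_le_iff]
      refine ⟨by positivity, ?_⟩
      obtain ⟨v, hv⟩ := hV
      have hRP : R ≤ 12 * P := by
        linarith [(hR v hv).1, (hP v hv).2, ns_inv_le v]
      rw [div_pow, div_le_div_iff₀ (by positivity) (by positivity), one_mul]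
      have h3 : R ^ 3 ≤ (12 * P) ^ 3 := by gcongr
      have hc4 : c2 ^ 2 ≤ 1 := by nlinarith
      calc (c2 * R ^ 2) ^ 2 = c2 ^ 2 * (R * R ^ 3) := by ring
        _ ≤ 1 * (R * (12 * P) ^ 3) := by gcongr
        _ = 1728 * (P ^ 3 * R) := by ring
        _ ≤ (81 * (5 ^ 12 * 2 * (5 ^ 12 * 2))) * (P ^ 3 * R) := by gcongr; norm_num
        _ = _ := by ring
  · refine dimH_class_conformal hV (by linarith) hP1 hR1 hP hR ?_
    refine lt_of_lt_of_le ?_ hcard'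
    rw [hal]
    have h1 : P ^ s * R ^ s * e1 ≤ Y := by
      have : P * (P ^ s * R ^ s * e1) ≤ P * Y := by
        calc _ = Y * (e1 * R ^ 2) := by rw [← mul_assoc, hYR]; ring
          _ ≤ Y * P := by gcongr
          _ = _ := by ring
      exact le_of_mul_le_mul_left this hP'
    calc 100 * (D * (P ^ s * R ^ s)) = 100 * D / e1 * (P ^ s * R ^ s * e1) := by field_simp
      _ ≤ 100 * D / e1 * Y := by gcongr
      _ < _ := by
        have := (le_max_left _ _).trans_lt hbig
        gcongr

/-! ### Extraction of a large class -/

/-- If the affinity series diverges at `s'`, then for `s < s'` some dyadic class of words of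
arbitrarily large norm has cardinality exceeding the affinity count with exponent `s`. -/
lemma exists_class {s s' η : ℝ} (hη : 0 < η) (hη' : s' - s = 2 * η) (hs1 : 1 ≤ s') (hs2 : s' ≤ 2)
    (hns : ¬ Summable (Phi s')) (P0 : ℝ) :
    ∃ (P R : ℝ) (V : Finset (List (Fin 3))), P0 ≤ P ∧ 1 ≤ P ∧ 1 ≤ R ∧ V.Nonempty ∧
      (∀ v ∈ V, P ≤ ns (Aw v) ∧ ns (Aw v) ≤ 2 * P) ∧
      (∀ v ∈ V, R ≤ ns (Aw v)⁻¹ ∧ ns (Aw v)⁻¹ ≤ 2 * R) ∧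
      P ^ (1 + s + η) * R ^ (s - 2) ≤ V.card := by
  classical
  by_contra hcon
  push Not at hcon
  apply hns
  choose k hk using fun w : List (Fin 3) => exists_nat_pow_near
    (by linarith [three_le_ns_Aw w] : 1 ≤ ns (Aw w)) (by norm_num : (1:ℝ) < 2)
  choose l hl using fun w : List (Fin 3) => exists_nat_pow_near
    (one_le_ns_inv w) (by norm_num : (1:ℝ) < 2)
  -- Words of norm below `2 * P0` are finite in number and do not affect summability.
  have hT : {w : List (Fin 3) | ns (Aw w) < 2 * P0}.Finite := by
    obtain ⟨m, hm⟩ := exists_nat_gt (2 * P0)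
    refine (List.finite_length_le (Fin 3) m).subset fun w hw => ?_
    have h1 : (w.length : ℝ) < m := (length_le_ns w).trans_lt (lt_trans hw hm)
    have h2 : w.length < m := by exact_mod_cast h1
    exact h2.le
  rw [← hT.summable_compl_iff]
  set T := {w : List (Fin 3) | ns (Aw w) < 2 * P0} with hTdef
  set a : ℝ := 2 ^ (-η) with ha
  have ha0 : 0 < a := by positivity
  have ha1 : a < 1 := Real.rpow_lt_one_of_one_lt_of_neg (by norm_num) (by linarith)
  have hpw (n : ℕ) (t : ℝ) : ((2:ℝ) ^ n) ^ t = (2 ^ t) ^ n := by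
    rw [← Real.rpow_natCast, ← Real.rpow_mul (by norm_num), mul_comm,
      Real.rpow_mul (by norm_num), Real.rpow_natCast]
  -- The dyadic class `(2 ^ j.1, 2 ^ j.2)` contributes a geometrically small amount.
  have key : ∀ (j : ℕ × ℕ) (u : Finset {x : ↥Tᶜ | (k x.1, l x.1) = j}),
      ∑ x ∈ u, Phi s' x.1.1 ≤ 2 * (a ^ j.1 * a ^ j.2) := by
    rintro ⟨m, n⟩ u
    rcases u.eq_empty_or_nonempty with rfl | hu
    · simp; positivity
    set V : Finset (List (Fin 3)) := u.image fun x => x.1.1 with hV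
    have hVu : V.card = u.card := Finset.card_image_of_injective _
      (Subtype.val_injective.comp Subtype.val_injective)
    have hmem : ∀ v ∈ V, v ∉ T ∧ k v = m ∧ l v = n := by
      intro v hv
      obtain ⟨x, hx, rfl⟩ := Finset.mem_image.1 hv
      have h := x.2
      simp only [Set.mem_ofPred_eq, Prod.mk.injEq] at h
      exact ⟨x.1.2, h⟩
    obtain ⟨v1, hv1⟩ : V.Nonempty := hu.image _
    have hP : ∀ v ∈ V, (2:ℝ) ^ m ≤ ns (Aw v) ∧ ns (Aw v) ≤ 2 * 2 ^ m := by
      intro v hv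
      have h := hk v
      rw [(hmem v hv).2.1, pow_succ'] at h
      exact ⟨h.1, h.2.le⟩
    have hR : ∀ v ∈ V, (2:ℝ) ^ n ≤ ns (Aw v)⁻¹ ∧ ns (Aw v)⁻¹ ≤ 2 * 2 ^ n := by
      intro v hv
      have h := hl v
      rw [(hmem v hv).2.2, pow_succ'] at h
      exact ⟨h.1, h.2.le⟩
    have hP0 : P0 ≤ 2 ^ m := by
      have h1 : ¬ ns (Aw v1) < 2 * P0 := (hmem v1 hv1).1
      have h2 := (hP v1 hv1).2
      linarith
    have hcard := hcon (2 ^ m) (2 ^ n) V hP0 (one_le_pow₀ (by norm_num)) (one_le_pow₀ (by norm_num))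
      ⟨v1, hv1⟩ hP hR
    set p : ℝ := 2 ^ m with hp
    set r : ℝ := 2 ^ n with hr
    have hp0 : 0 < p := by positivity
    have hr0 : 0 < r := by positivity
    have hr1 : 1 ≤ r := one_le_pow₀ (by norm_num)
    have hterm : ∀ x ∈ u, Phi s' x.1.1 ≤ 2 * (r ^ (2 - s') * p ^ (-1 - s')) := by
      intro x hx
      have hv : x.1.1 ∈ V := Finset.mem_image_of_mem _ hx
      obtain ⟨h1, -⟩ := hP _ hv
      obtain ⟨-, h2⟩ := hR _ hv
      unfold Phi
      have h3 : ns (Aw x.1.1)⁻¹ ^ (2 - s') ≤ (2 * r) ^ (2 - s') :=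
        Real.rpow_le_rpow (ns_nonneg _) h2 (by linarith)
      have h4 : (2 * r) ^ (2 - s') ≤ 2 * r ^ (2 - s') := by
        rw [Real.mul_rpow (by norm_num) hr0.le]
        gcongr
        calc (2:ℝ) ^ (2 - s') ≤ 2 ^ (1:ℝ) :=
              Real.rpow_le_rpow_of_exponent_le (by norm_num) (by linarith)
          _ = 2 := Real.rpow_one 2
      have h5 : ns (Aw x.1.1) ^ (-1 - s') ≤ p ^ (-1 - s') :=
        Real.rpow_le_rpow_of_nonpos hp0 h1 (by linarith)
      calc _ ≤ 2 * r ^ (2 - s') * p ^ (-1 - s') :=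
            mul_le_mul (h3.trans h4) h5 (Real.rpow_nonneg (ns_nonneg _) _) (by positivity)
        _ = _ := by ring
    have hbig : (u.card : ℝ) ≤ p ^ (1 + s + η) * r ^ (s - 2) := by rw [← hVu]; exact hcard.le
    calc ∑ x ∈ u, Phi s' x.1.1 ≤ ∑ _x ∈ u, 2 * (r ^ (2 - s') * p ^ (-1 - s')) :=
          Finset.sum_le_sum hterm
      _ = u.card * (2 * (r ^ (2 - s') * p ^ (-1 - s'))) := by rw [Finset.sum_const, nsmul_eq_mul]
      _ ≤ p ^ (1 + s + η) * r ^ (s - 2) * (2 * (r ^ (2 - s') * p ^ (-1 - s'))) := by gcongr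
      _ = 2 * ((p ^ (1 + s + η) * p ^ (-1 - s')) * (r ^ (s - 2) * r ^ (2 - s'))) := by ring
      _ = 2 * (p ^ (-η) * r ^ (-2 * η)) := by
        rw [← Real.rpow_add hp0, ← Real.rpow_add hr0]
        congr 3 <;> linarith
      _ ≤ 2 * (p ^ (-η) * r ^ (-η)) := by
        have : r ^ (-2 * η) ≤ r ^ (-η) :=
          Real.rpow_le_rpow_of_exponent_le hr1 (by linarith)
        gcongr
      _ = _ := by rw [hp, hr, hpw, hpw]
  have hpart : ∀ x : ↥Tᶜ, ∃! j : ℕ × ℕ, x ∈ {x : ↥Tᶜ | (k x.1, l x.1) = j} := fun x =>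
    ⟨(k x.1, l x.1), rfl, fun j hj => hj.symm⟩
  have hnn : (0 : ↥Tᶜ → ℝ) ≤ Phi s' ∘ Subtype.val := fun x => (Phi_pos _ _).le
  rw [summable_partition hnn hpart]
  refine ⟨fun j => summable_of_sum_le (fun x => hnn x.1) (key j), ?_⟩
  have hgeo := summable_geometric_of_lt_one ha0.le ha1
  refine Summable.of_nonneg_of_le (fun j => tsum_nonneg fun x => hnn x.1)
    (fun j => Real.tsum_le_of_sum_le (fun x => hnn x.1) (key j)) (Summable.mul_left 2 ?_)
  exact hgeo.mul_of_nonneg hgeo (fun _ => by positivity) (fun _ => by positivity)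

/-- Divergence of the affinity series at `s'` bounds the dimension from below by every
smaller exponent. -/
lemma le_dimH_of_not_summable {s s' : ℝ} (hs : 3 / 2 < s) (hss : s < s') (hs2 : s' ≤ 2)
    (hns : ¬ Summable (Phi s')) : ENNReal.ofReal s ≤ dimH gasket := by
  obtain ⟨P0, h⟩ := dimH_class hs (by linarith) (by linarith : 0 < (s' - s) / 2)
  obtain ⟨P, R, V, h0, h1, h2, h3, h4, h5, h6⟩ := exists_class (s := s)
    (by linarith : 0 < (s' - s) / 2) (by ring) (by linarith) hs2 hns P0
  exact h P R V h0 h1 h2 h3 h4 h5 h6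

/-! ### The dimension formula -/

/-- The gasket lies in an affine plane. -/
lemma dimH_gasket_le_two : dimH gasket ≤ ENNReal.ofReal 2 := by
  set f : (Fin 2 → ℝ) → E3 := fun y => toE ![y 0, y 1, 1 - y 0 - y 1] with hf
  have hfd : ContDiff ℝ 1 f := by
    have h1 : ContDiff ℝ 1 fun y : Fin 2 → ℝ => (![y 0, y 1, 1 - y 0 - y 1] : Fin 3 → ℝ) := by
      rw [contDiff_pi]
      intro i
      fin_cases i <;> simp <;> fun_prop
    exact (PiLp.contDiff_toLp (p := 2)).comp h1
  have hsub : gasket ⊆ Set.range f := by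
    intro x hx
    have h := Set.mem_iInter.1 hx 0
    simp only [Set.mem_iUnion] at h
    obtain ⟨w, _, y, hy, rfl⟩ := h
    have hw := (cv_mem ((mem_simplex y).1 hy) w).2
    refine ⟨![cv w (ofE y) 0, cv w (ofE y) 1], ?_⟩
    rw [hf, fmap_eq]
    dsimp only
    congr 1
    unfold omega3 at hw
    funext i
    fin_cases i <;> simp
    linarith
  refine (dimH_mono hsub).trans (hfd.dimH_range_le.trans ?_)
  simp

/-- The Hausdorff dimension of the Rauzy gasket equals its affinity exponent. -/
theorem rauzy_dimH_eq_affinity_exponent : dimH gasket = ENNReal.ofReal sA := by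
  set S : Set ℝ := {s : ℝ | s ∈ Set.Ioc (0:ℝ) 2 ∧
    ¬ Summable fun w : {w : List (Fin 3) // w ≠ []} => phi s (Aw w.1)} with hS
  have hsA : sA = sSup S := rfl
  have hbdd : BddAbove S := ⟨2, fun s hs => hs.1.2⟩
  obtain ⟨s0, h0, h02, hns⟩ := exists_not_summable
  have hs0 : s0 ∈ S := by
    refine ⟨⟨by linarith, by linarith⟩, ?_⟩
    rwa [summable_phi_iff s0 (by linarith) h02.le]
  have hlow : 3 / 2 < sA := h0.trans_le (hsA ▸ le_csSup hbdd hs0)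
  have hup : sA ≤ 2 := hsA ▸ csSup_le ⟨s0, hs0⟩ fun s hs => hs.1.2
  apply le_antisymm
  · rcases hup.eq_or_lt with h2 | h2
    · rw [h2]; exact dimH_gasket_le_two
    refine le_of_forall_gt_imp_ge_of_dense fun c hc => ?_
    rcases eq_or_ne c ⊤ with rfl | hc'
    · exact le_top
    lift c to NNReal using hc'
    rw [← ENNReal.ofReal_coe_nnreal] at hc ⊢
    have hc1 : sA < c := ENNReal.ofReal_lt_ofReal_iff'.1 hc |>.1
    obtain ⟨s, hs1, hs2⟩ := exists_between (lt_min hc1 h2)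
    have hsc : s < c := hs2.trans_le (min_le_left _ _)
    have hs22 : s < 2 := hs2.trans_le (min_le_right _ _)
    have hsS : s ∉ S := fun h => absurd (hsA ▸ le_csSup hbdd h) (not_le.2 hs1)
    have hsum : Summable (Phi s) := by
      rw [← summable_phi_iff s (by linarith) hs22.le]
      by_contra hcon
      exact hsS ⟨⟨by linarith, hs22.le⟩, hcon⟩
    exact (dimH_gasket_le s (by linarith) hsum).trans (ENNReal.ofReal_le_ofReal hsc.le)
  · refine le_of_forall_lt fun c hc => ?_
    have hc' : c ≠ ⊤ := (hc.trans_le le_top).ne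
    lift c to NNReal using hc'
    rw [← ENNReal.ofReal_coe_nnreal, ENNReal.ofReal_lt_ofReal_iff (by linarith)] at hc
    obtain ⟨s, hs1, hs2⟩ := exists_between (max_lt hc hlow)
    have hcs : (c:ℝ) < s := (le_max_left _ _).trans_lt hs1
    have hs3 : 3 / 2 < s := (le_max_right _ _).trans_lt hs1
    obtain ⟨s', hs', hss'⟩ := exists_lt_of_lt_csSup ⟨s0, hs0⟩ (hsA ▸ hs2)
    have hns' : ¬ Summable (Phi s') := by
      rw [← summable_phi_iff s' (by linarith) hs'.1.2]
      exact hs'.2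
    refine lt_of_lt_of_le ?_ (le_dimH_of_not_summable hs3 hss' hs'.1.2 hns')
    rw [← ENNReal.ofReal_coe_nnreal, ENNReal.ofReal_lt_ofReal_iff (by linarith)]
    exact hcs
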